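/- arXiv:2303.03567 — 2 statements merged into one kernel-verified Lean document; each statement's English description precedes it below -/
import Mathlib

section
/- Given d ≥ 2, for all sufficiently small ρ ∈ (0,1) there exist constants 0 < a_ρ < b_ρ < 1 and ε_ρ > 0, depending only on d and ρ, with the following property: for every Borel set E ⊆ [0,1]^d whose s-dimensional Hausdorff measure H^s(E) is positive for some s > d − ε_ρ, the distance set Δ(E) contains the union of the intervals ℓ(Q)·[a_ρ, b_ρ] = [a_ρ ℓ(Q), b_ρ ℓ(Q)] over all dyadic cubes Q ∈ D_ρ(E;s). -/
open MeasureTheory Set Metric Filter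
open scoped ENNReal NNReal Topology

noncomputable section

abbrev Euc (d : ℕ) : Type := EuclideanSpace ℝ (Fin d)

/-- The closed unit cube `[0,1]^d`. -/
def unitCube (d : ℕ) : Set (Euc d) := {x | ∀ i, x i ∈ Icc (0:ℝ) 1}

/-- The distance set `Δ(E,F) = {|x-y| : x ∈ E, y ∈ F}`. -/
def distSet {d : ℕ} (E F : Set (Euc d)) : Set ℝ :=
  {t | ∃ x ∈ E, ∃ y ∈ F, dist x y = t}

/-- `Q` is a dyadic cube of side length `l`, i.e. `Q = 2^{-k}(m + [0,1]^d)`. -/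
def IsDyadicCube {d : ℕ} (Q : Set (Euc d)) (l : ℝ) : Prop :=
  ∃ (k : ℤ) (m : Fin d → ℤ), l = (2:ℝ) ^ (-k) ∧
    Q = {x | ∀ i, (m i : ℝ) * (2:ℝ) ^ (-k) ≤ x i ∧ x i ≤ ((m i : ℝ) + 1) * (2:ℝ) ^ (-k)}

/-- The `s`-dimensional dyadic Hausdorff content: the infimum of `∑ ℓ(Q_i)^s` over
countable covers of `E` by dyadic cubes. -/
def dyadicContent {d : ℕ} (s : ℝ) (E : Set (Euc d)) : ℝ≥0∞ :=
  ⨅ (Q : ℕ → Set (Euc d)) (l : ℕ → ℝ) (_ : ∀ i, IsDyadicCube (Q i) (l i))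
    (_ : E ⊆ ⋃ i, Q i), ∑' i, ENNReal.ofReal (l i ^ s)

/-!
Rescale `Q` to the unit cube, where `E ∩ Q` becomes a set `A` of dyadic content close to `1`.
Dyadic contents are continuous along increasing unions, so `A` contains a compact `K` near which
`A` still has large content, and a maximal flow on the dyadic tree puts on points of `A` near `K`
masses of total almost `1` such that a dyadic cell of side `2⁻ᵏ` has mass at most `(λ / 2ᵈ)ᵏ`,
where `λ > 1` is close to `1`. Let `Fₖ` be the density of these masses averaged at scale `2⁻ᵏ`.

For `t ∈ [1/4, 1/2]` the form `⟨H, F⟩ₜ = ∫ H(x) F(x + v) dx dv`, with `v` running through a cap of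
the sphere of radius `t`, smooths: by Cauchy–Schwarz its dependence on translations of `F` is
controlled by the law of a difference of two points of the cap, and since circle arcs are strictly
concave this law has a density that varies little when one of the two points is translated.
As `Fₖ` is an average of translates of `Fₖ₊₁`, the forms `⟨Fₖ, Fₖ⟩ₜ` change by a geometrically
decaying amount from one scale to the next. At a coarse scale `Fₖ` is nearly `1` on the cube and
the form is bounded below, so it is positive at all finer scales. Hence there are points of `A`
near `K` at distance arbitrarily close to `t`, and by compactness of `K` two points at distance `t`.
-/

/-! ### Net contents -/

section NetContent

variable {V I : Type*}

/-- Total weight of a family `C` of cells, a cell being a pair `(k, i)` of a level and an index,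
and its weight depending only on the level. -/
def netCost (weight : ℕ → ℝ≥0∞) (C : Set (ℕ × I)) : ℝ≥0∞ :=
  ∑' p : ℕ × I, C.indicator (fun p => weight p.1) p

/-- The cells in `C` cover `A`; here `cell k x` is the index of the level-`k` cell containing
`x`. -/
def CellCovers (cell : ℕ → V → I) (C : Set (ℕ × I)) (A : Set V) : Prop :=
  ∀ x ∈ A, ∃ k, (k, cell k x) ∈ C

/-- The content built from the cells of a net, the analogue of `dyadicContent` for an abstract
sequence of partitions. -/
def netContent (cell : ℕ → V → I) (weight : ℕ → ℝ≥0∞) (A : Set V) : ℝ≥0∞ :=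
  ⨅ (C : Set (ℕ × I)) (_ : CellCovers cell C A), netCost weight C

/-- The cells of `C` that meet a cell of `C` of a coarser level. -/
def dominatedCells (cell : ℕ → V → I) (C : Set (ℕ × I)) : Set (ℕ × I) :=
  {p | p ∈ C ∧ ∃ l < p.1, ∃ x, cell p.1 x = p.2 ∧ (l, cell l x) ∈ C}

/-- The cells of `C` that are not contained in a coarser cell of `C`. -/
def maximalCells (cell : ℕ → V → I) (C : Set (ℕ × I)) : Set (ℕ × I) :=
  C \ dominatedCells cell C

/-- Each partition of the sequence refines the previous ones. -/
def IsRefining (cell : ℕ → V → I) : Prop :=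
  ∀ ⦃k l x y⦄, k ≤ l → cell l x = cell l y → cell k x = cell k y

variable {cell : ℕ → V → I} {weight : ℕ → ℝ≥0∞} {A B : Set V} {C D : Set (ℕ × I)}

theorem IsRefining.comp {W : Type*} (hcell : IsRefining cell) (f : W → V) :
    IsRefining fun k x => cell k (f x) :=
  fun _ _ _ _ hkl h => hcell hkl h

theorem netCost_mono (h : C ⊆ D) : netCost weight C ≤ netCost weight D :=
  ENNReal.tsum_le_tsum fun p => indicator_le_indicator_of_subset h (fun _ => zero_le) p

theorem netContent_le_netCost (h : CellCovers cell C A) :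
    netContent cell weight A ≤ netCost weight C :=
  iInf₂_le C h

theorem CellCovers.mono (hC : CellCovers cell C A) (hCD : C ⊆ D) (hBA : B ⊆ A) :
    CellCovers cell D B :=
  fun x hx => (hC x (hBA hx)).imp fun _ hk => hCD hk

theorem netContent_mono (h : A ⊆ B) : netContent cell weight A ≤ netContent cell weight B :=
  le_iInf₂ fun _ hC => netContent_le_netCost (hC.mono Subset.rfl h)

theorem netContent_empty : netContent cell weight (∅ : Set V) = 0 := by
  have h : netContent cell weight (∅ : Set V) ≤ netCost weight (∅ : Set (ℕ × I)) :=
    netContent_le_netCost fun x hx => absurd hx (notMem_empty x)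
  simpa [netCost] using h

theorem exists_cellCovers_netCost_lt {ε : ℝ≥0∞} (hA : netContent cell weight A ≠ ⊤)
    (hε : ε ≠ 0) :
    ∃ C, CellCovers cell C A ∧ netCost weight C < netContent cell weight A + ε := by
  simpa only [netContent, iInf_lt_iff, exists_prop] using ENNReal.lt_add_right hA hε

theorem CellCovers.maximalCells (hcell : IsRefining cell) (hC : CellCovers cell C A) :
    CellCovers cell (maximalCells cell C) A := by
  classical
  intro x hx
  refine ⟨Nat.find (hC x hx), Nat.find_spec (hC x hx), ?_⟩
  rintro ⟨-, l, hl, y, hy, hly⟩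
  rw [hcell hl.le hy] at hly
  exact Nat.find_min (hC x hx) hl hly

theorem CellCovers.inter_union_dominatedCells (hC : CellCovers cell C A)
    (hD : CellCovers cell D A) :
    CellCovers cell (C ∩ D ∪ dominatedCells cell (C ∪ D)) A := by
  intro x hx
  obtain ⟨k, hk⟩ := hC x hx
  obtain ⟨l, hl⟩ := hD x hx
  rcases lt_trichotomy k l with hkl | rfl | hlk
  · exact ⟨l, Or.inr ⟨Or.inr hl, k, hkl, x, rfl, Or.inl hk⟩⟩
  · exact ⟨k, Or.inl ⟨hk, hl⟩⟩
  · exact ⟨k, Or.inr ⟨Or.inl hk, l, hlk, x, rfl, Or.inr hl⟩⟩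

theorem netCost_maximalCells_add_le (C D : Set (ℕ × I)) :
    netCost weight (maximalCells cell (C ∪ D)) +
        netCost weight (C ∩ D ∪ dominatedCells cell (C ∪ D)) ≤
      netCost weight C + netCost weight D := by
  classical
  unfold netCost
  rw [← ENNReal.tsum_add, ← ENNReal.tsum_add]
  refine ENNReal.tsum_le_tsum fun p => ?_
  have hdom : p ∈ dominatedCells cell (C ∪ D) → p ∈ C ∪ D := And.left
  simp only [indicator_apply, maximalCells, Set.mem_sdiff, mem_union, mem_inter_iff] at hdom ⊢
  by_cases hC : p ∈ C <;> by_cases hD : p ∈ D <;>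
    by_cases hdom' : p ∈ dominatedCells cell (C ∪ D) <;> simp_all

theorem maximalCells_union_subset (C D : Set (ℕ × I)) :
    maximalCells cell (C ∪ D) ⊆ maximalCells cell (maximalCells cell C ∪ D) := by
  rintro p ⟨hp, hmax⟩
  refine ⟨hp.imp_left fun hpC => ⟨hpC, ?_⟩, ?_⟩
  · rintro ⟨-, l, hl, x, hx, hlx⟩
    exact hmax ⟨hp, l, hl, x, hx, Or.inl hlx⟩
  · rintro ⟨-, l, hl, x, hx, hlx⟩
    exact hmax ⟨hp, l, hl, x, hx, hlx.imp_left And.left⟩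

/- Strong subadditivity: a cell common to both covers, or dominated in their union, is paid for
twice, and such cells cover the smaller set. -/
theorem netContent_add_netCost_maximalCells_le (hcell : IsRefining cell)
    (hC : CellCovers cell C A) (hD : CellCovers cell D A) :
    netContent cell weight A + netCost weight (maximalCells cell (C ∪ D)) ≤
      netCost weight (maximalCells cell C) + netCost weight D :=
  calc netContent cell weight A + netCost weight (maximalCells cell (C ∪ D))
      ≤ netCost weight (maximalCells cell C ∩ D ∪
          dominatedCells cell (maximalCells cell C ∪ D)) +
        netCost weight (maximalCells cell (maximalCells cell C ∪ D)) := by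
        gcongr
        · exact netContent_le_netCost ((hC.maximalCells hcell).inter_union_dominatedCells hD)
        · exact netCost_mono (maximalCells_union_subset C D)
    _ ≤ netCost weight (maximalCells cell C) + netCost weight D := by
        rw [add_comm]
        exact netCost_maximalCells_add_le _ _

theorem netCost_maximalCells_accumulate_le (hcell : IsRefining cell) {A : ℕ → Set V}
    (hA : Monotone A) (hfin : ∀ n, netContent cell weight (A n) ≠ ⊤) {W : ℕ → Set (ℕ × I)}
    (hW : ∀ n, CellCovers cell (W n) (A n)) {ε : ℕ → ℝ≥0∞}
    (hcost : ∀ n, netCost weight (W n) ≤ netContent cell weight (A n) + ε n) (N : ℕ) :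
    netCost weight (maximalCells cell (accumulate W N)) ≤
      netContent cell weight (A N) + ∑ n ∈ Finset.range (N + 1), ε n := by
  induction N with
  | zero =>
    rw [accumulate_zero_nat, zero_add, Finset.sum_range_one]
    exact (netCost_mono sdiff_subset).trans (hcost 0)
  | succ N ih =>
    have hcov : CellCovers cell (accumulate W N) (A N) :=
      (hW N).mono (subset_accumulate) Subset.rfl
    have hcov' : CellCovers cell (W (N + 1)) (A N) := (hW (N + 1)).mono Subset.rfl (hA N.le_succ)
    refine (ENNReal.add_le_add_iff_left (hfin N)).1 ?_
    rw [accumulate_succ]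
    calc _ ≤ netCost weight (maximalCells cell (accumulate W N)) + netCost weight (W (N + 1)) :=
          netContent_add_netCost_maximalCells_le hcell hcov hcov'
      _ ≤ (netContent cell weight (A N) + ∑ n ∈ Finset.range (N + 1), ε n) +
          (netContent cell weight (A (N + 1)) + ε (N + 1)) := add_le_add ih (hcost _)
      _ = _ := by rw [Finset.sum_range_succ _ (N + 1)]; ring

theorem netCost_maximalCells_iUnion_le {U : ℕ → Set (ℕ × I)} (hU : Monotone U) {θ : ℝ≥0∞}
    (hθ : ∀ N, netCost weight (maximalCells cell (U N)) ≤ θ) :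
    netCost weight (maximalCells cell (⋃ N, U N)) ≤ θ := by
  have hlocal : ∀ p : ℕ × I, ∃ N, ∀ M ≥ N, p ∈ maximalCells cell (⋃ N, U N) →
      p ∈ maximalCells cell (U M) := by
    intro p
    by_cases hp : p ∈ ⋃ N, U N
    · obtain ⟨N, hN⟩ := mem_iUnion.1 hp
      refine ⟨N, fun M hM hmax => ⟨hU hM hN, ?_⟩⟩
      rintro ⟨-, l, hl, x, hx, hlx⟩
      exact hmax.2 ⟨hp, l, hl, x, hx, mem_iUnion.2 ⟨M, hlx⟩⟩
    · exact ⟨0, fun M _ h => absurd h.1 hp⟩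
  choose N hN using hlocal
  rw [netCost, ENNReal.tsum_eq_iSup_sum]
  refine iSup_le fun F => le_trans ?_ (hθ (F.sup N))
  calc _ ≤ ∑ p ∈ F, (maximalCells cell (U (F.sup N))).indicator (fun p => weight p.1) p := by
        classical
        refine Finset.sum_le_sum fun p hp => ?_
        by_cases hmax : p ∈ maximalCells cell (⋃ N, U N)
        · simp [hmax, hN p _ (Finset.le_sup hp) hmax]
        · simp [hmax]
    _ ≤ _ := ENNReal.sum_le_tsum F

theorem netContent_iUnion_le (hcell : IsRefining cell) {A : ℕ → Set V} (hA : Monotone A)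
    {θ : ℝ≥0∞} (hθ : ∀ n, netContent cell weight (A n) ≤ θ) :
    netContent cell weight (⋃ n, A n) ≤ θ := by
  refine ENNReal.le_of_forall_pos_le_add fun ε hε hθtop => ?_
  obtain ⟨e, he0, hesum⟩ := ENNReal.exists_pos_sum_of_countable
    (ENNReal.coe_ne_zero.2 hε.ne') ℕ
  have hfin : ∀ n, netContent cell weight (A n) ≠ ⊤ := fun n => ((hθ n).trans_lt hθtop).ne
  choose W hWcov hWcost using fun n =>
    exists_cellCovers_netCost_lt (hfin n) (ENNReal.coe_ne_zero.2 (he0 n).ne')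
  have hcov : CellCovers cell (⋃ N, accumulate W N) (⋃ n, A n) := by
    rintro x hx
    obtain ⟨n, hn⟩ := mem_iUnion.1 hx
    exact (hWcov n x hn).imp fun _ hk => mem_iUnion.2 ⟨n, subset_accumulate hk⟩
  refine (netContent_le_netCost (hcov.maximalCells hcell)).trans
    (netCost_maximalCells_iUnion_le monotone_accumulate fun N => ?_)
  calc _ ≤ netContent cell weight (A N) + ∑ n ∈ Finset.range (N + 1), (e n : ℝ≥0∞) :=
        netCost_maximalCells_accumulate_le hcell hA hfin hWcov (fun n => (hWcost n).le) N
    _ ≤ θ + ε := add_le_add (hθ N) ((ENNReal.sum_le_tsum _).trans hesum.le)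

theorem netContent_iUnion (hcell : IsRefining cell) {A : ℕ → Set V} (hA : Monotone A) :
    netContent cell weight (⋃ n, A n) = ⨆ n, netContent cell weight (A n) :=
  le_antisymm (netContent_iUnion_le hcell hA (le_iSup fun n => netContent cell weight (A n)))
    (iSup_le fun n => netContent_mono (subset_iUnion A n))

end NetContent

/-! ### Compact approximation of analytic sets -/

section Analytic

/-- The sequences of naturals whose first `k` terms are bounded by those of `M`. -/
def boundedSequences (M : ℕ → ℕ) (k : ℕ) : Set (ℕ → ℕ) := {x | ∀ i < k, x i ≤ M i}

theorem boundedSequences_succ (M : ℕ → ℕ) (k : ℕ) :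
    boundedSequences M (k + 1) = boundedSequences M k ∩ {x | x k ≤ M k} := by
  ext x
  simp only [boundedSequences, Nat.lt_succ_iff_lt_or_eq, mem_inter_iff, mem_ofPred_eq]
  exact ⟨fun h => ⟨fun i hi => h i (Or.inl hi), h k (Or.inr rfl)⟩,
    fun h i hi => hi.elim (h.1 i) fun hik => hik ▸ h.2⟩

theorem exists_dist_lt_of_mem_boundedSequences {V : Type*} [PseudoMetricSpace V]
    {f : (ℕ → ℕ) → V} (hf : Continuous f) (M : ℕ → ℕ) {δ : ℝ} (hδ : 0 < δ) :
    ∃ k, ∀ x ∈ boundedSequences M k, ∃ y ∈ Set.pi univ fun i => Iic (M i),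
      dist (f x) (f y) < δ := by
  by_contra! hfar
  choose x hx hdist using hfar
  have hcompact : IsCompact (Set.pi univ fun i => Iic (M i)) :=
    isCompact_univ_pi fun i => (Set.finite_Iic (M i)).isCompact
  obtain ⟨a, ha, φ, hφ, hlim⟩ := hcompact.tendsto_subseq
    (x := fun k i => min (x k i) (M i)) fun k i _ => mem_Iic.2 (min_le_right _ _)
  have hxlim : Tendsto (x ∘ φ) atTop (𝓝 a) := by
    rw [tendsto_pi_nhds] at hlim ⊢
    refine fun i => (hlim i).congr' ?_
    filter_upwards [eventually_gt_atTop i] with n hn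
    exact min_eq_left (hx (φ n) i (hn.trans_le (hφ.id_le n)))
  obtain ⟨N, hN⟩ := Metric.tendsto_atTop.1 ((hf.tendsto a).comp hxlim) δ hδ
  exact absurd (hN N le_rfl) (not_lt.2 (hdist (φ N) a ha))

variable {V I : Type*} {cell : ℕ → V → I} {weight : ℕ → ℝ≥0∞} {θ : ℝ≥0∞}

theorem exists_lt_netContent_image_inter (hcell : IsRefining cell) (f : (ℕ → ℕ) → V) (k : ℕ)
    {P : Set (ℕ → ℕ)} (hP : θ < netContent cell weight (f '' P)) :
    ∃ m, θ < netContent cell weight (f '' (P ∩ {x | x k ≤ m})) := by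
  have hunion : f '' P = ⋃ m, f '' (P ∩ {x | x k ≤ m}) := by
    rw [← image_iUnion, ← inter_iUnion, iUnion_eq_univ_iff.2 fun x => ⟨x k, le_refl (x k)⟩,
      inter_univ]
  rw [hunion, netContent_iUnion hcell] at hP
  · exact lt_iSup_iff.1 hP
  · exact fun m n hmn => image_mono (inter_subset_inter_right _ fun x hx => le_trans hx hmn)

theorem exists_bound_lt_netContent_image (hcell : IsRefining cell) (f : (ℕ → ℕ) → V)
    (h : θ < netContent cell weight (range f)) :
    ∃ M, ∀ k, θ < netContent cell weight (f '' boundedSequences M k) := by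
  choose! m hm using fun k (P : Set (ℕ → ℕ)) =>
    exists_lt_netContent_image_inter (θ := θ) (weight := weight) hcell f k (P := P)
  let P : ℕ → Set (ℕ → ℕ) := fun n => n.rec univ fun k S => S ∩ {x | x k ≤ m k S}
  have hP : ∀ k, P k = boundedSequences (fun k => m k (P k)) k := by
    intro k
    induction k with
    | zero => simp [P, boundedSequences]
    | succ k ih => rw [boundedSequences_succ, ← ih]
  refine ⟨fun k => m k (P k), fun k => ?_⟩
  rw [← hP]
  induction k with
  | zero => simpa [P] using h
  | succ k ih => exact hm k _ ih

theorem exists_isCompact_netContent_thickening [PseudoMetricSpace V] (hcell : IsRefining cell)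
    {A : Set V} (hA : AnalyticSet A) (h : θ < netContent cell weight A) :
    ∃ K ⊆ A, IsCompact K ∧ ∀ δ > 0, θ < netContent cell weight (A ∩ thickening δ K) := by
  rw [AnalyticSet] at hA
  rcases hA with rfl | ⟨f, hf, rfl⟩
  · exact absurd h (by simp [netContent_empty])
  obtain ⟨M, hM⟩ := exists_bound_lt_netContent_image hcell f h
  refine ⟨f '' Set.pi univ fun i => Iic (M i), image_subset_range _ _,
    (isCompact_univ_pi fun i => (Set.finite_Iic (M i)).isCompact).image hf, fun δ hδ => ?_⟩
  obtain ⟨k, hk⟩ := exists_dist_lt_of_mem_boundedSequences hf M hδ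
  refine (hM k).trans_le (netContent_mono ?_)
  rintro _ ⟨x, hx, rfl⟩
  obtain ⟨y, hy, hxy⟩ := hk x hx
  exact ⟨mem_range_self x, mem_thickening_iff.2 ⟨f y, mem_image_of_mem f hy, hxy⟩⟩

end Analytic

/-! ### Finite Frostman lemma -/

section Frostman

variable {J I : Type*} [Fintype J] [DecidableEq I] {cell : ℕ → J → I} {b : ℕ → ℝ} {n : ℕ}
  {m : J → ℝ}

/-- The nonnegative mass distributions on the finite set `J` giving mass at most `b k` to every
cell of level `k ≤ n`. -/
def frostmanMasses (cell : ℕ → J → I) (b : ℕ → ℝ) (n : ℕ) : Set (J → ℝ) :=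
  {m | (∀ j, 0 ≤ m j) ∧ ∀ k ≤ n, ∀ i, ∑ j with cell k j = i, m j ≤ b k}

theorem isCompact_frostmanMasses : IsCompact (frostmanMasses cell b n) := by
  have hclosed : IsClosed (frostmanMasses cell b n) := by
    simp only [frostmanMasses, ofPred_and, ofPred_forall]
    refine (isClosed_iInter fun j => isClosed_le continuous_const (continuous_apply j)).inter ?_
    refine isClosed_iInter fun k => isClosed_iInter fun _ => isClosed_iInter fun i =>
      isClosed_le ?_ continuous_const
    exact continuous_finsetSum _ fun j _ => continuous_apply j
  refine (isCompact_univ_pi (s := fun _ : J => Icc (0:ℝ) (b 0)) fun _ =>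
    isCompact_Icc).of_isClosed_subset hclosed fun m hm j _ => ⟨hm.1 j, ?_⟩
  exact (Finset.single_le_sum (f := m) (fun i _ => hm.1 i) (by simp)).trans
    (hm.2 0 n.zero_le (cell 0 j))

theorem exists_isMaxOn_frostmanMasses (hb : ∀ k, 0 ≤ b k) :
    ∃ m ∈ frostmanMasses cell b n, IsMaxOn (fun m => ∑ j, m j) (frostmanMasses cell b n) m :=
  isCompact_frostmanMasses.exists_isMaxOn
    ⟨0, fun _ => le_rfl, fun k _ i => by simpa using hb k⟩
    (continuous_finsetSum _ fun j _ => continuous_apply j).continuousOn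

theorem exists_pos_forall_add_le_of_forall_lt {f b : ℕ → ℝ} (h : ∀ k ≤ n, f k < b k) :
    ∃ e > 0, ∀ k ≤ n, f k + e ≤ b k := by
  have hne : (Finset.range (n + 1)).Nonempty := Finset.nonempty_range_add_one
  refine ⟨(Finset.range (n + 1)).inf' hne fun k => b k - f k, ?_, fun k hk => ?_⟩
  · exact (Finset.lt_inf'_iff hne).2 fun k hk =>
      sub_pos.2 (h k (Nat.lt_succ_iff.1 (Finset.mem_range.1 hk)))
  · have := Finset.inf'_le (fun k => b k - f k) (Finset.mem_range.2 (Nat.lt_succ_of_le hk))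
    linarith

theorem exists_saturated_cell (hm : m ∈ frostmanMasses cell b n)
    (hmax : IsMaxOn (fun m => ∑ j, m j) (frostmanMasses cell b n) m) (j : J) :
    ∃ k ≤ n, ∑ j' with cell k j' = cell k j, m j' = b k := by
  classical
  by_contra! hne
  obtain ⟨e, he, hle⟩ : ∃ e > 0, ∀ k ≤ n, ∑ j' with cell k j' = cell k j, m j' + e ≤ b k :=
    exists_pos_forall_add_le_of_forall_lt fun k hk =>
      lt_of_le_of_ne (hm.2 k hk (cell k j)) (hne k hk)
  have hsum : ∀ F : Finset J, ∑ i ∈ F, (m + Pi.single j e : J → ℝ) i =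
      ∑ i ∈ F, m i + if j ∈ F then e else 0 := fun F => by
    simp only [Pi.add_apply, Finset.sum_add_distrib, Finset.sum_pi_single']
  have hadd : (m + Pi.single j e : J → ℝ) ∈ frostmanMasses cell b n := by
    refine ⟨add_nonneg (a := m) hm.1 (Pi.single_nonneg.2 he.le), fun k hk i => ?_⟩
    rw [hsum]
    by_cases hi : cell k j = i
    · subst hi; simpa using hle k hk
    · simpa [hi] using hm.2 k hk i
  have hle' := hmax hadd
  simp only [mem_ofPred_eq, hsum, Finset.mem_univ, if_true] at hle'
  linarith

theorem exists_frostman_of_le_cost (hcell : IsRefining cell) (hb : ∀ k, 0 ≤ b k) {θ : ℝ}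
    (hθ : ∀ C : Finset (ℕ × I), (∀ j, ∃ k ≤ n, (k, cell k j) ∈ C) → θ ≤ ∑ p ∈ C, b p.1) :
    ∃ m ∈ frostmanMasses cell b n, θ ≤ ∑ j, m j := by
  classical
  obtain ⟨m, hm, hmax⟩ := exists_isMaxOn_frostmanMasses (cell := cell) (n := n) hb
  refine ⟨m, hm, ?_⟩
  have hsat := exists_saturated_cell hm hmax
  let level : J → ℕ := fun j => Nat.find (hsat j)
  have hlevel : ∀ j, level j ≤ n ∧
      ∑ j' with cell (level j) j' = cell (level j) j, m j' = b (level j) :=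
    fun j => Nat.find_spec (hsat j)
  have hlevel_le : ∀ j j', cell (level j) j' = cell (level j) j → level j' ≤ level j :=
    fun j j' h => Nat.find_min' (hsat j') ⟨(hlevel j).1, by rw [h]; exact (hlevel j).2⟩
  have hlevel_eq : ∀ j j', cell (level j) j' = cell (level j) j → level j' = level j :=
    fun j j' h => le_antisymm (hlevel_le j j' h)
      (hlevel_le j' j (hcell (hlevel_le j j' h) h).symm)
  let topCell : J → ℕ × I := fun j => (level j, cell (level j) j)
  calc θ ≤ ∑ p ∈ Finset.univ.image topCell, b p.1 :=
        hθ _ fun j => ⟨level j, (hlevel j).1, Finset.mem_image_of_mem topCell (Finset.mem_univ j)⟩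
    _ ≤ ∑ p ∈ Finset.univ.image topCell, ∑ j with topCell j = p, m j := by
        refine Finset.sum_le_sum fun p hp => ?_
        obtain ⟨j, -, rfl⟩ := Finset.mem_image.1 hp
        rw [← (hlevel j).2]
        refine Finset.sum_le_sum_of_subset_of_nonneg (fun j' hj' => ?_) fun i _ _ => hm.1 i
        simp only [Finset.mem_filter, Finset.mem_univ, true_and] at hj' ⊢
        simp only [topCell, hlevel_eq j j' hj', hj']
    _ = ∑ j, m j := Finset.sum_fiberwise_of_maps_to
        (fun j _ => Finset.mem_image_of_mem topCell (Finset.mem_univ j)) m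

end Frostman

/-! ### Images of Lebesgue measure under increasing functions -/

section ImageDensity

variable {h h₀ h₁ h' h₀' h₁' G : ℝ → ℝ} {a b η β M r : ℝ}

/-- On the nonempty interval `[a, b]` the function `h` has derivative `h'`, bounded below by
`η > 0`. -/
structure IsExpandingOn (h h' : ℝ → ℝ) (η a b : ℝ) : Prop where
  le : a ≤ b
  pos : 0 < η
  hasDerivAt : ∀ v ∈ Icc a b, HasDerivAt h (h' v) v
  le_deriv : ∀ v ∈ Icc a b, η ≤ h' v

/-- Closeness up to `β`, on the set `S`, of two functions and of their derivatives. -/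
def C1CloseOn (h₀ h₀' h₁ h₁' : ℝ → ℝ) (β : ℝ) (S : Set ℝ) : Prop :=
  ∀ v ∈ S, |h₀ v - h₁ v| ≤ β ∧ |h₀' v - h₁' v| ≤ β

/-- The density of the image under `h` of Lebesgue measure on `[a, b]`, for `h` increasing with
derivative `h'`. -/
def imageDensity (h h' : ℝ → ℝ) (a b : ℝ) : ℝ → ℝ :=
  (Icc (h a) (h b)).indicator fun r => (h' (Function.invFunOn h (Icc a b) r))⁻¹

theorem imageDensity_mul_eq_indicator (G : ℝ → ℝ) (h h' : ℝ → ℝ) (a b : ℝ) :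
    (fun r => imageDensity h h' a b r * G r) =
      (Icc (h a) (h b)).indicator fun r => imageDensity h h' a b r * G r := by
  ext r
  by_cases hr : r ∈ Icc (h a) (h b) <;> simp [imageDensity, hr]

namespace IsExpandingOn

theorem deriv_pos (hh : IsExpandingOn h h' η a b) {v : ℝ} (hv : v ∈ Icc a b) : 0 < h' v :=
  hh.pos.trans_le (hh.le_deriv v hv)

theorem continuousOn (hh : IsExpandingOn h h' η a b) : ContinuousOn h (Icc a b) :=
  fun v hv => (hh.hasDerivAt v hv).continuousAt.continuousWithinAt

theorem mul_sub_le (hh : IsExpandingOn h h' η a b) {v w : ℝ} (hv : v ∈ Icc a b)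
    (hw : w ∈ Icc a b) (hvw : v ≤ w) : η * (w - v) ≤ h w - h v := by
  refine (convex_Icc a b).mul_sub_le_image_sub_of_le_deriv hh.continuousOn
    (fun x hx => ?_) (fun x hx => ?_) v hv w hw hvw
  · exact (hh.hasDerivAt x (interior_subset hx)).differentiableAt.differentiableWithinAt
  · rw [(hh.hasDerivAt x (interior_subset hx)).deriv]
    exact hh.le_deriv x (interior_subset hx)

theorem strictMonoOn (hh : IsExpandingOn h h' η a b) : StrictMonoOn h (Icc a b) :=
  fun _ hv _ hw hvw => sub_pos.1
    ((mul_pos hh.pos (sub_pos.2 hvw)).trans_le (hh.mul_sub_le hv hw hvw.le))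

theorem mul_abs_sub_le (hh : IsExpandingOn h h' η a b) {v w : ℝ} (hv : v ∈ Icc a b)
    (hw : w ∈ Icc a b) : η * |v - w| ≤ |h v - h w| := by
  rcases le_total v w with hvw | hwv
  · rw [abs_sub_comm v, abs_sub_comm (h v), abs_of_nonneg (sub_nonneg.2 hvw)]
    exact (hh.mul_sub_le hv hw hvw).trans (le_abs_self _)
  · rw [abs_of_nonneg (sub_nonneg.2 hwv)]
    exact (hh.mul_sub_le hw hv hwv).trans (le_abs_self _)

theorem image_Icc (hh : IsExpandingOn h h' η a b) : h '' Icc a b = Icc (h a) (h b) :=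
  Subset.antisymm
    (image_subset_iff.2 fun _ hv =>
      ⟨hh.strictMonoOn.monotoneOn (left_mem_Icc.2 hh.le) hv hv.1,
        hh.strictMonoOn.monotoneOn hv (right_mem_Icc.2 hh.le) hv.2⟩)
    (intermediate_value_Icc hh.le hh.continuousOn)

theorem imageDensity_comp (hh : IsExpandingOn h h' η a b) {v : ℝ} (hv : v ∈ Icc a b) :
    imageDensity h h' a b (h v) = (h' v)⁻¹ := by
  have himage : h v ∈ h '' Icc a b := mem_image_of_mem h hv
  have hinv : Function.invFunOn h (Icc a b) (h v) = v :=
    hh.strictMonoOn.injOn (Function.invFunOn_mem himage) hv (Function.invFunOn_eq himage)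
  rw [imageDensity, indicator_of_mem (hh.image_Icc ▸ himage), hinv]

theorem abs_imageDensity_le (hh : IsExpandingOn h h' η a b) (r : ℝ) :
    |imageDensity h h' a b r| ≤ 1 / η := by
  by_cases hr : r ∈ Icc (h a) (h b)
  · obtain ⟨v, hv, rfl⟩ := hh.image_Icc ▸ hr
    rw [hh.imageDensity_comp hv, abs_inv, abs_of_pos (hh.deriv_pos hv), one_div]
    exact inv_anti₀ hh.pos (hh.le_deriv v hv)
  · rw [imageDensity, indicator_of_notMem hr, abs_zero]
    exact one_div_nonneg.2 hh.pos.le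

theorem eqOn_abs_deriv_smul (hh : IsExpandingOn h h' η a b) (G : ℝ → ℝ) :
    EqOn (fun v => |h' v| • (imageDensity h h' a b (h v) * G (h v))) (fun v => G (h v))
      (Icc a b) := by
  intro v hv
  have hpos := hh.deriv_pos hv
  simp only [hh.imageDensity_comp hv, smul_eq_mul, abs_of_pos hpos]
  rw [mul_inv_cancel_left₀ hpos.ne']

theorem integral_comp (hh : IsExpandingOn h h' η a b) (G : ℝ → ℝ) :
    ∫ v in Icc a b, G (h v) = ∫ r, imageDensity h h' a b r * G r := by
  rw [imageDensity_mul_eq_indicator, integral_indicator measurableSet_Icc, ← hh.image_Icc,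
    integral_image_eq_integral_abs_deriv_smul measurableSet_Icc
      (fun v hv => (hh.hasDerivAt v hv).hasDerivWithinAt) hh.strictMonoOn.injOn]
  exact (setIntegral_congr_fun measurableSet_Icc (hh.eqOn_abs_deriv_smul G)).symm

theorem integrable_imageDensity_mul (hh : IsExpandingOn h h' η a b)
    (hG : IntegrableOn (fun v => G (h v)) (Icc a b)) :
    Integrable fun r => imageDensity h h' a b r * G r := by
  rw [imageDensity_mul_eq_indicator, integrable_indicator_iff measurableSet_Icc, ← hh.image_Icc,
    integrableOn_image_iff_integrableOn_abs_deriv_smul measurableSet_Icc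
      (fun v hv => (hh.hasDerivAt v hv).hasDerivWithinAt) hh.strictMonoOn.injOn]
  exact hG.congr_fun (hh.eqOn_abs_deriv_smul G).symm measurableSet_Icc

theorem integrableOn_comp (hh : IsExpandingOn h h' η a b) (hG : Measurable G)
    (hGM : ∀ r, |G r| ≤ M) : IntegrableOn (fun v => G (h v)) (Icc a b) :=
  Integrable.of_bound
    (hG.comp_aemeasurable (hh.continuousOn.aemeasurable measurableSet_Icc)).aestronglyMeasurable M
    (Eventually.of_forall fun v => hGM (h v))

end IsExpandingOn

theorem abs_inv_sub_inv_le {x y κ : ℝ} (hη : 0 < η) (hx : η ≤ x) (hy : η ≤ y)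
    (hxy : |x - y| ≤ κ) : |x⁻¹ - y⁻¹| ≤ κ / η ^ 2 := by
  have hx0 := hη.trans_le hx
  have hy0 := hη.trans_le hy
  rw [inv_sub_inv hx0.ne' hy0.ne', abs_div, abs_sub_comm, abs_of_pos (mul_pos hx0 hy0), pow_two]
  exact div_le_div₀ ((abs_nonneg _).trans hxy) hxy (by positivity)
    (mul_le_mul hx hy hη.le hx0.le)

variable {L : ℝ≥0}

theorem abs_imageDensity_sub_le_of_mem (hh₀ : IsExpandingOn h₀ h₀' η a b)
    (hh₁ : IsExpandingOn h₁ h₁' η a b) (hclose : C1CloseOn h₀ h₀' h₁ h₁' β (Icc a b))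
    (hlip : LipschitzOnWith L h₀' (Icc a b)) (hr₀ : r ∈ Icc (h₀ a) (h₀ b))
    (hr₁ : r ∈ Icc (h₁ a) (h₁ b)) :
    |imageDensity h₀ h₀' a b r - imageDensity h₁ h₁' a b r| ≤ (L * β / η + β) / η ^ 2 := by
  obtain ⟨v, hv, rfl⟩ := hh₀.image_Icc ▸ hr₀
  obtain ⟨w, hw, hwv⟩ := hh₁.image_Icc ▸ hr₁
  have hdist : |v - w| ≤ β / η := by
    rw [le_div_iff₀ hh₀.pos, mul_comm]
    refine (hh₀.mul_abs_sub_le hv hw).trans ?_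
    rw [← hwv, abs_sub_comm]
    exact (hclose w hw).1
  have hderiv : |h₀' v - h₁' w| ≤ L * β / η + β :=
    calc |h₀' v - h₁' w| ≤ |h₀' v - h₀' w| + |h₀' w - h₁' w| := abs_sub_le _ _ _
      _ ≤ L * |v - w| + β := add_le_add (hlip.dist_le_mul v hv w hw) (hclose w hw).2
      _ ≤ L * β / η + β := by rw [mul_div_assoc]; gcongr
  rw [hh₀.imageDensity_comp hv, ← hwv, hh₁.imageDensity_comp hw]
  exact abs_inv_sub_inv_le hh₀.pos (hh₀.le_deriv v hv) (hh₁.le_deriv w hw) hderiv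

/-- A step function dominating the difference of the densities of the images of Lebesgue measure
on `[a, b]` under two `C¹`-close functions: the densities are close where both live, and only
near the endpoints of the images can exactly one of them be nonzero. -/
def densityMajorant (x y β δ κ : ℝ) (r : ℝ) : ℝ :=
  (Icc (x - β) (x + β)).indicator (fun _ => δ) r +
    (Icc (y - β) (y + β)).indicator (fun _ => δ) r + (Icc x y).indicator (fun _ => κ) r

theorem integrable_indicator_Icc_const (x y z : ℝ) :
    Integrable ((Icc x y).indicator fun _ : ℝ => z) :=
  (integrable_indicator_iff measurableSet_Icc).2 (integrableOn_const (by simp))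

theorem integrable_densityMajorant (x y β δ κ : ℝ) :
    Integrable (densityMajorant x y β δ κ) :=
  ((integrable_indicator_Icc_const _ _ _).add (integrable_indicator_Icc_const _ _ _)).add
    (integrable_indicator_Icc_const _ _ _)

theorem integral_densityMajorant {x y : ℝ} (hβ : 0 ≤ β) (hxy : x ≤ y) (δ κ : ℝ) :
    ∫ r, densityMajorant x y β δ κ r = 4 * β * δ + (y - x) * κ := by
  have hends : Integrable fun r => (Icc (x - β) (x + β)).indicator (fun _ => δ) r +
      (Icc (y - β) (y + β)).indicator (fun _ => δ) r :=
    (integrable_indicator_Icc_const _ _ _).add (integrable_indicator_Icc_const _ _ _)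
  simp only [densityMajorant]
  rw [integral_add hends (integrable_indicator_Icc_const _ _ _),
    integral_add (integrable_indicator_Icc_const _ _ _) (integrable_indicator_Icc_const _ _ _)]
  simp only [integral_indicator measurableSet_Icc, setIntegral_const, smul_eq_mul]
  rw [Real.volume_real_Icc_of_le (by linarith), Real.volume_real_Icc_of_le (by linarith),
    Real.volume_real_Icc_of_le hxy]
  ring

theorem le_densityMajorant_of_mem_left {x y δ κ : ℝ} (hδ : 0 ≤ δ) (hκ : 0 ≤ κ)
    (hr : r ∈ Icc (x - β) (x + β)) : δ ≤ densityMajorant x y β δ κ r := by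
  rw [densityMajorant, indicator_of_mem hr, add_assoc]
  exact le_add_of_nonneg_right
    (add_nonneg (indicator_nonneg (fun _ _ => hδ) r) (indicator_nonneg (fun _ _ => hκ) r))

theorem le_densityMajorant_of_mem_right {x y δ κ : ℝ} (hδ : 0 ≤ δ) (hκ : 0 ≤ κ)
    (hr : r ∈ Icc (y - β) (y + β)) : δ ≤ densityMajorant x y β δ κ r := by
  rw [densityMajorant, indicator_of_mem hr, add_right_comm]
  exact le_add_of_nonneg_left
    (add_nonneg (indicator_nonneg (fun _ _ => hδ) r) (indicator_nonneg (fun _ _ => hκ) r))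

theorem le_densityMajorant_of_mem {x y δ κ : ℝ} (hδ : 0 ≤ δ) (hr : r ∈ Icc x y) :
    κ ≤ densityMajorant x y β δ κ r := by
  rw [densityMajorant, indicator_of_mem hr]
  exact le_add_of_nonneg_left
    (add_nonneg (indicator_nonneg (fun _ _ => hδ) r) (indicator_nonneg (fun _ _ => hδ) r))

theorem densityMajorant_nonneg {x y δ κ : ℝ} (hδ : 0 ≤ δ) (hκ : 0 ≤ κ) (r : ℝ) :
    0 ≤ densityMajorant x y β δ κ r :=
  add_nonneg (add_nonneg (indicator_nonneg (fun _ _ => hδ) r) (indicator_nonneg (fun _ _ => hδ) r))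
    (indicator_nonneg (fun _ _ => hκ) r)

theorem le_densityMajorant_of_mem_symmDiff {x y x₁ y₁ δ κ : ℝ} (hδ : 0 ≤ δ) (hκ : 0 ≤ κ)
    (hx : |x - x₁| ≤ β) (hy : |y - y₁| ≤ β) (hr : r ∈ symmDiff (Icc x y) (Icc x₁ y₁)) :
    δ ≤ densityMajorant x y β δ κ r := by
  rw [abs_le] at hx hy
  simp only [Set.mem_symmDiff, mem_Icc, not_and_or, not_le] at hr
  rcases hr with ⟨⟨hxr, hry⟩, hr' | hr'⟩ | ⟨⟨hxr, hry⟩, hr' | hr'⟩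
  · exact le_densityMajorant_of_mem_left hδ hκ ⟨by linarith, by linarith⟩
  · exact le_densityMajorant_of_mem_right hδ hκ ⟨by linarith, by linarith⟩
  · exact le_densityMajorant_of_mem_left hδ hκ ⟨by linarith, by linarith⟩
  · exact le_densityMajorant_of_mem_right hδ hκ ⟨by linarith, by linarith⟩

theorem abs_imageDensity_sub_le (hh₀ : IsExpandingOn h₀ h₀' η a b)
    (hh₁ : IsExpandingOn h₁ h₁' η a b) (hclose : C1CloseOn h₀ h₀' h₁ h₁' β (Icc a b))
    (hlip : LipschitzOnWith L h₀' (Icc a b)) :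
    |imageDensity h₀ h₀' a b r - imageDensity h₁ h₁' a b r| ≤
      densityMajorant (h₀ a) (h₀ b) β (1 / η) ((L * β / η + β) / η ^ 2) r := by
  have ha := (hclose a (left_mem_Icc.2 hh₀.le)).1
  have hb := (hclose b (right_mem_Icc.2 hh₀.le)).1
  have hη := hh₀.pos
  have hβ : 0 ≤ β := (abs_nonneg _).trans ha
  have hκ : 0 ≤ (L * β / η + β) / η ^ 2 := by positivity
  have hδ : 0 ≤ 1 / η := by positivity
  by_cases hr₀ : r ∈ Icc (h₀ a) (h₀ b) <;> by_cases hr₁ : r ∈ Icc (h₁ a) (h₁ b)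
  · exact (abs_imageDensity_sub_le_of_mem hh₀ hh₁ hclose hlip hr₀ hr₁).trans
      (le_densityMajorant_of_mem hδ hr₀)
  · rw [imageDensity.eq_def h₁, indicator_of_notMem hr₁, sub_zero]
    exact (hh₀.abs_imageDensity_le r).trans
      (le_densityMajorant_of_mem_symmDiff hδ hκ ha hb (Or.inl ⟨hr₀, hr₁⟩))
  · rw [imageDensity.eq_def h₀, indicator_of_notMem hr₀, zero_sub, abs_neg]
    exact (hh₁.abs_imageDensity_le r).trans
      (le_densityMajorant_of_mem_symmDiff hδ hκ ha hb (Or.inr ⟨hr₁, hr₀⟩))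
  · rw [imageDensity, imageDensity, indicator_of_notMem hr₀, indicator_of_notMem hr₁, sub_zero,
      abs_zero]
    exact densityMajorant_nonneg hδ hκ r

theorem IsExpandingOn.abs_integral_comp_sub_le (hh₀ : IsExpandingOn h₀ h₀' η a b)
    (hh₁ : IsExpandingOn h₁ h₁' η a b) (hclose : C1CloseOn h₀ h₀' h₁ h₁' β (Icc a b))
    (hlip : LipschitzOnWith L h₀' (Icc a b)) (hG : Measurable G) (hGM : ∀ r, |G r| ≤ M) :
    |∫ v in Icc a b, G (h₀ v) - G (h₁ v)| ≤
      M * (4 * β / η + (h₀ b - h₀ a) * ((L * β / η + β) / η ^ 2)) := by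
  have hM : 0 ≤ M := (abs_nonneg _).trans (hGM 0)
  have hβ : 0 ≤ β := (abs_nonneg _).trans (hclose a (left_mem_Icc.2 hh₀.le)).1
  have hint₀ := hh₀.integrableOn_comp hG hGM
  have hint₁ := hh₁.integrableOn_comp hG hGM
  have hmono : h₀ a ≤ h₀ b :=
    hh₀.strictMonoOn.monotoneOn (left_mem_Icc.2 hh₀.le) (right_mem_Icc.2 hh₀.le) hh₀.le
  rw [integral_sub hint₀ hint₁, hh₀.integral_comp, hh₁.integral_comp,
    ← integral_sub (hh₀.integrable_imageDensity_mul hint₀) (hh₁.integrable_imageDensity_mul hint₁)]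
  calc |∫ r, imageDensity h₀ h₀' a b r * G r - imageDensity h₁ h₁' a b r * G r|
      ≤ ∫ r, M * densityMajorant (h₀ a) (h₀ b) β (1 / η) ((L * β / η + β) / η ^ 2) r := by
        rw [← Real.norm_eq_abs]
        refine norm_integral_le_of_norm_le ((integrable_densityMajorant ..).const_mul M)
          (Eventually.of_forall fun r => ?_)
        rw [← sub_mul, norm_mul, mul_comm]
        exact mul_le_mul (hGM r) (abs_imageDensity_sub_le hh₀ hh₁ hclose hlip)
          (norm_nonneg _) hM
    _ = M * (4 * β / η + (h₀ b - h₀ a) * ((L * β / η + β) / η ^ 2)) := by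
        rw [integral_const_mul, integral_densityMajorant hβ hmono]
        ring

theorem abs_integral_comp_sub_le_of_isExpandingOn_neg
    (hh₀ : IsExpandingOn (fun v => -h₀ v) (fun v => -h₀' v) η a b)
    (hh₁ : IsExpandingOn (fun v => -h₁ v) (fun v => -h₁' v) η a b)
    (hclose : C1CloseOn h₀ h₀' h₁ h₁' β (Icc a b)) (hlip : LipschitzOnWith L h₀' (Icc a b))
    (hG : Measurable G) (hGM : ∀ r, |G r| ≤ M) :
    |∫ v in Icc a b, G (h₀ v) - G (h₁ v)| ≤
      M * (4 * β / η + (h₀ a - h₀ b) * ((L * β / η + β) / η ^ 2)) := by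
  have hclose_neg : C1CloseOn (fun v => -h₀ v) (fun v => -h₀' v) (fun v => -h₁ v)
      (fun v => -h₁' v) β (Icc a b) := by
    intro v hv
    rw [neg_sub_neg, neg_sub_neg, abs_sub_comm, abs_sub_comm (h₁' v)]
    exact hclose v hv
  have hneg := hh₀.abs_integral_comp_sub_le hh₁ hclose_neg hlip.neg (hG.comp measurable_neg)
    fun r => hGM (-r)
  simpa only [Function.comp_apply, neg_neg, neg_sub_neg] using hneg

end ImageDensity

/-! ### Differences of points on concave arcs -/

section Arc

variable {φ φ' φ₀ φ₀' φ₁ φ₁' ψ ψ' : ℝ → ℝ} {p q β η w M : ℝ} {L : ℝ≥0}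

/-- `φ` is a function on `[p, q]`, bounded by `1`, whose derivative `φ'` is `L`-Lipschitz and
decreases at rate at least `1`; its graph is a uniformly curved arc. -/
structure IsConcaveArc (p q : ℝ) (L : ℝ≥0) (φ φ' : ℝ → ℝ) : Prop where
  measurable : Measurable φ
  hasDerivAt : ∀ u ∈ Icc p q, HasDerivAt φ (φ' u) u
  deriv_sub_le : ∀ u ∈ Icc p q, ∀ v ∈ Icc p q, u ≤ v → φ' v - φ' u ≤ -(v - u)
  lipschitzOnWith : LipschitzOnWith L φ' (Icc p q)
  abs_le_one : ∀ u ∈ Icc p q, |φ u| ≤ 1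

/-- The vertical gap at `v` between the graph of `φ` moved to the left by `w` and the graph of
`ψ`. -/
def slideGap (φ ψ : ℝ → ℝ) (w v : ℝ) : ℝ := φ (v + w) - ψ v

/-- The interval of those `v` with both `v` and `v + w` in `[p, q]`. -/
abbrev slideInterval (p q w : ℝ) : Set ℝ := Icc (max p (p - w)) (min q (q - w))

theorem mem_slideInterval_iff {v : ℝ} :
    v ∈ slideInterval p q w ↔ v ∈ Icc p q ∧ v + w ∈ Icc p q := by
  simp only [mem_Icc, max_le_iff, le_min_iff, sub_le_iff_le_add, le_sub_iff_add_le]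
  tauto

theorem IsConcaveArc.hasDerivAt_slideGap (hφ : IsConcaveArc p q L φ φ')
    (hψ : IsConcaveArc p q L ψ ψ') {v : ℝ} (hv : v ∈ slideInterval p q w) :
    HasDerivAt (slideGap φ ψ w) (slideGap φ' ψ' w v) v :=
  ((hφ.hasDerivAt _ (mem_slideInterval_iff.1 hv).2).comp_add_const v w).sub
    (hψ.hasDerivAt v (mem_slideInterval_iff.1 hv).1)

theorem IsConcaveArc.lipschitzOnWith_slideGap (hφ : IsConcaveArc p q L φ φ')
    (hψ : IsConcaveArc p q L ψ ψ') :
    LipschitzOnWith (2 * L) (slideGap φ' ψ' w) (slideInterval p q w) := by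
  rw [two_mul]
  have hshift : LipschitzOnWith L (fun v => φ' (v + w)) (slideInterval p q w) := by
    have hadd : LipschitzOnWith 1 (· + w) (slideInterval p q w) :=
      (LipschitzWith.of_dist_le_mul fun x y => by simp).lipschitzOnWith
    simpa only [mul_one, Function.comp_def] using
      hφ.lipschitzOnWith.comp hadd fun v hv => (mem_slideInterval_iff.1 hv).2
  exact hshift.sub (hψ.lipschitzOnWith.mono fun v hv => (mem_slideInterval_iff.1 hv).1)

theorem IsConcaveArc.abs_slideGap_le_two (hφ : IsConcaveArc p q L φ φ')
    (hψ : IsConcaveArc p q L ψ ψ') {v : ℝ} (hv : v ∈ slideInterval p q w) :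
    |slideGap φ ψ w v| ≤ 2 :=
  (abs_sub _ _).trans (by
    linarith [hφ.abs_le_one _ (mem_slideInterval_iff.1 hv).2,
      hψ.abs_le_one v (mem_slideInterval_iff.1 hv).1])

theorem C1CloseOn.slideGap (h : C1CloseOn φ₀ φ₀' φ₁ φ₁' β (Icc p q)) (ψ ψ' : ℝ → ℝ) :
    C1CloseOn (slideGap φ₀ ψ w) (slideGap φ₀' ψ' w) (slideGap φ₁ ψ w) (slideGap φ₁' ψ' w) β
      (slideInterval p q w) := fun v hv => by
  simpa only [_root_.slideGap, sub_sub_sub_cancel_right] using h _ (mem_slideInterval_iff.1 hv).2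

theorem IsConcaveArc.isExpandingOn_slideGap (hφ : IsConcaveArc p q L φ φ')
    (hψ : IsConcaveArc p q L ψ ψ') (hclose : C1CloseOn φ φ' ψ ψ' β (Icc p q)) (hη : 0 < η)
    (hβη : 2 * β ≤ η) (hw : w ≤ -η) (hne : max p (p - w) ≤ min q (q - w)) :
    IsExpandingOn (slideGap φ ψ w) (slideGap φ' ψ' w) (η / 2)
      (max p (p - w)) (min q (q - w)) where
  le := hne
  pos := half_pos hη
  hasDerivAt _ hv := hφ.hasDerivAt_slideGap hψ hv
  le_deriv v hv := by
    obtain ⟨hv, hvw⟩ := mem_slideInterval_iff.1 hv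
    have hclose' := (abs_le.1 (hclose _ hvw).2).1
    have hdecr := hψ.deriv_sub_le _ hvw v hv (by linarith)
    simp only [slideGap]
    linarith

theorem IsConcaveArc.isExpandingOn_neg_slideGap (hφ : IsConcaveArc p q L φ φ')
    (hψ : IsConcaveArc p q L ψ ψ') (hclose : C1CloseOn φ φ' ψ ψ' β (Icc p q)) (hη : 0 < η)
    (hβη : 2 * β ≤ η) (hw : η ≤ w) (hne : max p (p - w) ≤ min q (q - w)) :
    IsExpandingOn (fun v => -slideGap φ ψ w v) (fun v => -slideGap φ' ψ' w v) (η / 2)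
      (max p (p - w)) (min q (q - w)) where
  le := hne
  pos := half_pos hη
  hasDerivAt _ hv := (hφ.hasDerivAt_slideGap hψ hv).neg
  le_deriv v hv := by
    obtain ⟨hv, hvw⟩ := mem_slideInterval_iff.1 hv
    have hclose' := (abs_le.1 (hclose _ hvw).2).2
    have hdecr := hψ.deriv_sub_le v hv _ hvw (by linarith)
    simp only [slideGap]
    linarith

theorem image_estimate_half_le {L β η D : ℝ} (hL : 0 ≤ L) (hβ : 0 ≤ β) (hη : 0 < η) (hη1 : η ≤ 1)
    (hD : D ≤ 4) :
    4 * β / (η / 2) + D * ((2 * L * β / (η / 2) + β) / (η / 2) ^ 2) ≤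
      (24 + 64 * L) * (β / η ^ 3) :=
  calc _ ≤ 4 * β / (η / 2) + 4 * ((2 * L * β / (η / 2) + β) / (η / 2) ^ 2) := by gcongr
    _ = (8 * η ^ 2 + 64 * L + 16 * η) * (β / η ^ 3) := by field_simp; ring
    _ ≤ (24 + 64 * L) * (β / η ^ 3) := by
      refine mul_le_mul_of_nonneg_right ?_ (by positivity)
      nlinarith

theorem abs_integral_slideGap_sub_le (hφ₀ : IsConcaveArc p q L φ₀ φ₀')
    (hφ₁ : IsConcaveArc p q L φ₁ φ₁') (hψ : IsConcaveArc p q L ψ ψ')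
    (h₀₁ : C1CloseOn φ₀ φ₀' φ₁ φ₁' β (Icc p q)) (h₀ : C1CloseOn φ₀ φ₀' ψ ψ' β (Icc p q))
    (h₁ : C1CloseOn φ₁ φ₁' ψ ψ' β (Icc p q)) (hβ : 0 ≤ β) (hη : 0 < η) (hη1 : η ≤ 1)
    (hβη : 2 * β ≤ η) (hw : η ≤ |w|) {G : ℝ → ℝ} (hG : Measurable G) (hGM : ∀ r, |G r| ≤ M) :
    |∫ v in slideInterval p q w, G (slideGap φ₀ ψ w v) - G (slideGap φ₁ ψ w v)| ≤
      M * ((24 + 64 * L) * (β / η ^ 3)) := by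
  have hM : 0 ≤ M := (abs_nonneg _).trans (hGM 0)
  rcases lt_or_ge (min q (q - w)) (max p (p - w)) with hempty | hne
  · rw [slideInterval, Icc_eq_empty (not_le.2 hempty), setIntegral_empty, abs_zero]
    positivity
  have hleft := abs_le.1 (hφ₀.abs_slideGap_le_two hψ (left_mem_Icc.2 hne))
  have hright := abs_le.1 (hφ₀.abs_slideGap_le_two hψ (right_mem_Icc.2 hne))
  have hlip := hφ₀.lipschitzOnWith_slideGap hψ (w := w)
  have harith := fun D => image_estimate_half_le (D := D) L.coe_nonneg hβ hη hη1
  rcases le_abs.1 hw with hw | hw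
  · refine (abs_integral_comp_sub_le_of_isExpandingOn_neg
      (hφ₀.isExpandingOn_neg_slideGap hψ h₀ hη hβη hw hne)
      (hφ₁.isExpandingOn_neg_slideGap hψ h₁ hη hβη hw hne) (h₀₁.slideGap ψ ψ') hlip hG hGM).trans
      (mul_le_mul_of_nonneg_left ?_ hM)
    exact_mod_cast harith _ (by linarith)
  · have hw := le_neg_of_le_neg hw
    refine ((hφ₀.isExpandingOn_slideGap hψ h₀ hη hβη hw hne).abs_integral_comp_sub_le
      (hφ₁.isExpandingOn_slideGap hψ h₁ hη hβη hw hne) (h₀₁.slideGap ψ ψ') hlip hG hGM).trans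
      (mul_le_mul_of_nonneg_left ?_ hM)
    exact_mod_cast harith _ (by linarith)

variable {K : ℝ → ℝ → ℝ} {C : ℝ}

theorem measurable_indicator_add (hK : Measurable (Function.uncurry K)) :
    Measurable (Function.uncurry fun v w => (Icc p q).indicator (fun u => K u v) (v + w)) := by
  have heq : (Function.uncurry fun v w => (Icc p q).indicator (fun u => K u v) (v + w)) =
      {z : ℝ × ℝ | z.1 + z.2 ∈ Icc p q}.indicator
        fun z => Function.uncurry K (z.1 + z.2, z.1) := by
    ext ⟨v, w⟩
    simp only [Function.uncurry, indicator_apply]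
    rfl
  rw [heq]
  exact Measurable.indicator (by fun_prop) ((measurable_fst.add measurable_snd) measurableSet_Icc)

theorem setIntegral_setIntegral_eq_slideInterval (hK : Measurable (Function.uncurry K))
    (hKC : ∀ u v, |K u v| ≤ C) (hpq : q - p ≤ 1) :
    ∫ v in Icc p q, ∫ u in Icc p q, K u v =
      ∫ w in Icc (-1) 1, ∫ v in slideInterval p q w, K (v + w) v := by
  have hC : 0 ≤ C := (abs_nonneg _).trans (hKC 0 0)
  let f : ℝ → ℝ → ℝ := fun v w => (Icc p q).indicator (fun u => K u v) (v + w)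
  have hfC : ∀ v w, |f v w| ≤ C := fun v w => by
    simp only [f, indicator_apply]
    split_ifs
    · exact hKC _ _
    · simpa using hC
  have htranslate : ∫ v in Icc p q, ∫ u in Icc p q, K u v =
      ∫ v in Icc p q, ∫ w in Icc (-1) 1, f v w := by
    refine setIntegral_congr_fun measurableSet_Icc fun v hv => ?_
    rw [← integral_indicator measurableSet_Icc, ← integral_add_left_eq_self _ v]
    refine (setIntegral_eq_integral_of_forall_compl_eq_zero fun w hw => ?_).symm
    refine indicator_of_notMem (fun hvw => hw ⟨?_, ?_⟩) _
    · linarith [hvw.1, hv.2]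
    · linarith [hvw.2, hv.1]
  have hswap : ∫ v in Icc p q, ∫ w in Icc (-1) 1, f v w =
      ∫ w in Icc (-1) 1, ∫ v in Icc p q, f v w :=
    integral_integral_swap (Integrable.of_bound (measurable_indicator_add hK).aestronglyMeasurable
      C (Eventually.of_forall fun z => hfC z.1 z.2))
  rw [htranslate, hswap]
  congr 1 with w
  rw [← integral_indicator measurableSet_Icc, ← integral_indicator measurableSet_Icc]
  congr 1 with v
  simp only [indicator_apply, f, mem_slideInterval_iff]
  by_cases hv : v ∈ Icc p q <;> by_cases hvw : v + w ∈ Icc p q <;> simp [hv, hvw]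

theorem abs_setIntegral_setIntegral_le_of_slideInterval (hK : Measurable (Function.uncurry K))
    (hKC : ∀ u v, |K u v| ≤ C) (hpq : q - p ≤ 1) (hη : 0 ≤ η) (hη1 : η ≤ 1) {B : ℝ} (hB : 0 ≤ B)
    (hfar : ∀ w, η ≤ |w| → |∫ v in slideInterval p q w, K (v + w) v| ≤ B) :
    |∫ v in Icc p q, ∫ u in Icc p q, K u v| ≤ 2 * η * C + 2 * B := by
  have hC : 0 ≤ C := (abs_nonneg _).trans (hKC 0 0)
  have hlen : ∀ w, volume.real (slideInterval p q w) ≤ 1 := fun w => by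
    rw [Real.volume_real_Icc]
    exact max_le (by linarith [le_max_left p (p - w), min_le_left q (q - w)]) zero_le_one
  have hbound : ∀ w, ‖∫ v in slideInterval p q w, K (v + w) v‖ ≤
      (Icc (-η) η).indicator (fun _ => C) w + B := by
    intro w
    by_cases hw : w ∈ Icc (-η) η
    · rw [indicator_of_mem hw]
      have := norm_setIntegral_le_of_norm_le_const (μ := volume) (s := slideInterval p q w)
        (f := fun v => K (v + w) v) (C := C) measure_Icc_lt_top fun v _ => hKC _ _
      nlinarith [hlen w]
    · rw [indicator_of_notMem hw, zero_add]
      exact hfar w (not_lt.1 fun h => hw ⟨(abs_lt.1 h).1.le, (abs_lt.1 h).2.le⟩)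
  have hnear : Integrable ((Icc (-η) η).indicator fun _ : ℝ => C) (volume.restrict (Icc (-1) 1)) :=
    (integrable_const C).indicator measurableSet_Icc
  rw [setIntegral_setIntegral_eq_slideInterval hK hKC hpq]
  refine (norm_integral_le_of_norm_le (hnear.add (integrable_const B))
    (Eventually.of_forall hbound)).trans_eq ?_
  simp only [Pi.add_apply]
  rw [integral_add hnear (integrable_const B), integral_indicator measurableSet_Icc,
    Measure.restrict_restrict measurableSet_Icc,
    inter_eq_left.2 (Icc_subset_Icc (by linarith) hη1), setIntegral_const, setIntegral_const,
    Real.volume_real_Icc_of_le (by linarith), Real.volume_real_Icc_of_le (by norm_num),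
    smul_eq_mul, smul_eq_mul]
  ring

theorem abs_integral_arc_differences_sub_le (hφ₀ : IsConcaveArc p q L φ₀ φ₀')
    (hφ₁ : IsConcaveArc p q L φ₁ φ₁') (hψ : IsConcaveArc p q L ψ ψ')
    (h₀₁ : C1CloseOn φ₀ φ₀' φ₁ φ₁' β (Icc p q)) (h₀ : C1CloseOn φ₀ φ₀' ψ ψ' β (Icc p q))
    (h₁ : C1CloseOn φ₁ φ₁' ψ ψ' β (Icc p q)) (hpq : q - p ≤ 1) (hβ : 0 ≤ β) (hη : 0 < η)
    (hη1 : η ≤ 1) (hβη : 2 * β ≤ η) {g : ℝ → ℝ → ℝ} (hg : Measurable (Function.uncurry g))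
    (hgM : ∀ w r, |g w r| ≤ M) :
    |∫ v in Icc p q, ∫ u in Icc p q, g (u - v) (φ₀ u - ψ v) - g (u - v) (φ₁ u - ψ v)| ≤
      M * (4 * η + 2 * ((24 + 64 * L) * (β / η ^ 3))) := by
  have hM : 0 ≤ M := (abs_nonneg _).trans (hgM 0 0)
  have hmeas₀ := hφ₀.measurable
  have hmeas₁ := hφ₁.measurable
  have hmeasψ := hψ.measurable
  have hmeas : Measurable (Function.uncurry fun u v =>
      g (u - v) (φ₀ u - ψ v) - g (u - v) (φ₁ u - ψ v)) := by
    have hcomp : ∀ φ : ℝ → ℝ, Measurable φ →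
        Measurable fun z : ℝ × ℝ => Function.uncurry g (z.1 - z.2, φ z.1 - ψ z.2) :=
      fun φ hφ => by fun_prop
    exact (hcomp φ₀ hmeas₀).sub (hcomp φ₁ hmeas₁)
  refine (abs_setIntegral_setIntegral_le_of_slideInterval (C := 2 * M)
    (B := M * ((24 + 64 * L) * (β / η ^ 3))) hmeas (fun u v => ?_) hpq hη.le hη1 (by positivity)
    fun w hw => ?_).trans_eq (by ring)
  · exact (abs_sub _ _).trans
      (by linarith [hgM (u - v) (φ₀ u - ψ v), hgM (u - v) (φ₁ u - ψ v)])
  · simp only [add_sub_cancel_left]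
    exact abs_integral_slideGap_sub_le hφ₀ hφ₁ hψ h₀₁ h₀ h₁ hβ hη hη1 hβη hw hg.of_uncurry_left
      (hgM w)

end Arc

/-! ### Averages along nearby curves -/

section CurveAverage

/-- The cube `[-r, r]^N`. -/
abbrev centeredBox (N : ℕ) (r : ℝ) : Set (Fin N → ℝ) := Icc (fun _ => -r) (fun _ => r)

variable {N : ℕ} {M M' r R p q : ℝ} {F H D : (Fin N → ℝ) → ℝ} {γ γ₀ γ₁ : ℝ → Fin N → ℝ}

theorem mem_centeredBox_iff {x : Fin N → ℝ} : x ∈ centeredBox N r ↔ ∀ i, |x i| ≤ r := by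
  simp only [mem_Icc, Pi.le_def, abs_le, forall_and]

theorem mem_centeredBox_of_add_mem {x y : Fin N → ℝ} (hxy : x + y ∈ centeredBox N r)
    (hy : y ∈ centeredBox N R) : x ∈ centeredBox N (r + R) := by
  rw [mem_centeredBox_iff] at *
  intro i
  simpa using (abs_sub (x i + y i) (y i)).trans (add_le_add (hxy i) (hy i))

theorem volume_real_centeredBox (hr : 0 ≤ r) : volume.real (centeredBox N r) = (2 * r) ^ N := by
  rw [Measure.real, Real.volume_Icc_pi_toReal fun _ => by linarith]
  simp [two_mul]

/-- A measurable function bounded by `M` and vanishing outside the cube `[-r, r]^N`. -/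
structure IsBoundedInBox (F : (Fin N → ℝ) → ℝ) (M r : ℝ) : Prop where
  measurable : Measurable F
  abs_le : ∀ x, |F x| ≤ M
  eq_zero : ∀ x ∉ centeredBox N r, F x = 0

namespace IsBoundedInBox

theorem nonneg (hF : IsBoundedInBox F M r) : 0 ≤ M := (abs_nonneg _).trans (hF.abs_le 0)

theorem integrable (hF : IsBoundedInBox F M r) : Integrable F :=
  (Measure.integrableOn_of_bounded measure_Icc_lt_top.ne hF.measurable.aestronglyMeasurable
    (Eventually.of_forall hF.abs_le)).integrable_of_forall_notMem_eq_zero hF.eq_zero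

theorem abs_integral_le (hF : IsBoundedInBox F M r) (hr : 0 ≤ r) :
    |∫ x, F x| ≤ M * (2 * r) ^ N := by
  rw [← setIntegral_eq_integral_of_forall_compl_eq_zero hF.eq_zero,
    ← volume_real_centeredBox hr, ← Real.norm_eq_abs]
  exact norm_setIntegral_le_of_norm_le_const measure_Icc_lt_top fun x _ => hF.abs_le x

theorem mul_of_bounded (hH : IsBoundedInBox H M r) (hF : Measurable F)
    (hFM : ∀ x, |F x| ≤ M') : IsBoundedInBox (fun x => H x * F x) (M * M') r where
  measurable := hH.measurable.mul hF
  abs_le x := by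
    rw [abs_mul]
    exact mul_le_mul (hH.abs_le x) (hFM x) (abs_nonneg _) hH.nonneg
  eq_zero x hx := by rw [hH.eq_zero x hx, zero_mul]

theorem integrable_sq (hF : IsBoundedInBox F M r) : Integrable fun x => F x ^ 2 := by
  simpa only [sq] using (hF.mul_of_bounded hF.measurable hF.abs_le).integrable

theorem sub (hF : IsBoundedInBox F M r) (hH : IsBoundedInBox H M' r) :
    IsBoundedInBox (fun x => F x - H x) (M + M') r where
  measurable := hF.measurable.sub hH.measurable
  abs_le x := (abs_sub _ _).trans (add_le_add (hF.abs_le x) (hH.abs_le x))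
  eq_zero x hx := by rw [hF.eq_zero x hx, hH.eq_zero x hx, sub_zero]

end IsBoundedInBox

/-- The correlation `z ↦ ∫ H(x) F(x + z) dx`. -/
def correlation (H F : (Fin N → ℝ) → ℝ) (z : Fin N → ℝ) : ℝ := ∫ x, H x * F (x + z)

theorem correlation_neg (H F : (Fin N → ℝ) → ℝ) (z : Fin N → ℝ) :
    correlation H F (-z) = correlation F H z := by
  rw [correlation, ← integral_add_right_eq_self _ z]
  simp only [add_neg_cancel_right, mul_comm, correlation]

theorem correlation_comp_add_right (H F : (Fin N → ℝ) → ℝ) (a z : Fin N → ℝ) :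
    correlation H (fun x => F (x + a)) z = correlation H F (z + a) := by
  simp only [correlation, add_assoc]

theorem measurable_correlation (hH : Measurable H) (hF : Measurable F) :
    Measurable (correlation H F) := by
  have hmeas : Measurable (Function.uncurry fun z x => H x * F (x + z)) :=
    (hH.comp measurable_snd).mul (hF.comp (measurable_snd.add measurable_fst))
  exact hmeas.stronglyMeasurable.integral_prod_right.measurable

theorem IsBoundedInBox.abs_correlation_le (hH : IsBoundedInBox H M r) (hr : 0 ≤ r)
    (hF : Measurable F) (hFM : ∀ x, |F x| ≤ M') (z : Fin N → ℝ) :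
    |correlation H F z| ≤ M * M' * (2 * r) ^ N :=
  (hH.mul_of_bounded (hF.comp (measurable_add_const z)) fun x => hFM (x + z)).abs_integral_le hr

/-- The integral of `F` along the translate by `x` of the curve `γ` over `[p, q]`. -/
def curveAverage (p q : ℝ) (γ : ℝ → Fin N → ℝ) (F : (Fin N → ℝ) → ℝ) (x : Fin N → ℝ) : ℝ :=
  ∫ u in Icc p q, F (x + γ u)

theorem abs_curveAverage_le (hFM : ∀ x, |F x| ≤ M) (hpq : q - p ≤ 1) (x : Fin N → ℝ) :
    |curveAverage p q γ F x| ≤ M := by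
  have hM : 0 ≤ M := (abs_nonneg _).trans (hFM 0)
  have hlen : volume.real (Icc p q) ≤ 1 := by
    rw [Real.volume_real_Icc]
    exact max_le hpq zero_le_one
  rw [curveAverage, ← Real.norm_eq_abs]
  calc ‖∫ u in Icc p q, F (x + γ u)‖ ≤ M * volume.real (Icc p q) :=
        norm_setIntegral_le_of_norm_le_const measure_Icc_lt_top fun u _ => hFM _
    _ ≤ M := mul_le_of_le_one_right hM hlen

theorem measurable_curveAverage (hF : Measurable F) (hγ : Measurable γ) :
    Measurable (curveAverage p q γ F) := by
  have hmeas : Measurable (Function.uncurry fun x u => F (x + γ u)) :=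
    hF.comp (measurable_fst.add (hγ.comp measurable_snd))
  exact (hmeas.stronglyMeasurable.integral_prod_right
    (ν := volume.restrict (Icc p q))).measurable

theorem IsBoundedInBox.curveAverage (hF : IsBoundedInBox F M r) (hγ : Measurable γ)
    (hγR : ∀ u ∈ Icc p q, γ u ∈ centeredBox N R) (hpq : q - p ≤ 1) :
    IsBoundedInBox (curveAverage p q γ F) M (r + R) where
  measurable := measurable_curveAverage hF.measurable hγ
  abs_le := abs_curveAverage_le hF.abs_le hpq
  eq_zero _ hx := setIntegral_eq_zero_of_forall_eq_zero fun u hu =>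
    hF.eq_zero _ fun hmem => hx (mem_centeredBox_of_add_mem hmem (hγR u hu))

theorem integrableOn_comp_add_curve (hF : Measurable F) (hFM : ∀ x, |F x| ≤ M)
    (hγ : Measurable γ) (x : Fin N → ℝ) : IntegrableOn (fun u => F (x + γ u)) (Icc p q) :=
  Integrable.of_bound (hF.comp (hγ.const_add x)).aestronglyMeasurable M
    (Eventually.of_forall fun _ => hFM _)

theorem IsBoundedInBox.integrable_mul_comp_add_curve (hH : IsBoundedInBox H M r)
    (hF : Measurable F) (hFM : ∀ x, |F x| ≤ M') (hγ : Measurable γ) :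
    Integrable (Function.uncurry fun x u => H x * F (x + γ u))
      (volume.prod (volume.restrict (Icc p q))) :=
  (hH.integrable.comp_fst _).mul_bdd (c := M')
    (hF.comp (measurable_fst.add (hγ.comp measurable_snd))).aestronglyMeasurable
    (Eventually.of_forall fun _ => hFM _)

theorem IsBoundedInBox.integrableOn_correlation_comp (hH : IsBoundedInBox H M r)
    (hF : Measurable F) (hFM : ∀ x, |F x| ≤ M') (hγ : Measurable γ) :
    IntegrableOn (fun u => correlation H F (γ u)) (Icc p q) :=
  (hH.integrable_mul_comp_add_curve hF hFM hγ).integral_prod_right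

theorem IsBoundedInBox.setIntegral_correlation_comp (hH : IsBoundedInBox H M r)
    (hF : Measurable F) (hFM : ∀ x, |F x| ≤ M') (hγ : Measurable γ) :
    ∫ u in Icc p q, correlation H F (γ u) = ∫ x, H x * _root_.curveAverage p q γ F x := by
  simp only [correlation, _root_.curveAverage]
  rw [← integral_integral_swap (hH.integrable_mul_comp_add_curve hF hFM hγ)]
  simp only [integral_const_mul]

theorem integral_mul_curveAverage_eq_adjoint (hD : IsBoundedInBox D M r)
    (hF : IsBoundedInBox F M' R) (hγ : Measurable γ) :
    ∫ x, D x * curveAverage p q γ F x = ∫ x, F x * curveAverage p q (-γ) D x := by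
  rw [← hD.setIntegral_correlation_comp hF.measurable hF.abs_le hγ,
    ← hF.setIntegral_correlation_comp hD.measurable hD.abs_le hγ.neg]
  simp only [Pi.neg_apply, correlation_neg]

theorem abs_integral_mul_le_integral_sq {ω : ℝ} (hω : 0 < ω)
    (hH : Integrable fun x => H x ^ 2) (hD : Integrable fun x => D x ^ 2) :
    |∫ x, H x * D x| ≤ ω / 2 * (∫ x, H x ^ 2) + 1 / (2 * ω) * ∫ x, D x ^ 2 := by
  rw [← integral_const_mul, ← integral_const_mul,
    ← integral_add (hH.const_mul _) (hD.const_mul _), ← Real.norm_eq_abs]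
  refine norm_integral_le_of_norm_le ((hH.const_mul _).add (hD.const_mul _))
    (Eventually.of_forall fun x => ?_)
  have hsq : 0 ≤ (ω * |H x| - |D x|) ^ 2 / (2 * ω) := by positivity
  have hexpand : (ω * |H x| - |D x|) ^ 2 / (2 * ω) =
      ω / 2 * H x ^ 2 + 1 / (2 * ω) * D x ^ 2 - |H x| * |D x| := by
    rw [← sq_abs (H x), ← sq_abs (D x)]
    field_simp
    ring
  rw [norm_mul, Real.norm_eq_abs, Real.norm_eq_abs]
  linarith

/-- The graph of `φ` over a line, in the affine frame with origin `c` and axes `e₀`, `e₁`. -/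
def graphCurve (c e₀ e₁ : Fin N → ℝ) (φ : ℝ → ℝ) (u : ℝ) : Fin N → ℝ := c + u • e₀ + φ u • e₁

theorem measurable_graphCurve (c e₀ e₁ : Fin N → ℝ) {φ : ℝ → ℝ} (hφ : Measurable φ) :
    Measurable (graphCurve c e₀ e₁ φ) := by
  unfold graphCurve
  fun_prop

variable {L : ℝ≥0} {φ₀ φ₀' φ₁ φ₁' ψ ψ' : ℝ → ℝ} {β η ω : ℝ} {c e₀ e₁ : Fin N → ℝ}

/-- The difference of the averages of `F` along the graphs of `φ₀` and `φ₁`. -/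
def graphAverageSub (p q : ℝ) (c e₀ e₁ : Fin N → ℝ) (φ₀ φ₁ : ℝ → ℝ) (F : (Fin N → ℝ) → ℝ)
    (x : Fin N → ℝ) : ℝ :=
  curveAverage p q (graphCurve c e₀ e₁ φ₀) F x - curveAverage p q (graphCurve c e₀ e₁ φ₁) F x

theorem curveAverage_neg_graphAverageSub (hφ₀ : Measurable φ₀) (hφ₁ : Measurable φ₁)
    (hF : Measurable F) (hFM : ∀ x, |F x| ≤ M) (ψ : ℝ → ℝ) (x : Fin N → ℝ) :
    curveAverage p q (-graphCurve c e₀ e₁ ψ) (graphAverageSub p q c e₀ e₁ φ₀ φ₁ F) x =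
      ∫ v in Icc p q, ∫ u in Icc p q,
        F (x + ((u - v) • e₀ + (φ₀ u - ψ v) • e₁)) -
          F (x + ((u - v) • e₀ + (φ₁ u - ψ v) • e₁)) := by
  have htranslate : ∀ (φ : ℝ → ℝ) (u v : ℝ), x + (-graphCurve c e₀ e₁ ψ) v +
      graphCurve c e₀ e₁ φ u = x + ((u - v) • e₀ + (φ u - ψ v) • e₁) := by
    intro φ u v
    simp only [graphCurve, Pi.neg_apply]
    module
  simp only [curveAverage, graphAverageSub]
  refine integral_congr_ae (Eventually.of_forall fun v => ?_)
  dsimp only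
  rw [← integral_sub (integrableOn_comp_add_curve hF hFM (measurable_graphCurve _ _ _ hφ₀) _)
    (integrableOn_comp_add_curve hF hFM (measurable_graphCurve _ _ _ hφ₁) _)]
  simp only [htranslate]

theorem abs_curveAverage_neg_graphAverageSub_le (hφ₀ : IsConcaveArc p q L φ₀ φ₀')
    (hφ₁ : IsConcaveArc p q L φ₁ φ₁') (hψ : IsConcaveArc p q L ψ ψ')
    (h₀₁ : C1CloseOn φ₀ φ₀' φ₁ φ₁' β (Icc p q)) (h₀ : C1CloseOn φ₀ φ₀' ψ ψ' β (Icc p q))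
    (h₁ : C1CloseOn φ₁ φ₁' ψ ψ' β (Icc p q)) (hpq : q - p ≤ 1) (hβ : 0 ≤ β) (hη : 0 < η)
    (hη1 : η ≤ 1) (hβη : 2 * β ≤ η) (hF : Measurable F) (hFM : ∀ x, |F x| ≤ M)
    (x : Fin N → ℝ) :
    |curveAverage p q (-graphCurve c e₀ e₁ ψ) (graphAverageSub p q c e₀ e₁ φ₀ φ₁ F) x| ≤
      M * (4 * η + 2 * ((24 + 64 * L) * (β / η ^ 3))) := by
  rw [curveAverage_neg_graphAverageSub hφ₀.measurable hφ₁.measurable hF hFM]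
  refine abs_integral_arc_differences_sub_le (g := fun w s => F (x + (w • e₀ + s • e₁)))
    hφ₀ hφ₁ hψ h₀₁ h₀ h₁ hpq hβ hη hη1 hβη ?_ fun w s => hFM _
  simp only [Function.uncurry_def]
  fun_prop

theorem C1CloseOn.refl (hβ : 0 ≤ β) (φ φ' : ℝ → ℝ) (S : Set ℝ) : C1CloseOn φ φ' φ φ' β S := by
  intro v _
  simpa only [sub_self, abs_zero, and_self] using hβ

theorem C1CloseOn.symm {S : Set ℝ} (h : C1CloseOn φ₀ φ₀' φ₁ φ₁' β S) :
    C1CloseOn φ₁ φ₁' φ₀ φ₀' β S := by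
  intro v hv
  rw [abs_sub_comm, abs_sub_comm (φ₁' v)]
  exact h v hv

theorem isBoundedInBox_graphAverageSub (hφ₀ : Measurable φ₀) (hφ₁ : Measurable φ₁)
    (hγ₀ : ∀ u ∈ Icc p q, graphCurve c e₀ e₁ φ₀ u ∈ centeredBox N R)
    (hγ₁ : ∀ u ∈ Icc p q, graphCurve c e₀ e₁ φ₁ u ∈ centeredBox N R) (hpq : q - p ≤ 1)
    (hF : IsBoundedInBox F M r) :
    IsBoundedInBox (graphAverageSub p q c e₀ e₁ φ₀ φ₁ F) (M + M) (r + R) :=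
  (hF.curveAverage (measurable_graphCurve _ _ _ hφ₀) hγ₀ hpq).sub
    (hF.curveAverage (measurable_graphCurve _ _ _ hφ₁) hγ₁ hpq)

/- Moving the second average to the other side replaces the two curves by their differences
`γ_φ(u) - γ_ψ(v)`, which sweep out a plane with a density that depends little on `φ`. -/
theorem integral_graphAverageSub_sq_le (hφ₀ : IsConcaveArc p q L φ₀ φ₀')
    (hφ₁ : IsConcaveArc p q L φ₁ φ₁') (h₀₁ : C1CloseOn φ₀ φ₀' φ₁ φ₁' β (Icc p q))
    (hγ₀ : ∀ u ∈ Icc p q, graphCurve c e₀ e₁ φ₀ u ∈ centeredBox N R)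
    (hγ₁ : ∀ u ∈ Icc p q, graphCurve c e₀ e₁ φ₁ u ∈ centeredBox N R) (hpq : q - p ≤ 1)
    (hβ : 0 ≤ β) (hη : 0 < η) (hη1 : η ≤ 1) (hβη : 2 * β ≤ η) (hF : IsBoundedInBox F M r)
    (hr : 0 ≤ r) :
    ∫ x, graphAverageSub p q c e₀ e₁ φ₀ φ₁ F x ^ 2 ≤
      2 * (M * (M * (4 * η + 2 * ((24 + 64 * L) * (β / η ^ 3)))) * (2 * r) ^ N) := by
  have hD := isBoundedInBox_graphAverageSub hφ₀.measurable hφ₁.measurable hγ₀ hγ₁ hpq hF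
  set D := graphAverageSub p q c e₀ e₁ φ₀ φ₁ F
  have hmeas : ∀ φ : ℝ → ℝ, Measurable φ → Measurable (graphCurve c e₀ e₁ φ) :=
    fun φ => measurable_graphCurve c e₀ e₁
  have hint : ∀ φ : ℝ → ℝ, Measurable φ →
      Integrable fun x => D x * curveAverage p q (graphCurve c e₀ e₁ φ) F x := fun φ hφ =>
    (hD.mul_of_bounded (measurable_curveAverage hF.measurable (hmeas φ hφ))
      (abs_curveAverage_le hF.abs_le hpq)).integrable
  have hadjoint : ∀ ψ ψ' : ℝ → ℝ, IsConcaveArc p q L ψ ψ' →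
      C1CloseOn φ₀ φ₀' ψ ψ' β (Icc p q) → C1CloseOn φ₁ φ₁' ψ ψ' β (Icc p q) →
      |∫ x, D x * curveAverage p q (graphCurve c e₀ e₁ ψ) F x| ≤
        M * (M * (4 * η + 2 * ((24 + 64 * L) * (β / η ^ 3)))) * (2 * r) ^ N := by
    intro ψ ψ' hψ h₀ h₁
    rw [integral_mul_curveAverage_eq_adjoint hD hF (hmeas ψ hψ.measurable)]
    exact (hF.mul_of_bounded
      (measurable_curveAverage hD.measurable (hmeas ψ hψ.measurable).neg)
      (abs_curveAverage_neg_graphAverageSub_le hφ₀ hφ₁ hψ h₀₁ h₀ h₁ hpq hβ hη hη1 hβη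
        hF.measurable hF.abs_le)).abs_integral_le hr
  have hsplit : ∫ x, D x ^ 2 = (∫ x, D x * curveAverage p q (graphCurve c e₀ e₁ φ₀) F x) -
      ∫ x, D x * curveAverage p q (graphCurve c e₀ e₁ φ₁) F x := by
    rw [← integral_sub (hint φ₀ hφ₀.measurable) (hint φ₁ hφ₁.measurable)]
    simp only [← mul_sub, sq]
    rfl
  rw [hsplit]
  linarith [(abs_le.1 (hadjoint φ₀ φ₀' hφ₀ (.refl hβ _ _ _) h₀₁.symm)).2,
    (abs_le.1 (hadjoint φ₁ φ₁' hφ₁ h₀₁ (.refl hβ _ _ _))).1]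

theorem abs_setIntegral_correlation_graphCurve_sub_le (hφ₀ : IsConcaveArc p q L φ₀ φ₀')
    (hφ₁ : IsConcaveArc p q L φ₁ φ₁') (h₀₁ : C1CloseOn φ₀ φ₀' φ₁ φ₁' (ω ^ 8) (Icc p q))
    (hγ₀ : ∀ u ∈ Icc p q, graphCurve c e₀ e₁ φ₀ u ∈ centeredBox N R)
    (hγ₁ : ∀ u ∈ Icc p q, graphCurve c e₀ e₁ φ₁ u ∈ centeredBox N R) (hpq : q - p ≤ 1)
    (hω : 0 < ω) (hω2 : ω ≤ 1 / 2) (hH : IsBoundedInBox H M r) (hF : IsBoundedInBox F M r)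
    (hr : 0 ≤ r) :
    |∫ u in Icc p q, correlation H F (graphCurve c e₀ e₁ φ₀ u) -
        correlation H F (graphCurve c e₀ e₁ φ₁ u)| ≤
      (53 + 128 * L) * (2 * r) ^ N * ω * M ^ 2 := by
  have hD := isBoundedInBox_graphAverageSub hφ₀.measurable hφ₁.measurable hγ₀ hγ₁ hpq hF
  have hm₀ := measurable_graphCurve c e₀ e₁ hφ₀.measurable
  have hm₁ := measurable_graphCurve c e₀ e₁ hφ₁.measurable
  have hFm := hF.measurable
  have hω6 : 2 * ω ^ 8 ≤ ω ^ 2 := by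
    nlinarith [pow_pos hω 2, pow_le_pow_left₀ hω.le hω2 6]
  have hDsq := integral_graphAverageSub_sq_le hφ₀ hφ₁ h₀₁ hγ₀ hγ₁ hpq (by positivity)
    (pow_pos hω 2) (by nlinarith) hω6 hF hr
  have hHsq : ∫ x, H x ^ 2 ≤ M * M * (2 * r) ^ N := by
    simp only [sq]
    exact (le_abs_self _).trans
      ((hH.mul_of_bounded hH.measurable hH.abs_le).abs_integral_le hr)
  have hfubini : ∫ u in Icc p q, correlation H F (graphCurve c e₀ e₁ φ₀ u) -
      correlation H F (graphCurve c e₀ e₁ φ₁ u) =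
      ∫ x, H x * graphAverageSub p q c e₀ e₁ φ₀ φ₁ F x := by
    rw [integral_sub (hH.integrableOn_correlation_comp hFm hF.abs_le hm₀)
        (hH.integrableOn_correlation_comp hFm hF.abs_le hm₁),
      hH.setIntegral_correlation_comp hFm hF.abs_le hm₀,
      hH.setIntegral_correlation_comp hFm hF.abs_le hm₁, ← integral_sub]
    · simp only [← mul_sub, graphAverageSub]
    all_goals exact (hH.mul_of_bounded (measurable_curveAverage hFm ‹_›)
      (abs_curveAverage_le hF.abs_le hpq)).integrable
  rw [hfubini]
  calc |∫ x, H x * graphAverageSub p q c e₀ e₁ φ₀ φ₁ F x|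
      ≤ ω / 2 * (∫ x, H x ^ 2) +
          1 / (2 * ω) * ∫ x, graphAverageSub p q c e₀ e₁ φ₀ φ₁ F x ^ 2 :=
        abs_integral_mul_le_integral_sq hω hH.integrable_sq hD.integrable_sq
    _ ≤ ω / 2 * (M * M * (2 * r) ^ N) + 1 / (2 * ω) * (2 * (M * (M * (4 * ω ^ 2 +
          2 * ((24 + 64 * L) * (ω ^ 8 / (ω ^ 2) ^ 3)))) * (2 * r) ^ N)) := by gcongr
    _ = (1 / 2 + (52 + 128 * L)) * (2 * r) ^ N * ω * M ^ 2 := by field_simp; ring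
    _ ≤ (53 + 128 * L) * (2 * r) ^ N * ω * M ^ 2 := by
        have hhalf : 1 / 2 + (52 + 128 * (L : ℝ)) ≤ 53 + 128 * L := by linarith
        gcongr

end CurveAverage

/-! ### Arcs of circles -/

section CircleArc

variable {ρ ρ₀ ρ₁ s s₀ s₁ c c₀ c₁ u p q α : ℝ}

/-- The upper half of the circle with centre `(s, c)` and squared radius `ρ`, as a graph. -/
def circleArc (ρ s c u : ℝ) : ℝ := √(ρ - (u - s) ^ 2) + c

/-- The slope of the upper half of a circle with squared radius `ρ` and centre above `s`. -/
def circleSlope (ρ s u : ℝ) : ℝ := -((u - s) / √(ρ - (u - s) ^ 2))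

theorem hasDerivAt_sqrt_sub_sq (h : (u - s) ^ 2 < ρ) :
    HasDerivAt (fun u => √(ρ - (u - s) ^ 2)) (circleSlope ρ s u) u := by
  have hpos : 0 < √(ρ - (u - s) ^ 2) := Real.sqrt_pos.2 (sub_pos.2 h)
  refine ((((hasDerivAt_id' u).sub_const s).fun_pow 2).const_sub ρ).sqrt (sub_pos.2 h).ne'
    |>.congr_deriv ?_
  rw [circleSlope]
  field_simp
  simp [mul_comm]

theorem hasDerivAt_circleArc (h : (u - s) ^ 2 < ρ) (c : ℝ) :
    HasDerivAt (circleArc ρ s c) (circleSlope ρ s u) u :=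
  (hasDerivAt_sqrt_sub_sq h).add_const c

theorem hasDerivAt_circleSlope (h : (u - s) ^ 2 < ρ) :
    HasDerivAt (circleSlope ρ s) (-(ρ / √(ρ - (u - s) ^ 2) ^ 3)) u := by
  have hpos : 0 < √(ρ - (u - s) ^ 2) := Real.sqrt_pos.2 (sub_pos.2 h)
  have hsq : ρ = √(ρ - (u - s) ^ 2) ^ 2 + (u - s) ^ 2 := by
    rw [Real.sq_sqrt (sub_pos.2 h).le]
    ring
  refine (((hasDerivAt_id' u).sub_const s).fun_div (hasDerivAt_sqrt_sub_sq h) hpos.ne').fun_neg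
    |>.congr_deriv ?_
  rw [circleSlope]
  generalize √(ρ - (u - s) ^ 2) = y at hpos hsq ⊢
  rw [hsq]
  field_simp
  ring

theorem one_div_sixtyFour_le_sub_sq (hρ : 1 / 32 ≤ ρ) (hu : |u - s| ≤ 1 / 8) :
    1 / 64 ≤ ρ - (u - s) ^ 2 := by
  have := sq_le_sq.2 (hu.trans (le_abs_self (1 / 8)))
  linarith

theorem sqrt_sub_sq_mem_Icc (hρ : ρ ∈ Icc (1 / 32) (1 / 4)) (hu : |u - s| ≤ 1 / 8) :
    √(ρ - (u - s) ^ 2) ∈ Icc (1 / 8) (1 / 2) := by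
  constructor
  · exact Real.le_sqrt_of_sq_le (by linarith [one_div_sixtyFour_le_sub_sq hρ.1 hu])
  · exact Real.sqrt_le_iff.2 ⟨by norm_num, by nlinarith [hρ.2, sq_nonneg (u - s)]⟩

theorem div_sqrt_sub_sq_pow_mem_Icc (hρ : ρ ∈ Icc (1 / 32) (1 / 4)) (hu : |u - s| ≤ 1 / 8) :
    ρ / √(ρ - (u - s) ^ 2) ^ 3 ∈ Icc 1 128 := by
  obtain ⟨hlow, hhigh⟩ := sqrt_sub_sq_mem_Icc hρ hu
  have hsq : √(ρ - (u - s) ^ 2) ^ 2 = ρ - (u - s) ^ 2 :=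
    Real.sq_sqrt (by linarith [one_div_sixtyFour_le_sub_sq hρ.1 hu])
  set y := √(ρ - (u - s) ^ 2)
  have hy3 : 0 < y ^ 3 := by positivity
  constructor
  · rw [le_div_iff₀ hy3]
    nlinarith [sq_nonneg (u - s)]
  · rw [div_le_iff₀ hy3]
    have : (1 / 8) ^ 3 ≤ y ^ 3 := pow_le_pow_left₀ (by norm_num) hlow 3
    linarith [hρ.2]

theorem isConcaveArc_circleArc (hρ : ρ ∈ Icc (1 / 32) (1 / 4))
    (hs : ∀ u ∈ Icc p q, |u - s| ≤ 1 / 8) (hc : |c| ≤ 1 / 2) :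
    IsConcaveArc p q 128 (circleArc ρ s c) (circleSlope ρ s) := by
  have hlt : ∀ u ∈ Icc p q, (u - s) ^ 2 < ρ := fun u hu => by
    linarith [one_div_sixtyFour_le_sub_sq hρ.1 (hs u hu)]
  have hslope : ∀ u ∈ Icc p q, HasDerivAt (circleSlope ρ s) _ u :=
    fun u hu => hasDerivAt_circleSlope (hlt u hu)
  refine ⟨by unfold circleArc; fun_prop, fun u hu => hasDerivAt_circleArc (hlt u hu) c, ?_, ?_, ?_⟩
  · intro u hu v hv huv
    have := (convex_Icc p q).image_sub_le_mul_sub_of_deriv_le (C := -1)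
      (fun x hx => (hslope x hx).continuousAt.continuousWithinAt)
      (fun x hx => (hslope x (interior_subset hx)).differentiableAt.differentiableWithinAt)
      (fun x hx => ?_) u hu v hv huv
    · linarith
    · rw [(hslope x (interior_subset hx)).deriv]
      exact neg_le_neg (div_sqrt_sub_sq_pow_mem_Icc hρ (hs x (interior_subset hx))).1
  · refine (convex_Icc p q).lipschitzOnWith_of_nnnorm_hasDerivWithin_le
      (fun x hx => (hslope x hx).hasDerivWithinAt) fun x hx => ?_
    have hmem := div_sqrt_sub_sq_pow_mem_Icc hρ (hs x hx)
    rw [← NNReal.coe_le_coe, coe_nnnorm, norm_neg, Real.norm_of_nonneg (by linarith [hmem.1])]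
    exact hmem.2
  · intro u hu
    have hmem := sqrt_sub_sq_mem_Icc hρ (hs u hu)
    rw [circleArc, abs_le]
    constructor <;> linarith [hmem.1, hmem.2, (abs_le.1 hc).1, (abs_le.1 hc).2]

theorem abs_sub_le_of_abs_sq_sub_sq_le {x y : ℝ} (hx : 1 / 8 ≤ x) (hy : 1 / 8 ≤ y)
    (h : |x ^ 2 - y ^ 2| ≤ α / 4) : |x - y| ≤ α := by
  rw [sq_sub_sq, abs_mul, abs_of_pos (by linarith)] at h
  nlinarith [abs_nonneg (x - y)]

theorem abs_div_sub_div_le {x x' y y' : ℝ} (hy : 1 / 8 ≤ y) (hy' : 1 / 8 ≤ y')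
    (hx' : |x'| ≤ 1 / 8) (hx : |x - x'| ≤ α) (hyy : |y - y'| ≤ α) :
    |x / y - x' / y'| ≤ 16 * α := by
  have hsplit : x / y - x' / y' = (x - x') / y + x' * ((y' - y) / (y * y')) := by
    have : y ≠ 0 := by linarith
    have : y' ≠ 0 := by linarith
    field_simp
    ring
  have hfirst : |(x - x') / y| ≤ 8 * α := by
    rw [abs_div, abs_of_pos (by linarith : 0 < y), div_le_iff₀ (by linarith)]
    nlinarith [(abs_nonneg _).trans hx]
  have hsecond : |(y' - y) / (y * y')| ≤ 64 * α := by
    have hyy64 : 1 / 64 ≤ y * y' := by nlinarith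
    rw [abs_div, abs_of_pos (by linarith : 0 < y * y'), div_le_iff₀ (by linarith), abs_sub_comm]
    nlinarith [(abs_nonneg _).trans hx]
  rw [hsplit]
  calc |(x - x') / y + x' * ((y' - y) / (y * y'))|
      ≤ |(x - x') / y| + |x'| * |(y' - y) / (y * y')| := by rw [← abs_mul]; exact abs_add_le _ _
    _ ≤ 8 * α + 1 / 8 * (64 * α) := by gcongr
    _ = 16 * α := by ring

theorem c1CloseOn_circleArc (hρ₀ : ρ₀ ∈ Icc (1 / 32) (1 / 4)) (hρ₁ : ρ₁ ∈ Icc (1 / 32) (1 / 4))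
    (hs₀ : ∀ u ∈ Icc p q, |u - s₀| ≤ 1 / 8) (hs₁ : ∀ u ∈ Icc p q, |u - s₁| ≤ 1 / 8)
    (hs : |s₀ - s₁| ≤ α) (hc : |c₀ - c₁| ≤ α)
    (hheight : ∀ u ∈ Icc p q, |ρ₀ - (u - s₀) ^ 2 - (ρ₁ - (u - s₁) ^ 2)| ≤ α / 4) :
    C1CloseOn (circleArc ρ₀ s₀ c₀) (circleSlope ρ₀ s₀) (circleArc ρ₁ s₁ c₁) (circleSlope ρ₁ s₁)
      (16 * α) (Icc p q) := by
  intro u hu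
  have hlow₀ := (sqrt_sub_sq_mem_Icc hρ₀ (hs₀ u hu)).1
  have hlow₁ := (sqrt_sub_sq_mem_Icc hρ₁ (hs₁ u hu)).1
  have hsqrt : |√(ρ₀ - (u - s₀) ^ 2) - √(ρ₁ - (u - s₁) ^ 2)| ≤ α := by
    refine abs_sub_le_of_abs_sq_sub_sq_le hlow₀ hlow₁ ?_
    rw [Real.sq_sqrt (by linarith [one_div_sixtyFour_le_sub_sq hρ₀.1 (hs₀ u hu)]),
      Real.sq_sqrt (by linarith [one_div_sixtyFour_le_sub_sq hρ₁.1 (hs₁ u hu)])]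
    exact hheight u hu
  constructor
  · rw [circleArc, circleArc, add_sub_add_comm]
    linarith [abs_add_le (√(ρ₀ - (u - s₀) ^ 2) - √(ρ₁ - (u - s₁) ^ 2)) (c₀ - c₁),
      (abs_nonneg _).trans hc]
  · rw [circleSlope, circleSlope, neg_sub_neg, abs_sub_comm]
    refine abs_div_sub_div_le hlow₀ hlow₁ (hs₁ u hu) ?_ hsqrt
    rwa [sub_sub_sub_cancel_left, abs_sub_comm]

end CircleArc

/-! ### Spherical caps and their correlation form -/

section SphericalCap

variable {n : ℕ} {r s t α ω M : ℝ} {H F : (Fin (n + 2) → ℝ) → ℝ}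

/-- The side of the parameter cube of the spherical caps. The value is chosen so that the sum of
the `n + 1` coordinates of a parameter is at most `1 / 8`. -/
def capSide (n : ℕ) : ℝ := 1 / (8 * (n + 1))

theorem capSide_pos (n : ℕ) : 0 < capSide n := by
  unfold capSide
  positivity

theorem capSide_mul (n : ℕ) : capSide n * (n + 1) = 1 / 8 := by
  unfold capSide
  field_simp

theorem capSide_le (n : ℕ) : capSide n ≤ 1 / 8 := by
  rw [← capSide_mul n]
  exact le_mul_of_one_le_right (capSide_pos n).le (by simp)

/-- The cube `[r, s]ⁿ⁺¹` of parameters; the first coordinate is split off because the estimates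
integrate over it first. -/
def paramBox (n : ℕ) (r s : ℝ) : Set (ℝ × (Fin n → ℝ)) :=
  Icc r s ×ˢ Icc (fun _ => r) (fun _ => s)

theorem mem_paramBox_iff {w : ℝ × (Fin n → ℝ)} :
    w ∈ paramBox n r s ↔ w.1 ∈ Icc r s ∧ ∀ i, w.2 i ∈ Icc r s := by
  simp only [paramBox, mem_prod, mem_Icc, Pi.le_def, ← forall_and]

theorem measurableSet_paramBox : MeasurableSet (paramBox n r s) :=
  measurableSet_Icc.prod measurableSet_Icc

theorem volume_paramBox_ne_top : volume (paramBox n r s) ≠ ∞ :=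
  (isCompact_Icc.prod isCompact_Icc).measure_lt_top.ne

theorem volume_real_paramBox (h : r ≤ s) :
    volume.real (paramBox n r s) = (s - r) ^ (n + 1) := by
  rw [Measure.real, paramBox, Measure.volume_eq_prod, Measure.prod_prod, Real.volume_Icc,
    Real.volume_Icc_pi]
  simp [pow_succ', sub_nonneg.2 h]

theorem restrict_paramBox :
    volume.restrict (paramBox n r s) = (volume.restrict (Icc r s)).prod
      ((volume : Measure (Fin n → ℝ)).restrict (Icc (fun _ => r) (fun _ => s))) := by
  rw [Measure.prod_restrict, ← Measure.volume_eq_prod]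
  rfl

/-- Parametrization of a piece of the sphere of radius `t` about the origin: the coordinate with
index `1` is a function of the others. -/
def capPoint (t : ℝ) (w : ℝ × (Fin n → ℝ)) : Fin (n + 2) → ℝ :=
  Matrix.vecCons w.1 (Matrix.vecCons (√(t ^ 2 - ∑ i, w.2 i ^ 2 - w.1 ^ 2)) w.2)

/-- The coordinates of a vector other than the one with index `1`. -/
def tangentPart (a : Fin (n + 2) → ℝ) : ℝ × (Fin n → ℝ) := (a 0, fun i => a i.succ.succ)

/-- The cap `capPoint` translated by `a`, parametrized so that the parameter of a point consists
again of its coordinates other than the one with index `1`. -/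
def translatedCap (t : ℝ) (a : Fin (n + 2) → ℝ) (w : ℝ × (Fin n → ℝ)) : Fin (n + 2) → ℝ :=
  capPoint t (w - tangentPart a) + a

theorem measurable_capPoint : Measurable (capPoint (n := n) t) := by
  refine measurable_pi_iff.2 (Fin.cases ?_ (Fin.cases ?_ fun i => ?_)) <;>
    simp only [capPoint, Matrix.cons_val_zero, Matrix.cons_val_succ] <;> fun_prop

theorem measurable_translatedCap (a : Fin (n + 2) → ℝ) : Measurable (translatedCap t a) :=
  (measurable_capPoint.comp (measurable_id.sub_const _)).add_const a

/-- The squared radius of the circle cut out of the sphere of radius `t` about `a` by fixing the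
coordinates with index at least `2` to be `c`. -/
def sliceRadiusSq (t : ℝ) (a : Fin (n + 2) → ℝ) (c : Fin n → ℝ) : ℝ :=
  t ^ 2 - ∑ i, (c i - a i.succ.succ) ^ 2

theorem translatedCap_eq_graphCurve (a : Fin (n + 2) → ℝ) (u : ℝ) (c : Fin n → ℝ) :
    translatedCap t a (u, c) =
      graphCurve (Matrix.vecCons 0 (Matrix.vecCons 0 c)) (Pi.single 0 1) (Pi.single 1 1)
        (circleArc (sliceRadiusSq t a c) (a 0) (a 1)) u := by
  refine funext (Fin.cases ?_ (Fin.cases ?_ fun i => ?_)) <;>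
    simp [translatedCap, capPoint, tangentPart, graphCurve, circleArc, sliceRadiusSq,
      Matrix.vecHead, Matrix.vecTail, Fin.ext_iff]

theorem sum_sq_le_of_mem_Icc_capSide {c : Fin n → ℝ} (hc : ∀ i, c i ∈ Icc 0 (capSide n)) :
    ∑ i, c i ^ 2 ≤ 1 / 64 :=
  calc ∑ i, c i ^ 2
      ≤ ∑ _i : Fin n, capSide n ^ 2 :=
        Finset.sum_le_sum fun i _ => pow_le_pow_left₀ (hc i).1 (hc i).2 2
    _ = capSide n * (capSide n * n) := by
        rw [Finset.sum_const, Finset.card_univ, Fintype.card_fin, nsmul_eq_mul]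
        ring
    _ ≤ 1 / 8 * (1 / 8) := by
        have := capSide_pos n
        have := capSide_mul n
        gcongr
        · exact capSide_le n
        · linarith
    _ = 1 / 64 := by norm_num

theorem sliceRadiusSq_mem_Icc (ht : t ∈ Icc (1 / 4) (1 / 2)) {a : Fin (n + 2) → ℝ} {c : Fin n → ℝ}
    (hc : ∀ i, c i - a i.succ.succ ∈ Icc 0 (capSide n)) :
    sliceRadiusSq t a c ∈ Icc (1 / 32) (1 / 4) := by
  have hle := sum_sq_le_of_mem_Icc_capSide hc
  have hnonneg : 0 ≤ ∑ i, (c i - a i.succ.succ) ^ 2 := Finset.sum_nonneg fun i _ => sq_nonneg _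
  unfold sliceRadiusSq
  constructor <;> nlinarith [ht.1, ht.2]

theorem abs_sq_sub_sub_sq_le {τ x b : ℝ} (hx : x ∈ Icc 0 τ) (hxb : x - b ∈ Icc 0 τ) (hb : |b| ≤ α) :
    |x ^ 2 - (x - b) ^ 2| ≤ 2 * τ * α := by
  have hsum : |x + (x - b)| ≤ 2 * τ := abs_le.2 ⟨by linarith [hx.1, hxb.1, hx.2], by
    linarith [hx.2, hxb.2]⟩
  calc |x ^ 2 - (x - b) ^ 2| = |x + (x - b)| * |b| := by rw [← abs_mul]; ring_nf
    _ ≤ 2 * τ * α := mul_le_mul hsum hb (abs_nonneg _) ((abs_nonneg _).trans hsum)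

theorem sub_mem_Icc_of_abs_le {τ x b : ℝ} (hx : x ∈ Icc α (τ - α)) (hb : |b| ≤ α) :
    x - b ∈ Icc 0 τ := by
  have := abs_le.1 hb
  constructor <;> linarith [hx.1, hx.2]

theorem abs_sub_le_of_mem_Icc {x b : ℝ} (hx : x ∈ Icc α (capSide n - α)) (hb : |b| ≤ α) :
    |x - b| ≤ 1 / 8 := by
  obtain ⟨h₀, h₁⟩ := sub_mem_Icc_of_abs_le hx hb
  exact abs_le.2 ⟨by linarith, h₁.trans (capSide_le n)⟩

/-- The defining property of `capSide` makes the `n + 1` coordinates contribute at most `α / 4`. -/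
theorem abs_height_sub_le {a : Fin (n + 2) → ℝ} (ha : ∀ i, |a i| ≤ α) {w : ℝ × (Fin n → ℝ)}
    (hw : w ∈ paramBox n α (capSide n - α)) :
    |sliceRadiusSq t 0 w.2 - (w.1 - 0) ^ 2 - (sliceRadiusSq t a w.2 - (w.1 - a 0) ^ 2)| ≤
      α / 4 := by
  obtain ⟨hu, hc⟩ := mem_paramBox_iff.1 hw
  have hα : |(0 : ℝ)| ≤ α := abs_zero.trans_le ((abs_nonneg _).trans (ha 0))
  have hterm : ∀ {x : ℝ} (i), x ∈ Icc α (capSide n - α) →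
      |x ^ 2 - (x - a i) ^ 2| ≤ 2 * capSide n * α := fun i hx =>
    abs_sq_sub_sub_sq_le (by simpa using sub_mem_Icc_of_abs_le hx hα)
      (sub_mem_Icc_of_abs_le hx (ha i)) (ha i)
  have hrest : |∑ i, (w.2 i ^ 2 - (w.2 i - a i.succ.succ) ^ 2)| ≤ n * (2 * capSide n * α) := by
    refine (Finset.abs_sum_le_sum_abs _ _).trans
      ((Finset.sum_le_card_nsmul _ _ _ fun i _ => hterm i.succ.succ (hc i)).trans_eq ?_)
    simp
  calc |sliceRadiusSq t 0 w.2 - (w.1 - 0) ^ 2 - (sliceRadiusSq t a w.2 - (w.1 - a 0) ^ 2)|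
      = |(w.1 ^ 2 - (w.1 - a 0) ^ 2) + ∑ i, (w.2 i ^ 2 - (w.2 i - a i.succ.succ) ^ 2)| := by
        rw [← abs_neg, Finset.sum_sub_distrib]
        simp only [sliceRadiusSq, Pi.zero_apply, sub_zero]
        ring_nf
    _ ≤ 2 * capSide n * α + n * (2 * capSide n * α) :=
        (abs_add_le _ _).trans (add_le_add (hterm 0 hu) hrest)
    _ = α / 4 := by linear_combination 2 * α * capSide_mul n

theorem isConcaveArc_slice (ht : t ∈ Icc (1 / 4) (1 / 2)) (hα : α ≤ 1 / 2) {a : Fin (n + 2) → ℝ}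
    (ha : ∀ i, |a i| ≤ α) {c : Fin n → ℝ} (hc : ∀ i, c i ∈ Icc α (capSide n - α)) :
    IsConcaveArc α (capSide n - α) 128 (circleArc (sliceRadiusSq t a c) (a 0) (a 1))
      (circleSlope (sliceRadiusSq t a c) (a 0)) :=
  isConcaveArc_circleArc
    (sliceRadiusSq_mem_Icc ht fun i => sub_mem_Icc_of_abs_le (hc i) (ha i.succ.succ))
    (fun _ hu => abs_sub_le_of_mem_Icc hu (ha 0)) ((ha 1).trans hα)

theorem translatedCap_mem_centeredBox (ht : t ∈ Icc (1 / 4) (1 / 2)) (hα : α ≤ 1 / 2)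
    {a : Fin (n + 2) → ℝ} (ha : ∀ i, |a i| ≤ α) {w : ℝ × (Fin n → ℝ)}
    (hw : w ∈ paramBox n α (capSide n - α)) :
    translatedCap t a w ∈ centeredBox (n + 2) 1 := by
  obtain ⟨hu, hc⟩ := mem_paramBox_iff.1 hw
  have hα₀ : 0 ≤ α := (abs_nonneg _).trans (ha 0)
  have habs : ∀ {x}, x ∈ Icc α (capSide n - α) → |x| ≤ 1 := fun hx =>
    abs_le.2 ⟨by linarith [hx.1], by linarith [hx.2, capSide_le n]⟩
  refine mem_centeredBox_iff.2 (Fin.cases ?_ (Fin.cases ?_ fun i => ?_))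
  · simpa [translatedCap, capPoint, tangentPart] using habs hu
  · exact (isConcaveArc_slice ht hα ha hc).abs_le_one w.1 hu
  · simpa [translatedCap, capPoint, tangentPart] using habs (hc i)

theorem abs_setIntegral_correlation_slice_sub_le (ht : t ∈ Icc (1 / 4) (1 / 2)) (hω : 0 < ω)
    (hω₂ : ω ≤ 1 / 2) {a : Fin (n + 2) → ℝ} (ha : ∀ i, |a i| ≤ ω ^ 8 / 16)
    (hH : IsBoundedInBox H M 2) (hF : IsBoundedInBox F M 2) {c : Fin n → ℝ}
    (hc : ∀ i, c i ∈ Icc (ω ^ 8 / 16) (capSide n - ω ^ 8 / 16)) :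
    |∫ u in Icc (ω ^ 8 / 16) (capSide n - ω ^ 8 / 16),
        correlation H F (translatedCap t a (u, c)) - correlation H F (translatedCap t 0 (u, c))| ≤
      (53 + 128 * 128) * 4 ^ (n + 2) * ω * M ^ 2 := by
  have hα₀ : 0 < ω ^ 8 / 16 := by positivity
  have hα : ω ^ 8 / 16 ≤ 1 / 2 := by linarith [pow_le_one₀ (n := 8) hω.le (by linarith)]
  have h₀ : ∀ i, |(0 : Fin (n + 2) → ℝ) i| ≤ ω ^ 8 / 16 := fun i => by simpa using hα₀.le
  have hrad : ∀ {b : Fin (n + 2) → ℝ}, (∀ i, |b i| ≤ ω ^ 8 / 16) →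
      sliceRadiusSq t b c ∈ Icc (1 / 32) (1 / 4) := fun hb =>
    sliceRadiusSq_mem_Icc ht fun i => sub_mem_Icc_of_abs_le (hc i) (hb i.succ.succ)
  have hclose : C1CloseOn
      (circleArc (sliceRadiusSq t 0 c) 0 0) (circleSlope (sliceRadiusSq t 0 c) 0)
      (circleArc (sliceRadiusSq t a c) (a 0) (a 1)) (circleSlope (sliceRadiusSq t a c) (a 0))
      (ω ^ 8) (Icc (ω ^ 8 / 16) (capSide n - ω ^ 8 / 16)) := by
    have := c1CloseOn_circleArc (hrad h₀) (hrad ha)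
      (fun _ hu => abs_sub_le_of_mem_Icc hu (h₀ 0)) (fun _ hu => abs_sub_le_of_mem_Icc hu (ha 0))
      (s₀ := 0) (c₀ := 0) (c₁ := a 1) (by simpa using ha 0) (by simpa using ha 1)
      fun u hu => abs_height_sub_le (w := (u, c)) ha (mem_paramBox_iff.2 ⟨hu, hc⟩)
    rwa [mul_div_cancel₀ _ (by norm_num)] at this
  have hmem : ∀ {b : Fin (n + 2) → ℝ}, (∀ i, |b i| ≤ ω ^ 8 / 16) →
      ∀ u ∈ Icc (ω ^ 8 / 16) (capSide n - ω ^ 8 / 16),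
        translatedCap t b (u, c) ∈ centeredBox (n + 2) 1 := fun hb u hu =>
    translatedCap_mem_centeredBox ht hα hb (mem_paramBox_iff.2 ⟨hu, hc⟩)
  simp only [translatedCap_eq_graphCurve] at hmem ⊢
  have := abs_setIntegral_correlation_graphCurve_sub_le (isConcaveArc_slice ht hα ha hc)
    (isConcaveArc_slice ht hα h₀ hc) hclose.symm (hmem ha) (hmem h₀)
    (by linarith [capSide_le n]) hω hω₂ hH hF zero_le_two
  norm_num at this ⊢
  exact this

/-- The correlation of `H` and `F` averaged over a spherical cap of radius `t`. It measures how
often points weighted by `H` and `F` differ by a vector of length `t`. -/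
def sphereForm (t : ℝ) (H F : (Fin (n + 2) → ℝ) → ℝ) : ℝ :=
  ∫ w in paramBox n 0 (capSide n), correlation H F (capPoint t w)

instance volume_isAddRightInvariant_params :
    (volume : Measure (ℝ × (Fin n → ℝ))).IsAddRightInvariant := by
  rw [Measure.volume_eq_prod]
  infer_instance

theorem sphereForm_comp_add_right (a : Fin (n + 2) → ℝ) :
    sphereForm t H (fun x => F (x + a)) =
      ∫ w in (· - tangentPart a) ⁻¹' paramBox n 0 (capSide n),
        correlation H F (translatedCap t a w) := by
  simp only [sphereForm, translatedCap, correlation_comp_add_right]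
  exact ((measurePreserving_sub_right volume (tangentPart a)).setIntegral_preimage_emb
    (MeasurableEquiv.subRight (tangentPart a)).measurableEmbedding
    (fun w => correlation H F (capPoint t w + a)) _).symm

theorem abs_setIntegral_sub_le_of_subset {X : Type*} [MeasurableSpace X] {μ : Measure X}
    {S T : Set X} {G : X → ℝ} {C : ℝ} (hT : MeasurableSet T) (hTS : T ⊆ S) (hS : μ S ≠ ∞)
    (hG : AEStronglyMeasurable G μ) (hC : ∀ x, |G x| ≤ C) :
    |(∫ x in S, G x ∂μ) - ∫ x in T, G x ∂μ| ≤ C * (μ.real S - μ.real T) := by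
  have hint : IntegrableOn G S μ :=
    Measure.integrableOn_of_bounded hS hG (Eventually.of_forall hC)
  rw [← setIntegral_sdiff hT hint hTS, ← measureReal_sdiff hTS hT hS, ← Real.norm_eq_abs]
  exact norm_setIntegral_le_of_norm_le_const
    ((measure_mono sdiff_subset).trans_lt hS.lt_top) fun x _ => hC x

theorem pow_sub_pow_le_mul {x y : ℝ} (hx : 0 ≤ x) (hxy : x ≤ y) (hy : y ≤ 1) (m : ℕ) :
    y ^ m - x ^ m ≤ m * (y - x) :=
  calc y ^ m - x ^ m ≤ |y - x| * m * max |y| |x| ^ (m - 1) :=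
        (le_abs_self _).trans (abs_pow_sub_pow_le _ _ _)
    _ ≤ |y - x| * m * 1 := by
        gcongr
        refine pow_le_one₀ (by positivity) (max_le ?_ ?_) <;> rw [abs_of_nonneg] <;> linarith
    _ = m * (y - x) := by rw [abs_of_nonneg (sub_nonneg.2 hxy)]; ring

theorem abs_setIntegral_translate_paramBox_sub_le {a : Fin (n + 2) → ℝ} (ha : ∀ i, |a i| ≤ α)
    (hα : 2 * α ≤ capSide n) {G : ℝ × (Fin n → ℝ) → ℝ} {C : ℝ} (hG : Measurable G)
    (hC : ∀ w, |G w| ≤ C) :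
    |(∫ w in (· - tangentPart a) ⁻¹' paramBox n 0 (capSide n), G w) -
        ∫ w in paramBox n α (capSide n - α), G w| ≤ C * ((n + 1) * (2 * α)) := by
  have hα₀ : 0 ≤ α := (abs_nonneg _).trans (ha 0)
  have hsub : paramBox n α (capSide n - α) ⊆ (· - tangentPart a) ⁻¹' paramBox n 0 (capSide n) :=
    fun w hw =>
      have hw := mem_paramBox_iff.1 hw
      mem_paramBox_iff.2 ⟨sub_mem_Icc_of_abs_le hw.1 (ha 0),
        fun i => sub_mem_Icc_of_abs_le (hw.2 i) (ha i.succ.succ)⟩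
  have hpres := (measurePreserving_sub_right (volume : Measure (ℝ × (Fin n → ℝ)))
    (tangentPart a)).measure_preimage
      (measurableSet_paramBox (r := 0) (s := capSide n)).nullMeasurableSet
  refine (abs_setIntegral_sub_le_of_subset measurableSet_paramBox hsub
    (hpres ▸ volume_paramBox_ne_top) hG.aestronglyMeasurable hC).trans
      (mul_le_mul_of_nonneg_left ?_ ((abs_nonneg _).trans (hC 0)))
  have hpow := pow_sub_pow_le_mul (x := capSide n - 2 * α) (y := capSide n) (by linarith)
    (by linarith) ((capSide_le n).trans (by norm_num)) (n + 1)
  rw [Measure.real, hpres, ← Measure.real, volume_real_paramBox (capSide_pos n).le,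
    volume_real_paramBox (by linarith)]
  push_cast at hpow
  ring_nf at hpow ⊢
  exact hpow

theorem IsBoundedInBox.integrableOn_correlation_paramBox {M' : ℝ} (hH : IsBoundedInBox H M 2)
    (hF : Measurable F) (hFM : ∀ x, |F x| ≤ M') {Φ : ℝ × (Fin n → ℝ) → Fin (n + 2) → ℝ}
    (hΦ : Measurable Φ) : IntegrableOn (fun w => correlation H F (Φ w)) (paramBox n r s) :=
  Measure.integrableOn_of_bounded volume_paramBox_ne_top
    ((measurable_correlation hH.measurable hF).comp hΦ).aestronglyMeasurable
    (Eventually.of_forall fun _ => hH.abs_correlation_le zero_le_two hF hFM _)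

theorem abs_setIntegral_correlation_translatedCap_sub_le (ht : t ∈ Icc (1 / 4) (1 / 2))
    (hω : 0 < ω) (hω₂ : ω ≤ 1 / 2) {a : Fin (n + 2) → ℝ} (ha : ∀ i, |a i| ≤ ω ^ 8 / 16)
    (hH : IsBoundedInBox H M 2) (hF : IsBoundedInBox F M 2) :
    |(∫ w in paramBox n (ω ^ 8 / 16) (capSide n - ω ^ 8 / 16),
        correlation H F (translatedCap t a w)) -
      ∫ w in paramBox n (ω ^ 8 / 16) (capSide n - ω ^ 8 / 16),
        correlation H F (translatedCap t 0 w)| ≤ (53 + 128 * 128) * 4 ^ (n + 2) * ω * M ^ 2 := by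
  have hint : ∀ b : Fin (n + 2) → ℝ, IntegrableOn (fun w => correlation H F (translatedCap t b w))
      (paramBox n (ω ^ 8 / 16) (capSide n - ω ^ 8 / 16)) := fun b =>
    hH.integrableOn_correlation_paramBox hF.measurable hF.abs_le (measurable_translatedCap b)
  have hprod : IntegrableOn (fun w => correlation H F (translatedCap t a w) -
      correlation H F (translatedCap t 0 w)) _ := (hint a).sub (hint 0)
  have hvol : volume (Icc (fun _ : Fin n => ω ^ 8 / 16) fun _ => capSide n - ω ^ 8 / 16) ≤ 1 := by
    rw [Real.volume_Icc_pi]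
    refine Finset.prod_le_one' fun i _ => ENNReal.ofReal_le_one.2 ?_
    have : 0 < ω ^ 8 := by positivity
    linarith [capSide_le n]
  rw [← integral_sub (hint a) (hint 0)]
  rw [IntegrableOn, restrict_paramBox] at hprod
  rw [restrict_paramBox]
  rw [integral_prod_symm _ hprod, ← Real.norm_eq_abs]
  refine (norm_setIntegral_le_of_norm_le_const (hvol.trans_lt ENNReal.one_lt_top) fun c hc =>
    abs_setIntegral_correlation_slice_sub_le ht hω hω₂ ha hH hF
      fun i => ⟨hc.1 i, hc.2 i⟩).trans (mul_le_of_le_one_right (by positivity) ?_)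
  exact ENNReal.toReal_le_of_le_ofReal zero_le_one (by simpa using hvol)

/-- The constant in the smoothing estimate `abs_sphereForm_comp_add_right_sub_le`. -/
def smoothingConst (n : ℕ) : ℝ := (53 + 128 * 128 + (n + 1)) * 4 ^ (n + 2)

theorem abs_sphereForm_comp_add_right_sub_le (ht : t ∈ Icc (1 / 4) (1 / 2)) (hω : 0 < ω)
    (hω₂ : ω ≤ 1 / 2) (hωn : 2 * (ω ^ 8 / 16) ≤ capSide n) {a : Fin (n + 2) → ℝ}
    (ha : ∀ i, |a i| ≤ ω ^ 8 / 16) (hH : IsBoundedInBox H M 2) (hF : IsBoundedInBox F M 2) :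
    |sphereForm t H (fun x => F (x + a)) - sphereForm t H F| ≤ smoothingConst n * ω * M ^ 2 := by
  have hα : ω ^ 8 / 16 ≤ ω / 16 := by
    linarith [pow_le_of_le_one hω.le (by linarith) (by norm_num : 8 ≠ 0)]
  have hlayer : ∀ {b : Fin (n + 2) → ℝ}, (∀ i, |b i| ≤ ω ^ 8 / 16) →
      |sphereForm t H (fun x => F (x + b)) -
        ∫ w in paramBox n (ω ^ 8 / 16) (capSide n - ω ^ 8 / 16),
          correlation H F (translatedCap t b w)| ≤
      M * M * 4 ^ (n + 2) * ((n + 1) * (2 * (ω / 16))) := fun {b} hb => by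
    rw [sphereForm_comp_add_right]
    refine (abs_setIntegral_translate_paramBox_sub_le hb hωn
      ((measurable_correlation hH.measurable hF.measurable).comp (measurable_translatedCap b))
      fun w => hH.abs_correlation_le zero_le_two hF.measurable hF.abs_le _).trans ?_
    have := mul_self_nonneg M
    norm_num
    gcongr
  have hshift := abs_le.1 (hlayer ha)
  have hzero := abs_le.1 (hlayer (b := 0) fun i => by
    simp only [Pi.zero_apply, abs_zero]
    positivity)
  have hcaps := abs_le.1 (abs_setIntegral_correlation_translatedCap_sub_le ht hω hω₂ ha hH hF)
  simp only [add_zero] at hzero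
  have hconst : (53 + 128 * 128) * 4 ^ (n + 2) * ω * M ^ 2 +
      2 * (M * M * 4 ^ (n + 2) * ((n + 1) * (2 * (ω / 16)))) ≤ smoothingConst n * ω * M ^ 2 := by
    unfold smoothingConst
    have : 0 ≤ M ^ 2 * 4 ^ (n + 2) * (n + 1) * ω := by positivity
    linarith
  rw [abs_le]
  constructor <;> linarith [hshift.1, hshift.2, hzero.1, hzero.2, hcaps.1, hcaps.2]

/-- The average of the translates of `F` by a finite family of vectors. -/
def shiftAverage {V ι : Type*} [Add V] [Fintype ι] (a : ι → V) (F : V → ℝ) (x : V) : ℝ :=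
  (Fintype.card ι : ℝ)⁻¹ * ∑ e, F (x + a e)

theorem correlation_comp_add_add {N : ℕ} (H F : (Fin N → ℝ) → ℝ) (a b z : Fin N → ℝ) :
    correlation (fun x => H (x + a)) (fun x => F (x + b)) z =
      correlation H (fun x => F (x + (b - a))) z := by
  rw [correlation, correlation,
    ← integral_add_right_eq_self (fun x => H x * F (x + z + (b - a))) a]
  refine integral_congr_ae (.of_forall fun x => ?_)
  simp only [show x + a + z + (b - a) = x + z + b by abel]

variable {ι : Type*} [Fintype ι]

theorem IsBoundedInBox.integrable_comp_add_mul {N : ℕ} {F : (Fin N → ℝ) → ℝ}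
    (hF : IsBoundedInBox F M r) (a b : Fin N → ℝ) : Integrable fun x => F (x + a) * F (x + b) :=
  (hF.integrable.comp_add_right a).mul_bdd
    (hF.measurable.comp (measurable_add_const b)).aestronglyMeasurable
    (Eventually.of_forall fun x => hF.abs_le (x + b))

theorem IsBoundedInBox.correlation_shiftAverage {N : ℕ} {F : (Fin N → ℝ) → ℝ}
    (hF : IsBoundedInBox F M r) (a : ι → Fin N → ℝ) (z : Fin N → ℝ) :
    correlation (shiftAverage a F) (shiftAverage a F) z = (Fintype.card ι : ℝ)⁻¹ ^ 2 *
      ∑ e : ι × ι, correlation F (fun x => F (x + (a e.2 - a e.1))) z := by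
  have hexpand : ∀ x, shiftAverage a F x * shiftAverage a F (x + z) =
      (Fintype.card ι : ℝ)⁻¹ ^ 2 * ∑ e : ι × ι, F (x + a e.1) * F (x + z + a e.2) := fun x => by
    rw [shiftAverage, shiftAverage, mul_mul_mul_comm, Finset.sum_mul_sum, Fintype.sum_prod_type, sq]
  simp only [← correlation_comp_add_add]
  simp only [correlation, hexpand]
  rw [integral_const_mul, integral_finsetSum _ fun e _ => by
    simpa only [add_assoc] using hF.integrable_comp_add_mul (a e.1) (z + a e.2)]

theorem sphereForm_shiftAverage (hF : IsBoundedInBox F M 2) (a : ι → Fin (n + 2) → ℝ) :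
    sphereForm t (shiftAverage a F) (shiftAverage a F) = (Fintype.card ι : ℝ)⁻¹ ^ 2 *
      ∑ e : ι × ι, sphereForm t F (fun x => F (x + (a e.2 - a e.1))) := by
  have hint : ∀ e : ι × ι, IntegrableOn
      (fun w => correlation F (fun x => F (x + (a e.2 - a e.1))) (capPoint t w))
      (paramBox n 0 (capSide n)) := fun e =>
    hF.integrableOn_correlation_paramBox (hF.measurable.comp (measurable_add_const _))
      (fun x => hF.abs_le _) measurable_capPoint
  simp only [sphereForm, hF.correlation_shiftAverage]
  rw [integral_const_mul, integral_finsetSum _ fun e _ => hint e]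

theorem abs_sphereForm_shiftAverage_sub_le [Nonempty ι] (ht : t ∈ Icc (1 / 4) (1 / 2)) (hω : 0 < ω)
    (hω₂ : ω ≤ 1 / 2) (hωn : 2 * (ω ^ 8 / 16) ≤ capSide n) {a : ι → Fin (n + 2) → ℝ}
    (ha : ∀ e e' i, |(a e' - a e) i| ≤ ω ^ 8 / 16) (hF : IsBoundedInBox F M 2) :
    |sphereForm t (shiftAverage a F) (shiftAverage a F) - sphereForm t F F| ≤
      smoothingConst n * ω * M ^ 2 := by
  have hcard : (Fintype.card ι : ℝ) ≠ 0 := Nat.cast_ne_zero.2 Fintype.card_ne_zero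
  have haverage : ∀ c : ℝ, (Fintype.card ι : ℝ)⁻¹ ^ 2 * ∑ _e : ι × ι, c = c := fun c => by
    rw [Finset.sum_const, Finset.card_univ, Fintype.card_prod, nsmul_eq_mul]
    push_cast
    field_simp
  rw [sphereForm_shiftAverage hF, ← haverage (sphereForm t F F), ← mul_sub,
    ← Finset.sum_sub_distrib, abs_mul, abs_of_nonneg (by positivity),
    ← haverage (smoothingConst n * ω * M ^ 2)]
  gcongr
  exact (Finset.abs_sum_le_sum_abs _ _).trans (Finset.sum_le_sum fun e _ =>
    abs_sphereForm_comp_add_right_sub_le ht hω hω₂ hωn (ha e.1 e.2) hF hF)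

end SphericalCap

/-! ### Point masses averaged over dyadic windows -/

section DyadicAverage

variable {N : ℕ} {J : Type*} [Fintype J] {p : J → Fin N → ℝ} {m : J → ℝ} {k d : ℕ} {lam : ℝ}
  {x y : Fin N → ℝ}

/-- The half-open cube of side `2⁻ᵏ` whose lower corner is `x`. -/
def dyadicWindow (k : ℕ) (x : Fin N → ℝ) : Set (Fin N → ℝ) :=
  univ.pi fun i => Ico (x i) (x i + (1 / 2) ^ k)

/-- The density at scale `2⁻ᵏ` of the masses `m j` placed at the points `p j`. -/
def dyadicAverage (p : J → Fin N → ℝ) (m : J → ℝ) (k : ℕ) (x : Fin N → ℝ) : ℝ :=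
  (2 ^ k) ^ N * ∑ j, m j * (dyadicWindow k x).indicator 1 (p j)

/-- The vector with entries `0` and `2⁻ᵏ` that is selected by the binary vector `e`. -/
def dyadicShift (k : ℕ) (e : Fin N → Fin 2) : Fin N → ℝ := fun i => (e i : ℕ) * (1 / 2) ^ k

theorem mem_dyadicWindow_iff :
    y ∈ dyadicWindow k x ↔ x ∈ univ.pi fun i => Ioc (y i - (1 / 2) ^ k) (y i) := by
  simp only [dyadicWindow, mem_univ_pi, mem_Ico, mem_Ioc, sub_lt_iff_lt_add, and_comm]

theorem indicator_dyadicWindow (k : ℕ) (x y : Fin N → ℝ) :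
    (dyadicWindow k x).indicator (1 : (Fin N → ℝ) → ℝ) y =
      (univ.pi fun i => Ioc (y i - (1 / 2) ^ k) (y i)).indicator 1 x := by
  classical
  simp only [indicator_apply, mem_dyadicWindow_iff, Pi.one_apply]

theorem measurable_dyadicAverage : Measurable (dyadicAverage p m k) := by
  unfold dyadicAverage
  simp only [indicator_dyadicWindow]
  exact .const_mul (Finset.measurable_fun_sum _ fun j _ =>
    .const_mul (measurable_one.indicator (.univ_pi fun _ => measurableSet_Ioc)) _) _

theorem dyadicAverage_nonneg (hm : ∀ j, 0 ≤ m j) (x : Fin N → ℝ) : 0 ≤ dyadicAverage p m k x :=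
  mul_nonneg (by positivity) (Finset.sum_nonneg fun j _ =>
    mul_nonneg (hm j) (indicator_nonneg (fun _ _ => zero_le_one) _))

theorem exists_mem_dyadicWindow_of_dyadicAverage_ne_zero (h : dyadicAverage p m k x ≠ 0) :
    ∃ j, p j ∈ dyadicWindow k x := by
  obtain ⟨j, -, hj⟩ := Finset.exists_ne_zero_of_sum_ne_zero (right_ne_zero_of_mul h)
  exact ⟨j, mem_of_indicator_ne_zero (right_ne_zero_of_mul hj)⟩

theorem dyadicAverage_eq_zero_of_notMem (hp : ∀ j i, p j i ∈ Icc 0 1)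
    (hx : x ∉ Icc (fun _ => -(1 / 2) ^ k) fun _ => 1) : dyadicAverage p m k x = 0 := by
  by_contra h
  obtain ⟨j, hj⟩ := exists_mem_dyadicWindow_of_dyadicAverage_ne_zero h
  have hj : ∀ i, p j i ∈ Ico (x i) (x i + (1 / 2) ^ k) := fun i => hj i (mem_univ i)
  exact hx ⟨fun i => by linarith [(hj i).2, (hp j i).1], fun i => (hj i).1.trans (hp j i).2⟩

theorem isBoundedInBox_dyadicAverage (hp : ∀ j i, p j i ∈ Icc 0 1) (hm : ∀ j, 0 ≤ m j) {M : ℝ}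
    (hM : ∀ x, dyadicAverage p m k x ≤ M) : IsBoundedInBox (dyadicAverage p m k) M 2 where
  measurable := measurable_dyadicAverage
  abs_le x := (abs_of_nonneg (dyadicAverage_nonneg hm x)).trans_le (hM x)
  eq_zero x hx := dyadicAverage_eq_zero_of_notMem hp fun h => hx <|
    have : ((1 : ℝ) / 2) ^ k ≤ 1 := pow_le_one₀ (by norm_num) (by norm_num)
    mem_centeredBox_iff.2 fun i =>
      abs_le.2 ⟨by linarith [h.1 i], (h.2 i).trans (by norm_num)⟩

theorem integral_indicator_dyadicWindow (y : Fin N → ℝ) :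
    ∫ x, (dyadicWindow k x).indicator 1 y = (((1 : ℝ) / 2) ^ k) ^ N := by
  simp only [indicator_dyadicWindow]
  rw [integral_indicator_one (.univ_pi fun _ => measurableSet_Ioc), Measure.real,
    Real.volume_pi_Ioc_toReal fun i => by simp]
  simp

theorem integrable_indicator_dyadicWindow (y : Fin N → ℝ) :
    Integrable fun x => (dyadicWindow k x).indicator (1 : (Fin N → ℝ) → ℝ) y :=
  .of_integral_ne_zero (by rw [integral_indicator_dyadicWindow]; positivity)

theorem integral_dyadicAverage : ∫ x, dyadicAverage p m k x = ∑ j, m j := by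
  simp only [dyadicAverage]
  rw [integral_const_mul, integral_finsetSum _ fun j _ =>
    (integrable_indicator_dyadicWindow (p j)).const_mul _]
  simp only [integral_const_mul, integral_indicator_dyadicWindow]
  rw [← Finset.sum_mul, mul_comm, mul_assoc, ← mul_pow, ← mul_pow]
  norm_num

theorem indicator_Ico_two_mul {δ : ℝ} (hδ : 0 ≤ δ) (x y : ℝ) :
    (Ico x (x + 2 * δ)).indicator (1 : ℝ → ℝ) y =
      ∑ e : Fin 2, (Ico (x + (e : ℕ) * δ) (x + (e : ℕ) * δ + δ)).indicator 1 y := by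
  have hunion : Ico x (x + δ) ∪ Ico (x + δ) (x + 2 * δ) = Ico x (x + 2 * δ) :=
    Ico_union_Ico_eq_Ico (by linarith) (by linarith)
  rw [Fin.sum_univ_two, ← hunion, indicator_union_of_disjoint (Ico_disjoint_Ico_same)]
  simp [two_mul, add_assoc]

theorem indicator_dyadicWindow_eq_sum (y : Fin N → ℝ) :
    (dyadicWindow k x).indicator (1 : (Fin N → ℝ) → ℝ) y =
      ∑ e, (dyadicWindow (k + 1) (x + dyadicShift (k + 1) e)).indicator 1 y := by
  have hprod : ∀ l z, (dyadicWindow l z).indicator (1 : (Fin N → ℝ) → ℝ) y =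
      ∏ i, (Ico (z i) (z i + (1 / 2) ^ l)).indicator 1 (y i) := fun l z => by
    rw [dyadicWindow, ← Finset.coe_univ, indicator_pi_one_apply]
  have hhalf : ((1 : ℝ) / 2) ^ k = 2 * (1 / 2) ^ (k + 1) := by ring
  simp only [hprod, hhalf, indicator_Ico_two_mul (by positivity : (0 : ℝ) ≤ (1 / 2) ^ (k + 1))]
  rw [Finset.prod_univ_sum, Fintype.piFinset_univ]
  rfl

theorem dyadicAverage_eq_shiftAverage (p : J → Fin N → ℝ) (m : J → ℝ) (k : ℕ) :
    dyadicAverage p m k =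
      shiftAverage (dyadicShift (k + 1)) (dyadicAverage p m (k + 1)) := by
  ext x
  simp only [shiftAverage, dyadicAverage, indicator_dyadicWindow_eq_sum (k := k)]
  rw [← Finset.mul_sum, Finset.sum_comm, ← mul_assoc]
  congr 1
  · simp only [Fintype.card_pi_const, Fintype.card_fin]
    push_cast
    rw [← inv_pow, ← mul_pow]
    congr 1
    ring
  · simp only [Finset.mul_sum]

theorem abs_dyadicShift_sub_le (e e' : Fin N → Fin 2) (i : Fin N) :
    |(dyadicShift k e' - dyadicShift k e) i| ≤ (1 / 2) ^ k := by
  have hdiff : |((e' i : ℕ) : ℝ) - (e i : ℕ)| ≤ 1 := by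
    generalize e i = b, e' i = b'
    fin_cases b <;> fin_cases b' <;> simp
  rw [Pi.sub_apply, dyadicShift, dyadicShift, ← sub_mul, abs_mul,
    abs_of_pos (by positivity : (0 : ℝ) < (1 / 2) ^ k)]
  exact mul_le_of_le_one_left (by positivity) hdiff

/-- The index of the dyadic subcube of `[0, 1]ᴺ` of side `2⁻ᴷ` that contains `x`. Points on the
upper faces of `[0, 1]ᴺ` are assigned to the adjacent subcube. -/
def dyadicCell (K : ℕ) (x : Fin N → ℝ) : Fin N → ℤ := fun i => min ⌊2 ^ K * x i⌋ (2 ^ K - 1)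

theorem exists_card_le_mapsTo_dyadicCell (k d : ℕ) (x : Fin N → ℝ) :
    ∃ T : Finset (Fin N → ℤ), T.card ≤ (2 ^ d + 1) ^ N ∧
      MapsTo (dyadicCell (k + d)) (dyadicWindow k x) T := by
  classical
  let corner : Fin N → ℤ := fun i => ⌊2 ^ (k + d) * x i⌋
  refine ⟨(Fintype.piFinset fun i => Finset.Icc (corner i) (corner i + (2 ^ d : ℕ))).image
    fun c i => min (c i) (2 ^ (k + d) - 1), Finset.card_image_le.trans_eq ?_, fun y hy => ?_⟩
  · have hcard (a : ℤ) (b : ℕ) : (a + b + 1 - a).toNat = b + 1 := by omega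
    simp only [Fintype.card_piFinset, Int.card_Icc, hcard, Finset.prod_const, Finset.card_univ,
      Fintype.card_fin]
  · refine Finset.mem_coe.2 (Finset.mem_image.2 ⟨fun i => ⌊2 ^ (k + d) * y i⌋, ?_, rfl⟩)
    refine Fintype.mem_piFinset.2 fun i => Finset.mem_Icc.2 ?_
    obtain ⟨hlow, hhigh⟩ := hy i (mem_univ i)
    refine ⟨Int.floor_le_floor (by gcongr), ?_⟩
    rw [← Int.floor_add_intCast]
    refine Int.floor_le_floor ?_
    calc 2 ^ (k + d) * y i ≤ 2 ^ (k + d) * (x i + (1 / 2) ^ k) := by gcongr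
      _ = 2 ^ (k + d) * x i + ((2 ^ d : ℕ) : ℤ) := by
        rw [mul_add, pow_add, mul_right_comm _ _ ((1 / 2) ^ k), ← mul_pow]
        norm_num

theorem dyadicAverage_le_of_sum_dyadicCell_le (hm : ∀ j, 0 ≤ m j) (hlam : 0 ≤ lam)
    (hmass : ∀ c, ∑ j with dyadicCell (k + d) (p j) = c, m j ≤ (lam / 2 ^ N) ^ (k + d))
    (x : Fin N → ℝ) : dyadicAverage p m k x ≤ (1 + (1 / 2) ^ d) ^ N * lam ^ (k + d) := by
  classical
  obtain ⟨T, hT, hmaps⟩ := exists_card_le_mapsTo_dyadicCell k d x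
  have hwindow : ∑ j, m j * (dyadicWindow k x).indicator 1 (p j) ≤
      (2 ^ d + 1) ^ N * (lam / 2 ^ N) ^ (k + d) :=
    calc ∑ j, m j * (dyadicWindow k x).indicator 1 (p j)
        = ∑ j with p j ∈ dyadicWindow k x, m j := by
          simp only [indicator_apply, Pi.one_apply, mul_ite, mul_one, mul_zero, Finset.sum_filter]
      _ = ∑ c ∈ T, ∑ j with p j ∈ dyadicWindow k x ∧ dyadicCell (k + d) (p j) = c, m j := by
          rw [← Finset.sum_fiberwise_of_maps_to fun j hj => hmaps (Finset.mem_filter.1 hj).2]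
          simp only [Finset.filter_filter]
      _ ≤ T.card • (lam / 2 ^ N) ^ (k + d) :=
          Finset.sum_le_card_nsmul _ _ _ fun c _ => (Finset.sum_le_sum_of_subset_of_nonneg
            (Finset.monotone_filter_right _ fun _ _ h => h.2) fun j _ _ => hm j).trans (hmass c)
      _ ≤ (2 ^ d + 1) ^ N * (lam / 2 ^ N) ^ (k + d) := by
          rw [nsmul_eq_mul]
          gcongr
          exact_mod_cast hT
  calc dyadicAverage p m k x
      ≤ (2 ^ k) ^ N * ((2 ^ d + 1) ^ N * (lam / 2 ^ N) ^ (k + d)) := by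
        unfold dyadicAverage
        gcongr
    _ = (2 ^ k * (2 ^ d + 1) / 2 ^ (k + d)) ^ N * lam ^ (k + d) := by
        rw [div_pow, div_pow, mul_pow, pow_right_comm]
        ring
    _ = (1 + (1 / 2) ^ d) ^ N * lam ^ (k + d) := by
        congr 2
        rw [pow_add, one_div, inv_pow]
        field_simp

end DyadicAverage

/-! ### Comparison of the correlation forms at different scales -/

section ScaleComparison

/-- The geometric rate `2^(-1/16)` at which the influence of finer scales decays. -/
def decayRate : ℝ := (1 / 2) ^ (1 / 16 : ℝ)

theorem decayRate_pos : 0 < decayRate := by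
  unfold decayRate
  positivity

theorem decayRate_lt_one : decayRate < 1 :=
  Real.rpow_lt_one (by norm_num) (by norm_num) (by norm_num)

theorem decayRate_pow_sixteen : decayRate ^ 16 = 1 / 2 := by
  rw [decayRate, ← Real.rpow_natCast, ← Real.rpow_mul (by norm_num)]
  norm_num

theorem smoothingConst_nonneg (n : ℕ) : 0 ≤ smoothingConst n := by
  unfold smoothingConst
  positivity

variable {n k l : ℕ} {J : Type*} [Fintype J] {p : J → Fin (n + 2) → ℝ} {m : J → ℝ} {t lam : ℝ}

/-- The mass distributions on the points `p j` which for `k ≤ l` give mass at most `(lam / 2ᴺ)ᵏ` to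
every dyadic cell of side `2⁻ᵏ`. -/
def dyadicFrostmanMasses {N : ℕ} (p : J → Fin N → ℝ) (lam : ℝ) (l : ℕ) : Set (J → ℝ) :=
  frostmanMasses (fun k j => dyadicCell k (p j)) (fun k => (lam / 2 ^ N) ^ k) l

theorem dyadicAverage_le_of_mem_dyadicFrostmanMasses {N d : ℕ} {p : J → Fin N → ℝ}
    (hm : m ∈ dyadicFrostmanMasses p lam l) (hlam : 0 ≤ lam) (hkl : k + d ≤ l) (x : Fin N → ℝ) :
    dyadicAverage p m k x ≤ (1 + (1 / 2) ^ d) ^ N * lam ^ (k + d) :=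
  dyadicAverage_le_of_sum_dyadicCell_le hm.1 hlam (hm.2 _ hkl) x

-- With `ω = decayRate ^ (2 * k - 6)` the displacement `ω ^ 8 / 16` is exactly `2⁻⁽ᵏ⁺¹⁾`, and
-- `lam ^ 2 * decayRate ≤ 1` pays for the factor `lam ^ (2 * (k + 1))` in the squared sup bound.
theorem abs_sphereForm_dyadicAverage_sub_succ_le (ht : t ∈ Icc (1 / 4) (1 / 2))
    (hp : ∀ j i, p j i ∈ Icc 0 1) (hm : m ∈ dyadicFrostmanMasses p lam l) (hlam : 0 ≤ lam)
    (hdecay : lam ^ 2 * decayRate ≤ 1) (hk : 11 ≤ k) (hkn : (1 / 2) ^ k ≤ capSide n)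
    (hkl : k < l) :
    |sphereForm t (dyadicAverage p m k) (dyadicAverage p m k) -
        sphereForm t (dyadicAverage p m (k + 1)) (dyadicAverage p m (k + 1))| ≤
      2 * smoothingConst n * 4 ^ (n + 2) * decayRate ^ k := by
  have hr := decayRate_pos
  have hr16 := decayRate_pow_sixteen
  set r := decayRate
  set ω := r ^ (2 * k) / r ^ 6 with hω
  have hωpow : ω ^ 8 / 16 = (1 / 2) ^ (k + 1) := by
    have hr48 : r ^ (6 * 8) = (r ^ 16) ^ 3 := by ring
    rw [hω, div_pow, ← pow_mul, ← pow_mul, show 2 * k * 8 = 16 * k by ring, pow_mul, hr48, hr16]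
    ring
  have hω₂ : ω ≤ 1 / 2 := by
    rw [hω, div_le_iff₀ (by positivity), ← hr16, ← pow_add]
    exact pow_le_pow_of_le_one hr.le decayRate_lt_one.le (by lia)
  have hωn : 2 * (ω ^ 8 / 16) ≤ capSide n := by
    rw [hωpow, pow_succ]
    linarith
  have hbound := isBoundedInBox_dyadicAverage hp hm.1
    (dyadicAverage_le_of_mem_dyadicFrostmanMasses (d := 0) (k := k + 1) hm hlam hkl)
  have hinv : (r ^ 7)⁻¹ ≤ 2 := by
    rw [inv_le_comm₀ (by positivity) two_pos, ← one_div, ← hr16]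
    exact pow_le_pow_of_le_one hr.le decayRate_lt_one.le (by norm_num)
  rw [dyadicAverage_eq_shiftAverage p m k]
  calc _ ≤ smoothingConst n * ω * ((1 + (1 / 2) ^ 0) ^ (n + 2) * lam ^ (k + 1)) ^ 2 :=
        abs_sphereForm_shiftAverage_sub_le ht (by positivity) hω₂ hωn
          (fun e e' i => (abs_dyadicShift_sub_le e e' i).trans_eq hωpow.symm) hbound
    _ = smoothingConst n * 4 ^ (n + 2) * r ^ k * (lam ^ 2 * r) ^ (k + 1) * (r ^ 7)⁻¹ := by
        rw [hω, pow_zero, one_add_one_eq_two, mul_pow, ← pow_mul, mul_comm (n + 2) 2, pow_mul,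
          pow_mul, mul_pow]
        field_simp
        ring
    _ ≤ smoothingConst n * 4 ^ (n + 2) * r ^ k * 1 * 2 := by
        have := smoothingConst_nonneg n
        gcongr
        exact pow_le_one₀ (by positivity) hdecay
    _ = 2 * smoothingConst n * 4 ^ (n + 2) * r ^ k := by ring

theorem abs_sphereForm_dyadicAverage_sub_le (ht : t ∈ Icc (1 / 4) (1 / 2))
    (hp : ∀ j i, p j i ∈ Icc 0 1) (hm : m ∈ dyadicFrostmanMasses p lam l) (hlam : 0 ≤ lam)
    (hdecay : lam ^ 2 * decayRate ≤ 1) (hk : 11 ≤ k) (hkn : (1 / 2) ^ k ≤ capSide n)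
    (hkl : k ≤ l) :
    |sphereForm t (dyadicAverage p m k) (dyadicAverage p m k) -
        sphereForm t (dyadicAverage p m l) (dyadicAverage p m l)| ≤
      2 * smoothingConst n * 4 ^ (n + 2) * (decayRate ^ k / (1 - decayRate)) := by
  let B : ℕ → ℝ := fun i => sphereForm t (dyadicAverage p m i) (dyadicAverage p m i)
  have hstep : ∀ {i}, k ≤ i → i < l →
      dist (B i) (B (i + 1)) ≤ 2 * smoothingConst n * 4 ^ (n + 2) * decayRate ^ i :=
    fun {i} hki hil => abs_sphereForm_dyadicAverage_sub_succ_le ht hp hm hlam hdecay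
      (hk.trans hki)
      ((pow_le_pow_of_le_one (by norm_num) (by norm_num) hki).trans hkn) hil
  calc |B k - B l| ≤ ∑ i ∈ Finset.Ico k l, 2 * smoothingConst n * 4 ^ (n + 2) * decayRate ^ i :=
        dist_le_Ico_sum_of_dist_le hkl hstep
    _ ≤ 2 * smoothingConst n * 4 ^ (n + 2) * (decayRate ^ k / (1 - decayRate)) := by
        have := smoothingConst_nonneg n
        rw [← Finset.mul_sum]
        gcongr
        exact geom_sum_Ico_le_of_lt_one decayRate_pos.le decayRate_lt_one

end ScaleComparison

/-! ### Positivity of the correlation form -/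

section Positivity

variable {N n k l : ℕ} {t c : ℝ}

theorem volume_real_Icc_pi_const {a b : ℝ} (hab : a ≤ b) :
    volume.real (Icc (fun _ : Fin N => a) fun _ => b) = (b - a) ^ N := by
  rw [Measure.real, Real.volume_Icc_pi_toReal fun _ => hab]
  simp

theorem integrable_indicator_one_Icc_pi (a b : ℝ) :
    Integrable ((Icc (fun _ : Fin N => a) fun _ => b).indicator (1 : (Fin N → ℝ) → ℝ)) :=
  (integrable_indicator_iff measurableSet_Icc).2 (integrableOn_const measure_Icc_lt_top.ne)

/-- The amount by which `F` falls short of the constant `b` on the cube `[-δ, 1]ᴺ`. -/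
def deficiency (b δ : ℝ) (F : (Fin N → ℝ) → ℝ) (x : Fin N → ℝ) : ℝ :=
  b * (Icc (fun _ => -δ) fun _ => 1).indicator 1 x - F x

variable {b δ r : ℝ} {F : (Fin N → ℝ) → ℝ}

theorem deficiency_nonneg (hFb : ∀ x, F x ≤ b)
    (hsupp : ∀ x ∉ Icc (fun _ => -δ) fun _ => 1, F x = 0) (x : Fin N → ℝ) :
    0 ≤ deficiency b δ F x := by
  unfold deficiency
  by_cases hx : x ∈ Icc (fun _ => -δ) fun _ => 1
  · rw [indicator_of_mem hx, Pi.one_apply, mul_one]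
    exact sub_nonneg.2 (hFb x)
  · rw [indicator_of_notMem hx, hsupp x hx, mul_zero, sub_zero]

theorem integrable_deficiency (hF : Integrable F) : Integrable (deficiency b δ F) :=
  ((integrable_indicator_one_Icc_pi _ _).const_mul b).sub hF

theorem integral_deficiency (hδ : 0 ≤ δ) (hF : Integrable F) :
    ∫ x, deficiency b δ F x = b * (1 + δ) ^ N - ∫ x, F x := by
  simp only [deficiency]
  rw [integral_sub ((integrable_indicator_one_Icc_pi _ _).const_mul b) hF, integral_const_mul,
    integral_indicator_one measurableSet_Icc, volume_real_Icc_pi_const (by linarith),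
    sub_neg_eq_add]

theorem sq_mul_indicator_sub_deficiency_le_mul (hδ : 0 ≤ δ) (hF : ∀ x, F x ∈ Icc 0 b)
    (hsupp : ∀ x ∉ Icc (fun _ => -δ) fun _ => 1, F x = 0) {z : Fin N → ℝ}
    (hz : ∀ i, z i ∈ Icc 0 (1 / 2)) (x : Fin N → ℝ) :
    b ^ 2 * (Icc (fun _ => 0) fun _ => 1 / 2).indicator (1 : (Fin N → ℝ) → ℝ) x -
      b * (deficiency b δ F x + deficiency b δ F (x + z)) ≤ F x * F (x + z) := by
  have hb : 0 ≤ b := (hF x).1.trans (hF x).2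
  by_cases hx : x ∈ Icc (fun _ => (0 : ℝ)) fun _ => 1 / 2
  · have hx₁ : x ∈ Icc (fun _ => -δ) fun _ => 1 :=
      ⟨fun i => by linarith [hx.1 i], fun i => (hx.2 i).trans (by norm_num)⟩
    have hxz₁ : x + z ∈ Icc (fun _ => -δ) fun _ => 1 :=
      ⟨fun i => by linarith [hx.1 i, (hz i).1, Pi.add_apply x z i],
        fun i => by linarith [hx.2 i, (hz i).2, Pi.add_apply x z i]⟩
    simp only [deficiency, indicator_of_mem hx, indicator_of_mem hx₁, indicator_of_mem hxz₁,
      Pi.one_apply]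
    nlinarith [mul_nonneg (sub_nonneg.2 (hF x).2) (sub_nonneg.2 (hF (x + z)).2)]
  · have hdef := deficiency_nonneg (fun x => (hF x).2) hsupp
    rw [indicator_of_notMem hx, mul_zero, zero_sub]
    exact (neg_nonpos.2 (mul_nonneg hb (add_nonneg (hdef x) (hdef _)))).trans
      (mul_nonneg (hF x).1 (hF _).1)

theorem le_correlation_self (hδ : 0 ≤ δ) (hF : IsBoundedInBox F b r) (hF₀ : ∀ x, 0 ≤ F x)
    (hsupp : ∀ x ∉ Icc (fun _ => -δ) fun _ => 1, F x = 0) {z : Fin N → ℝ}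
    (hz : ∀ i, z i ∈ Icc 0 (1 / 2)) :
    b ^ 2 * (1 / 2) ^ N - 2 * b * (b * (1 + δ) ^ N - ∫ x, F x) ≤ correlation F F z := by
  have hdef := integrable_deficiency (b := b) (δ := δ) hF.integrable
  have hdefz := hdef.comp_add_right z
  have hcube := (integrable_indicator_one_Icc_pi (N := N) 0 (1 / 2)).const_mul (b ^ 2)
  have hloss : Integrable fun x => b * (deficiency b δ F x + deficiency b δ F (x + z)) :=
    (hdef.add hdefz).const_mul b
  calc b ^ 2 * (1 / 2) ^ N - 2 * b * (b * (1 + δ) ^ N - ∫ x, F x)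
      = ∫ x, (b ^ 2 * (Icc (fun _ => 0) fun _ => 1 / 2).indicator (1 : (Fin N → ℝ) → ℝ) x -
          b * (deficiency b δ F x + deficiency b δ F (x + z))) := by
        rw [integral_sub hcube hloss, integral_const_mul, integral_const_mul,
          integral_add hdef hdefz, integral_add_right_eq_self (deficiency b δ F) z,
          integral_deficiency hδ hF.integrable, integral_indicator_one measurableSet_Icc,
          volume_real_Icc_pi_const (by norm_num)]
        ring
    _ ≤ correlation F F z :=
        integral_mono (hcube.sub hloss)
          (hF.mul_of_bounded (hF.measurable.comp (measurable_add_const z))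
            fun x => hF.abs_le (x + z)).integrable
          (sq_mul_indicator_sub_deficiency_le_mul hδ
            (fun x => ⟨hF₀ x, (le_abs_self _).trans (hF.abs_le x)⟩) hsupp hz)

section CapPoint

variable {w : ℝ × (Fin n → ℝ)}

theorem abs_fst_le_of_mem_paramBox (hw : w ∈ paramBox n 0 (capSide n)) : |w.1 - 0| ≤ 1 / 8 := by
  rw [sub_zero, abs_of_nonneg (mem_paramBox_iff.1 hw).1.1]
  exact (mem_paramBox_iff.1 hw).1.2.trans (capSide_le n)

theorem sliceRadiusSq_zero_mem_Icc (ht : t ∈ Icc (1 / 4) (1 / 2))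
    (hw : w ∈ paramBox n 0 (capSide n)) : sliceRadiusSq t 0 w.2 ∈ Icc (1 / 32) (1 / 4) :=
  sliceRadiusSq_mem_Icc ht fun i => by simpa using (mem_paramBox_iff.1 hw).2 i

theorem capPoint_mem_Icc (ht : t ∈ Icc (1 / 4) (1 / 2)) (hw : w ∈ paramBox n 0 (capSide n))
    (i : Fin (n + 2)) : capPoint t w i ∈ Icc 0 (1 / 2) := by
  obtain ⟨hu, hc⟩ := mem_paramBox_iff.1 hw
  have hside : capSide n ≤ 1 / 2 := (capSide_le n).trans (by norm_num)
  have hheight : √(t ^ 2 - ∑ i, w.2 i ^ 2 - w.1 ^ 2) ≤ 1 / 2 := by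
    simpa [sliceRadiusSq] using (sqrt_sub_sq_mem_Icc (sliceRadiusSq_zero_mem_Icc ht hw)
      (abs_fst_le_of_mem_paramBox hw)).2
  refine Fin.cases ?_ (Fin.cases ?_ fun i => ?_) i
  · exact ⟨hu.1, hu.2.trans hside⟩
  · exact ⟨Real.sqrt_nonneg _, hheight⟩
  · exact ⟨(hc i).1, (hc i).2.trans hside⟩

theorem sum_sq_capPoint (ht : t ∈ Icc (1 / 4) (1 / 2)) (hw : w ∈ paramBox n 0 (capSide n)) :
    ∑ i, capPoint t w i ^ 2 = t ^ 2 := by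
  have hpos := one_div_sixtyFour_le_sub_sq (sliceRadiusSq_zero_mem_Icc ht hw).1
    (abs_fst_le_of_mem_paramBox hw)
  simp only [sliceRadiusSq, Pi.zero_apply, sub_zero] at hpos
  rw [Fin.sum_univ_succ, Fin.sum_univ_succ]
  simp only [capPoint, Matrix.cons_val_succ, Matrix.cons_val_zero]
  rw [Real.sq_sqrt (by linarith)]
  ring

theorem mul_capSide_pow_le_sphereForm (ht : t ∈ Icc (1 / 4) (1 / 2)) {M : ℝ}
    {F : (Fin (n + 2) → ℝ) → ℝ} (hF : IsBoundedInBox F M 2)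
    (hc : ∀ z : Fin (n + 2) → ℝ, (∀ i, z i ∈ Icc 0 (1 / 2)) → c ≤ correlation F F z) :
    c * capSide n ^ (n + 1) ≤ sphereForm t F F :=
  calc c * capSide n ^ (n + 1) = ∫ _w in paramBox n 0 (capSide n), c := by
        rw [setIntegral_const, volume_real_paramBox (capSide_pos n).le, sub_zero, smul_eq_mul,
          mul_comm]
    _ ≤ sphereForm t F F :=
        setIntegral_mono_on (integrableOn_const volume_paramBox_ne_top)
          (hF.integrableOn_correlation_paramBox hF.measurable hF.abs_le measurable_capPoint)
          measurableSet_paramBox fun _ hw => hc _ (capPoint_mem_Icc ht hw)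

end CapPoint

/-- The mass that a distribution on the unit cube may lose while its correlations at coarse scales
stay bounded below. -/
def massDefect (N : ℕ) : ℝ := (1 / 2) ^ N / 32

theorem massDefect_pos (N : ℕ) : 0 < massDefect N := by
  unfold massDefect
  positivity

theorem massDefect_le (N : ℕ) : massDefect N ≤ 1 / 32 := by
  unfold massDefect
  linarith [pow_le_one₀ (n := N) (by norm_num : (0 : ℝ) ≤ 1 / 2) (by norm_num)]

variable {J : Type*} [Fintype J] {m : J → ℝ} {lam : ℝ}

theorem le_correlation_dyadicAverage {p : J → Fin N → ℝ} (hp : ∀ j i, p j i ∈ Icc 0 1)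
    (hm : m ∈ dyadicFrostmanMasses p lam l) (hlam : 1 ≤ lam) (hkl : 2 * k ≤ l)
    (hk : ((1 + (1 / 2) ^ k) ^ N) ^ 2 ≤ 1 + massDefect N)
    (hlamk : lam ^ (2 * k) ≤ 1 + massDefect N) (hmass : 1 - massDefect N ≤ ∑ j, m j)
    {z : Fin N → ℝ} (hz : ∀ i, z i ∈ Icc 0 (1 / 2)) :
    (1 / 2) ^ N / 2 ≤ correlation (dyadicAverage p m k) (dyadicAverage p m k) z := by
  have hθ := massDefect_pos N
  have hθ₁ := massDefect_le N
  have hθdef : 32 * massDefect N = (1 / 2) ^ N := mul_div_cancel₀ _ (by norm_num)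
  set δ : ℝ := (1 / 2) ^ k
  have hA : 1 ≤ (1 + δ) ^ N := one_le_pow₀ (le_add_of_nonneg_right (by positivity))
  have hL : 1 ≤ lam ^ (2 * k) := one_le_pow₀ hlam
  set b := (1 + δ) ^ N * lam ^ (2 * k) with hb
  have hb₁ : 1 ≤ b := one_le_mul_of_one_le_of_one_le hA hL
  have hbA : b * (1 + δ) ^ N ≤ 1 + 3 * massDefect N :=
    calc b * (1 + δ) ^ N = ((1 + δ) ^ N) ^ 2 * lam ^ (2 * k) := by rw [hb]; ring
      _ ≤ (1 + massDefect N) * (1 + massDefect N) := by gcongr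
      _ ≤ 1 + 3 * massDefect N := by nlinarith
  have hb₂ : b ≤ 2 := by nlinarith
  have hbounded : IsBoundedInBox (dyadicAverage p m k) b 2 :=
    isBoundedInBox_dyadicAverage hp hm.1 fun x => by
      rw [hb, two_mul]
      exact dyadicAverage_le_of_mem_dyadicFrostmanMasses hm (zero_le_one.trans hlam)
        (two_mul k ▸ hkl) x
  refine le_trans ?_ (le_correlation_self (by positivity) hbounded (dyadicAverage_nonneg hm.1)
    (fun x => dyadicAverage_eq_zero_of_notMem hp) hz)
  rw [integral_dyadicAverage]
  have hloss : 2 * b * (b * (1 + δ) ^ N - ∑ j, m j) ≤ 2 * 2 * (4 * massDefect N) := by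
    refine (mul_le_mul_of_nonneg_left (by linarith : _ ≤ 4 * massDefect N) (by positivity)).trans ?_
    gcongr
  have hmain : (1 / 2) ^ N ≤ b ^ 2 * (1 / 2) ^ N :=
    le_mul_of_one_le_left (by positivity) (one_le_pow₀ hb₁)
  linarith

theorem exists_coarse_scale (n : ℕ) {θ η : ℝ} (hθ : 0 < θ) (hη : 0 < η) :
    ∃ k ≥ 11, (1 / 2) ^ k ≤ capSide n ∧ ((1 + (1 / 2) ^ k) ^ (n + 2)) ^ 2 ≤ 1 + θ ∧
      2 * smoothingConst n * 4 ^ (n + 2) * (decayRate ^ k / (1 - decayRate)) < η := by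
  have hhalf : Tendsto (fun k : ℕ => ((1 : ℝ) / 2) ^ k) atTop (𝓝 0) :=
    tendsto_pow_atTop_nhds_zero_of_lt_one (by norm_num) (by norm_num)
  have hpow : Tendsto (fun k : ℕ => ((1 + ((1 : ℝ) / 2) ^ k) ^ (n + 2)) ^ 2) atTop (𝓝 1) := by
    simpa using ((hhalf.const_add 1).pow (n + 2)).pow 2
  have hdecay : Tendsto (fun k : ℕ => 2 * smoothingConst n * 4 ^ (n + 2) *
      (decayRate ^ k / (1 - decayRate))) atTop (𝓝 0) := by
    simpa using ((tendsto_pow_atTop_nhds_zero_of_lt_one decayRate_pos.le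
      decayRate_lt_one).div_const (1 - decayRate)).const_mul (2 * smoothingConst n * 4 ^ (n + 2))
  exact ((eventually_ge_atTop 11).and ((hhalf.eventually_le_const (capSide_pos n)).and
    ((hpow.eventually_le_const (lt_add_of_pos_right 1 hθ)).and
      (hdecay.eventually_lt_const hη)))).exists

theorem exists_one_lt_pow_le (k : ℕ) {θ : ℝ} (hθ : 0 < θ) :
    ∃ lam : ℝ, 1 < lam ∧ lam ^ k ≤ 1 + θ ∧ lam ^ 2 * decayRate ≤ 1 := by
  have hpow : Tendsto (fun x : ℝ => x ^ k) (𝓝[>] 1) (𝓝 1) :=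
    tendsto_nhdsWithin_of_tendsto_nhds (by simpa using (continuous_pow k).tendsto (1 : ℝ))
  have hdecay : Tendsto (fun x : ℝ => x ^ 2 * decayRate) (𝓝[>] 1) (𝓝 decayRate) :=
    tendsto_nhdsWithin_of_tendsto_nhds (by
      simpa using ((continuous_pow 2).mul_const decayRate).tendsto (1 : ℝ))
  exact (eventually_mem_nhdsWithin.and
    ((hpow.eventually_le_const (lt_add_of_pos_right 1 hθ)).and
      (hdecay.eventually_le_const decayRate_lt_one))).exists

theorem exists_sphereForm_dyadicAverage_pos (n : ℕ) :
    ∃ lam > (1 : ℝ), ∃ l₀ : ℕ, ∀ t ∈ Icc (1 / 4 : ℝ) (1 / 2), ∀ l ≥ l₀, ∀ (J : Type) [Fintype J],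
      ∀ p : J → Fin (n + 2) → ℝ, (∀ j i, p j i ∈ Icc 0 1) → ∀ m ∈ dyadicFrostmanMasses p lam l,
        1 - massDefect (n + 2) ≤ ∑ j, m j →
          0 < sphereForm t (dyadicAverage p m l) (dyadicAverage p m l) := by
  have hcap := capSide_pos n
  have hθ := massDefect_pos (n + 2)
  obtain ⟨k, hk, hkn, hkθ, hkη⟩ := exists_coarse_scale n hθ
    (by positivity : 0 < (1 / 2) ^ (n + 2) / 2 * capSide n ^ (n + 1))
  obtain ⟨lam, hlam, hlamk, hdecay⟩ := exists_one_lt_pow_le (2 * k) hθ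
  have hlam₀ : 0 ≤ lam := zero_le_one.trans hlam.le
  refine ⟨lam, hlam, 2 * k, fun t ht l hl J _ p hp m hm hmass => ?_⟩
  have hcoarse := mul_capSide_pow_le_sphereForm ht
    (isBoundedInBox_dyadicAverage hp hm.1
      (dyadicAverage_le_of_mem_dyadicFrostmanMasses (d := 0) (k := k) hm hlam₀ (by lia)))
    fun z hz => le_correlation_dyadicAverage hp hm hlam.le hl hkθ hlamk hmass hz
  have hcompare := abs_sphereForm_dyadicAverage_sub_le ht hp hm hlam₀ hdecay hk hkn (by lia)
  linarith [(abs_le.1 hcompare).2]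

theorem exists_pair_of_sphereForm_pos {p : J → Fin (n + 2) → ℝ} (ht : t ∈ Icc (1 / 4) (1 / 2))
    (hpos : 0 < sphereForm t (dyadicAverage p m l) (dyadicAverage p m l)) :
    ∃ j j', ∃ v : Fin (n + 2) → ℝ,
      ∑ i, v i ^ 2 = t ^ 2 ∧ ∀ i, |p j' i - p j i - v i| ≤ (1 / 2) ^ l := by
  obtain ⟨w, hw, hcor⟩ : ∃ w ∈ paramBox n 0 (capSide n),
      correlation (dyadicAverage p m l) (dyadicAverage p m l) (capPoint t w) ≠ 0 := by
    by_contra! h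
    exact hpos.ne' (setIntegral_eq_zero_of_forall_eq_zero h)
  obtain ⟨x, hx⟩ : ∃ x, dyadicAverage p m l x * dyadicAverage p m l (x + capPoint t w) ≠ 0 := by
    by_contra! h
    exact hcor (by simp only [correlation, h, integral_zero])
  obtain ⟨j, hj⟩ := exists_mem_dyadicWindow_of_dyadicAverage_ne_zero (left_ne_zero_of_mul hx)
  obtain ⟨j', hj'⟩ := exists_mem_dyadicWindow_of_dyadicAverage_ne_zero (right_ne_zero_of_mul hx)
  refine ⟨j, j', capPoint t w, sum_sq_capPoint ht hw, fun i => ?_⟩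
  obtain ⟨hlow, hhigh⟩ := hj i (mem_univ i)
  obtain ⟨hlow', hhigh'⟩ := hj' i (mem_univ i)
  rw [Pi.add_apply] at hlow' hhigh'
  exact abs_le.2 ⟨by linarith, by linarith⟩

end Positivity

/-! ### The dyadic net on the unit cube -/

section DyadicNet

variable {N : ℕ}

theorem min_floor_two_pow_mul_eq_ediv (k e : ℕ) (x : ℝ) :
    min ⌊(2 : ℝ) ^ k * x⌋ (2 ^ k - 1) = min ⌊(2 : ℝ) ^ (k + e) * x⌋ (2 ^ (k + e) - 1) / 2 ^ e := by
  have hmono : Monotone fun z : ℤ => z / 2 ^ e := fun _ _ h => Int.ediv_le_ediv (by positivity) h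
  rw [hmono.map_min]
  congr 1
  · have hfloor := Int.floor_div_natCast ((2 : ℝ) ^ (k + e) * x) (2 ^ e)
    push_cast at hfloor
    rw [← hfloor, pow_add, mul_right_comm, mul_div_cancel_right₀ _ (by positivity)]
  · have hpos : (0 : ℤ) < 2 ^ e := by positivity
    rw [eq_comm, Int.ediv_eq_iff_of_pos hpos]
    constructor <;> rw [pow_add] <;> nlinarith

theorem isRefining_dyadicCell : IsRefining (dyadicCell (N := N)) := by
  intro k l x y hkl h
  obtain ⟨e, rfl⟩ := Nat.exists_eq_add_of_le hkl
  funext i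
  simp only [dyadicCell, min_floor_two_pow_mul_eq_ediv k e]
  exact congrArg (· / 2 ^ e) (congrFun h i)

theorem dyadicCell_mem_Icc {x : Euc N} (hx : x ∈ unitCube N) (k : ℕ) :
    dyadicCell k x.ofLp ∈ Icc 0 fun _ => 2 ^ k := by
  have hpow : (1 : ℤ) ≤ 2 ^ k := one_le_pow₀ (by norm_num)
  exact ⟨fun i => le_min (Int.floor_nonneg.2 (mul_nonneg (by positivity) (hx i).1))
    (sub_nonneg.2 hpow),
    fun i => (min_le_right _ _).trans (sub_le_self _ zero_le_one)⟩

theorem two_pow_mul_mem_Icc_dyadicCell {x : Euc N} (hx : x ∈ unitCube N) (k : ℕ) (i : Fin N) :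
    2 ^ k * x i ∈ Icc (dyadicCell k x.ofLp i : ℝ) (dyadicCell k x.ofLp i + 1) := by
  simp only [dyadicCell, Int.cast_min, Int.cast_sub, Int.cast_pow, Int.cast_ofNat, Int.cast_one]
  refine ⟨(min_le_left _ _).trans (Int.floor_le _), ?_⟩
  rw [← min_add_add_right, sub_add_cancel]
  exact le_min (Int.lt_floor_add_one _).le (mul_le_of_le_one_right (by positivity) (hx i).2)

/-- The content of `A` relative to the half-open dyadic cells of side `2⁻ᵏ`, `k ≥ 0`, weighted by
`qᵏ`; for `q = 2⁻ˢ` this is an `s`-dimensional dyadic content. -/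
def dyadicNetContent (q : ℝ) (A : Set (Euc N)) : ℝ≥0∞ :=
  netContent (fun k x => dyadicCell k x.ofLp) (fun k => ENNReal.ofReal (q ^ k)) A

theorem netCost_coe_finset {I : Type*} {b : ℕ → ℝ} (hb : ∀ k, 0 ≤ b k) (C : Finset (ℕ × I)) :
    netCost (fun k => ENNReal.ofReal (b k)) (C : Set (ℕ × I)) =
      ENNReal.ofReal (∑ p ∈ C, b p.1) := by
  rw [ENNReal.ofReal_sum_of_nonneg fun p _ => hb p.1, netCost, ← tsum_subtype]
  exact Finset.tsum_subtype' C fun p => ENNReal.ofReal (b p.1)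

theorem exists_mem_dyadicFrostmanMasses {lam θ : ℝ} (hlam : 0 ≤ lam) {B : Set (Euc N)}
    (hB : B ⊆ unitCube N) (hθ : ENNReal.ofReal θ < dyadicNetContent (lam / 2 ^ N) B) (l : ℕ) :
    ∃ (J : Type) (_ : Fintype J) (p : J → Euc N), (∀ j, p j ∈ B) ∧
      ∃ m ∈ dyadicFrostmanMasses (fun j => (p j).ofLp) lam l, θ ≤ ∑ j, m j := by
  let J : Set (Fin N → ℤ) := (fun x : Euc N => dyadicCell l x.ofLp) '' B
  have hJ : J.Finite := (finite_Icc (0 : Fin N → ℤ) fun _ => 2 ^ l).subset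
    (image_subset_iff.2 fun x hx => dyadicCell_mem_Icc (hB hx) l)
  choose p hpB hp using fun j : J => j.2
  have hweight : ∀ k : ℕ, 0 ≤ (lam / 2 ^ N) ^ k := fun k => by positivity
  refine ⟨J, hJ.fintype, p, hpB, @exists_frostman_of_le_cost _ _ hJ.fintype _ _ _ _
    (isRefining_dyadicCell.comp fun j => (p j).ofLp) hweight _ fun C hC => ?_⟩
  have hcov : CellCovers (fun k (x : Euc N) => dyadicCell k x.ofLp) (C : Set _) B := by
    intro x hx
    obtain ⟨k, hk, hmem⟩ := hC ⟨_, mem_image_of_mem _ hx⟩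
    refine ⟨k, ?_⟩
    rwa [isRefining_dyadicCell hk (hp ⟨_, mem_image_of_mem _ hx⟩)] at hmem
  have hlt := hθ.trans_le (netContent_le_netCost hcov)
  rw [netCost_coe_finset hweight] at hlt
  exact (ENNReal.ofReal_lt_ofReal_iff'.1 hlt).1.le

end DyadicNet

/-! ### Distances in subsets of the unit cube -/

section Distances

theorem abs_dist_sub_le_of_sum_sq_eq {N : ℕ} {x y : Euc N} {v : Fin N → ℝ} {t η : ℝ} (ht : 0 ≤ t)
    (hη : 0 ≤ η) (hv : ∑ i, v i ^ 2 = t ^ 2) (h : ∀ i, |y i - x i - v i| ≤ η) :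
    |dist x y - t| ≤ N * η := by
  have hnorm : ‖WithLp.toLp 2 v‖ = t := by
    simp only [EuclideanSpace.norm_eq, Real.norm_eq_abs, sq_abs, hv, Real.sqrt_sq ht]
  have hclose : ‖y - x - WithLp.toLp 2 v‖ ≤ N * η := by
    rw [EuclideanSpace.norm_eq, Real.sqrt_le_left (by positivity)]
    calc ∑ i, ‖(y - x - WithLp.toLp 2 v) i‖ ^ 2 ≤ ∑ _i : Fin N, η ^ 2 := by
          gcongr with i
          exact h i
      _ = N * η ^ 2 := by simp
      _ ≤ (N * η) ^ 2 := by
          rw [mul_pow]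
          gcongr
          exact_mod_cast Nat.le_self_pow two_ne_zero N
  rw [dist_comm, dist_eq_norm, ← hnorm]
  exact (abs_norm_sub_norm_le _ _).trans hclose

theorem exists_dist_eq_of_forall_abs_dist_sub_lt {V : Type*} [PseudoMetricSpace V] {K : Set V}
    (hK : IsCompact K) {t : ℝ} (h : ∀ η > 0, ∃ x ∈ K, ∃ y ∈ K, |dist x y - t| < η) :
    ∃ x ∈ K, ∃ y ∈ K, dist x y = t := by
  have hclosed : IsClosed ((fun p : V × V => dist p.1 p.2) '' (K ×ˢ K)) :=
    ((hK.prod hK).image continuous_dist).isClosed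
  have ht : t ∈ (fun p : V × V => dist p.1 p.2) '' (K ×ˢ K) := by
    refine hclosed.closure_subset (Metric.mem_closure_iff.2 fun η hη => ?_)
    obtain ⟨x, hx, y, hy, hxy⟩ := h η hη
    exact ⟨_, mem_image_of_mem _ (mk_mem_prod hx hy), by rwa [dist_comm, Real.dist_eq]⟩
  obtain ⟨⟨x, y⟩, ⟨hx, hy⟩, hxy⟩ := ht
  exact ⟨x, hx, y, hy, hxy⟩

theorem exists_nat_ge_mul_half_pow_lt (l₀ : ℕ) (c : ℝ) {η : ℝ} (hη : 0 < η) :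
    ∃ l ≥ l₀, c * (1 / 2) ^ l < η := by
  have hlim : Tendsto (fun l : ℕ => c * (1 / 2 : ℝ) ^ l) atTop (𝓝 0) := by
    simpa using (tendsto_pow_atTop_nhds_zero_of_lt_one (r := (1 / 2 : ℝ)) (by norm_num)
      (by norm_num)).const_mul c
  exact ((eventually_ge_atTop l₀).and (hlim.eventually_lt_const hη)).exists

theorem exists_forall_exists_dist_eq (n : ℕ) :
    ∃ lam > (1 : ℝ), ∀ t ∈ Icc (1 / 4 : ℝ) (1 / 2), ∀ A : Set (Euc (n + 2)), AnalyticSet A →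
      A ⊆ unitCube (n + 2) →
      ENNReal.ofReal (1 - massDefect (n + 2)) < dyadicNetContent (lam / 2 ^ (n + 2)) A →
      ∃ x ∈ A, ∃ y ∈ A, dist x y = t := by
  obtain ⟨lam, hlam, l₀, hpos⟩ := exists_sphereForm_dyadicAverage_pos n
  refine ⟨lam, hlam, fun t ht A hA hAcube hcontent => ?_⟩
  obtain ⟨K, hKA, hK, hthick⟩ := exists_isCompact_netContent_thickening
    (isRefining_dyadicCell.comp WithLp.ofLp) hA hcontent
  suffices h : ∃ x ∈ K, ∃ y ∈ K, dist x y = t by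
    obtain ⟨x, hx, y, hy, hxy⟩ := h
    exact ⟨x, hKA hx, y, hKA hy, hxy⟩
  refine exists_dist_eq_of_forall_abs_dist_sub_lt hK fun η hη => ?_
  obtain ⟨l, hl, hlη⟩ := exists_nat_ge_mul_half_pow_lt l₀ ((n : ℝ) + 4) hη
  have hscale : (0 : ℝ) < (1 / 2) ^ l := by positivity
  obtain ⟨J, _, p, hpB, m, hm, hmass⟩ := exists_mem_dyadicFrostmanMasses
    (zero_le_one.trans hlam.le) (inter_subset_left.trans hAcube) (hthick _ hscale) l
  obtain ⟨j, j', v, hv, hclose⟩ := exists_pair_of_sphereForm_pos ht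
    (hpos t ht l hl J _ (fun j i => hAcube (hpB j).1 i) m hm hmass)
  have hdist := abs_dist_sub_le_of_sum_sq_eq (by linarith [ht.1]) hscale.le hv hclose
  obtain ⟨x, hx, hjx⟩ := mem_thickening_iff.1 (hpB j).2
  obtain ⟨y, hy, hjy⟩ := mem_thickening_iff.1 (hpB j').2
  refine ⟨x, hx, y, hy, ?_⟩
  have hperturb : |dist x y - dist (p j) (p j')| ≤ dist x (p j) + dist y (p j') := by
    simpa only [Real.dist_eq] using dist_dist_dist_le x y (p j) (p j')
  rw [dist_comm x (p j), dist_comm y (p j')] at hperturb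
  push_cast at hdist
  calc |dist x y - t| ≤ |dist x y - dist (p j) (p j')| + |dist (p j) (p j') - t| :=
        abs_sub_le _ _ _
    _ < η := by linarith

end Distances

/-! ### Rescaling a dyadic cube -/

section Rescaling

variable {N : ℕ} {s q : ℝ} {E : Set (Euc N)} {k : ℤ} {m : Fin N → ℤ}

/-- The closed dyadic cube `2⁻ᵏ(m + [0,1]ᴺ)`. -/
def dyadicCube (k : ℤ) (m : Fin N → ℤ) : Set (Euc N) :=
  {x | ∀ i, (m i : ℝ) * (2 : ℝ) ^ (-k) ≤ x i ∧ x i ≤ ((m i : ℝ) + 1) * (2 : ℝ) ^ (-k)}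

/-- The similarity `y ↦ 2⁻ᵏ(m + y)` taking the unit cube to `dyadicCube k m`. -/
def cubeMap (k : ℤ) (m : Fin N → ℤ) (y : Euc N) : Euc N :=
  WithLp.toLp 2 fun i => ((m i : ℝ) + y i) * (2 : ℝ) ^ (-k)

theorem continuous_cubeMap : Continuous (cubeMap k m) :=
  (PiLp.continuous_toLp 2 _).comp (by fun_prop)

theorem dist_cubeMap (x y : Euc N) :
    dist (cubeMap k m x) (cubeMap k m y) = dist x y * 2 ^ (-k) := by
  have hsub : cubeMap k m x - cubeMap k m y = (2 : ℝ) ^ (-k) • (x - y) := by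
    ext i
    simp only [cubeMap, PiLp.sub_apply, PiLp.smul_apply, smul_eq_mul]
    ring
  rw [dist_eq_norm, hsub, norm_smul, dist_eq_norm, Real.norm_of_nonneg (by positivity), mul_comm]

theorem image_cubeMap_unitCube : cubeMap k m '' unitCube N = dyadicCube k m := by
  have hpos : (0 : ℝ) < 2 ^ (-k) := by positivity
  ext x
  constructor
  · rintro ⟨y, hy, rfl⟩ i
    exact ⟨mul_le_mul_of_nonneg_right (by linarith [(hy i).1]) hpos.le,
      mul_le_mul_of_nonneg_right (by linarith [(hy i).2]) hpos.le⟩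
  · refine fun hx => ⟨WithLp.toLp 2 fun i => x i / 2 ^ (-k) - m i, fun i => ⟨?_, ?_⟩, ?_⟩
    · rw [sub_nonneg, le_div_iff₀ hpos]
      exact (hx i).1
    · rw [sub_le_iff_le_add', div_le_iff₀ hpos]
      exact (hx i).2
    · ext i
      simp only [cubeMap, add_sub_cancel, div_mul_cancel₀ _ hpos.ne']

theorem cubeMap_mem_dyadicCube_dyadicCell {y : Euc N} (hy : y ∈ unitCube N) (K : ℕ) :
    cubeMap k m y ∈ dyadicCube (k + K) fun i => m i * 2 ^ K + dyadicCell K y.ofLp i := by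
  intro i
  obtain ⟨hlow, hhigh⟩ := two_pow_mul_mem_Icc_dyadicCell hy K i
  have hscale : (2 : ℝ) ^ (-k) = 2 ^ K * 2 ^ (-(k + (K : ℤ))) := by
    rw [← zpow_natCast, ← zpow_add₀ two_ne_zero, neg_add_rev, add_neg_cancel_left]
  simp only [cubeMap, hscale, ← mul_assoc]
  push_cast
  constructor <;> gcongr <;> linarith

theorem two_zpow_neg_rpow (K : ℕ) (s : ℝ) : ((2 : ℝ) ^ (-(K : ℤ))) ^ s = (2 ^ (-s)) ^ K := by
  rw [zpow_neg, zpow_natCast, Real.inv_rpow (by positivity), Real.rpow_neg two_pos.le, inv_pow,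
    Real.rpow_pow_comm two_pos.le]

theorem two_zpow_neg_add_rpow (k : ℤ) (K : ℕ) (s : ℝ) :
    ((2 : ℝ) ^ (-(k + (K : ℤ)))) ^ s = (2 ^ (-k)) ^ s * (2 ^ (-s)) ^ K := by
  rw [neg_add, zpow_add₀ two_ne_zero, Real.mul_rpow (by positivity) (by positivity),
    two_zpow_neg_rpow]

theorem exists_two_zpow_neg_rpow_le (hs : 0 < s) {ε : ℝ≥0} (hε : 0 < ε) :
    ∃ K : ℕ, ENNReal.ofReal (((2 : ℝ) ^ (-(K : ℤ))) ^ s) ≤ ε := by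
  obtain ⟨K, hK⟩ := exists_pow_lt_of_lt_one (NNReal.coe_pos.2 hε)
    (Real.rpow_lt_one_of_one_lt_of_neg one_lt_two (neg_lt_zero.2 hs))
  refine ⟨K, ?_⟩
  rw [two_zpow_neg_rpow]
  exact ENNReal.ofReal_le_of_le_toReal hK.le

/- The covers in `dyadicContent` are indexed by `ℕ`; a family indexed by a countable, possibly
finite, type is completed by arbitrarily small cubes. -/
theorem dyadicContent_le_tsum {ι : Type*} [Countable ι] (hs : 0 < s) {κ : ι → ℤ}
    {μ : ι → Fin N → ℤ} (hE : E ⊆ ⋃ p, dyadicCube (κ p) (μ p)) :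
    dyadicContent s E ≤ ∑' p, ENNReal.ofReal (((2 : ℝ) ^ (-κ p)) ^ s) := by
  refine ENNReal.le_of_forall_pos_le_add fun ε hε _ => ?_
  obtain ⟨δ, hδ, hδε⟩ := ENNReal.exists_pos_sum_of_countable (ENNReal.coe_ne_zero.2 hε.ne') ℕ
  choose K hK using fun i => exists_two_zpow_neg_rpow_le hs (hδ i)
  let κ' : ι ⊕ ℕ → ℤ := Sum.elim κ fun i => K i
  let μ' : ι ⊕ ℕ → Fin N → ℤ := Sum.elim μ 0
  obtain ⟨e⟩ : Nonempty (ℕ ≃ ι ⊕ ℕ) := nonempty_equiv_of_countable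
  have hcover : E ⊆ ⋃ i, dyadicCube (κ' (e i)) (μ' (e i)) := by
    rw [e.surjective.iUnion_comp fun p => dyadicCube (κ' p) (μ' p)]
    exact hE.trans (iUnion_subset fun p => subset_iUnion_of_subset (Sum.inl p) Subset.rfl)
  calc dyadicContent s E ≤ ∑' i, ENNReal.ofReal (((2 : ℝ) ^ (-κ' (e i))) ^ s) :=
        iInf₂_le_of_le _ _ (iInf₂_le (fun i => ⟨κ' (e i), μ' (e i), rfl, rfl⟩) hcover)
    _ = ∑' p, ENNReal.ofReal (((2 : ℝ) ^ (-κ' p)) ^ s) :=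
        e.tsum_eq fun p => ENNReal.ofReal (((2 : ℝ) ^ (-κ' p)) ^ s)
    _ = ∑' p, ENNReal.ofReal (((2 : ℝ) ^ (-κ p)) ^ s) +
          ∑' i, ENNReal.ofReal (((2 : ℝ) ^ (-(K i : ℤ))) ^ s) :=
        (ENNReal.summable.hasSum.sum ENNReal.summable.hasSum).tsum_eq
    _ ≤ ∑' p, ENNReal.ofReal (((2 : ℝ) ^ (-κ p)) ^ s) + ε := by
        gcongr
        exact (ENNReal.tsum_le_tsum hK).trans hδε.le

theorem dyadicContent_inter_dyadicCube_le (hs : 0 < s) (hq : (2 : ℝ) ^ (-s) ≤ q) :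
    dyadicContent s (E ∩ dyadicCube k m) ≤
      ENNReal.ofReal (((2 : ℝ) ^ (-k)) ^ s) *
        dyadicNetContent q (unitCube N ∩ cubeMap k m ⁻¹' E) := by
  simp only [dyadicNetContent, netContent, ENNReal.mul_iInf_of_ne
    (ENNReal.ofReal_pos.2 (by positivity : 0 < ((2 : ℝ) ^ (-k)) ^ s)).ne' ENNReal.ofReal_ne_top]
  refine le_iInf₂ fun C hC => ?_
  have hcover : E ∩ dyadicCube k m ⊆
      ⋃ p : C, dyadicCube (k + p.1.1) fun i => m i * 2 ^ p.1.1 + p.1.2 i := by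
    rw [← image_cubeMap_unitCube]
    rintro _ ⟨hE, y, hy, rfl⟩
    obtain ⟨K, hK⟩ := hC y ⟨hy, hE⟩
    exact mem_iUnion.2 ⟨⟨_, hK⟩, cubeMap_mem_dyadicCube_dyadicCell hy K⟩
  refine (dyadicContent_le_tsum hs hcover).trans ?_
  rw [netCost, ← tsum_subtype, ← ENNReal.tsum_mul_left]
  refine ENNReal.tsum_le_tsum fun p => ?_
  rw [← ENNReal.ofReal_mul (by positivity), two_zpow_neg_add_rpow]
  gcongr

theorem analyticSet_unitCube_inter_preimage_cubeMap (hE : AnalyticSet E) :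
    AnalyticSet (unitCube N ∩ cubeMap k m ⁻¹' E) := by
  have hclosed : IsClosed (unitCube N) := by
    simp only [unitCube, ofPred_forall]
    exact isClosed_iInter fun i => isClosed_Icc.preimage (by fun_prop)
  rw [inter_eq_iInter]
  exact AnalyticSet.iInter
    (Bool.forall_bool.2 ⟨hE.preimage continuous_cubeMap, hclosed.analyticSet⟩)

end Rescaling

theorem two_rpow_neg_le_div_two_pow {lam s : ℝ} {N : ℕ} (hlam : 0 < lam)
    (hs : N - Real.logb 2 lam ≤ s) : (2 : ℝ) ^ (-s) ≤ lam / 2 ^ N :=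
  calc (2 : ℝ) ^ (-s) ≤ 2 ^ (Real.logb 2 lam - N) :=
        Real.rpow_le_rpow_of_exponent_le one_le_two (by linarith)
    _ = lam / 2 ^ N := by
        rw [Real.rpow_sub two_pos, Real.rpow_logb two_pos one_lt_two.ne' hlam, Real.rpow_natCast]

theorem statement3_general (d : ℕ) (hd : 2 ≤ d) :
    ∃ ρ₀ : ℝ, 0 < ρ₀ ∧ ∃ ε : ℝ, 0 < ε ∧
      ∀ E : Set (Euc d), AnalyticSet E → ∀ s : ℝ, (d : ℝ) - ε < s →
        ∀ (Q : Set (Euc d)) (l : ℝ), IsDyadicCube Q l →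
          ENNReal.ofReal ((1 - ρ₀) * l ^ s) < dyadicContent s (E ∩ Q) →
          Icc (1 / 4 * l) (1 / 2 * l) ⊆ distSet (E ∩ Q) (E ∩ Q) := by
  obtain ⟨n, rfl⟩ := Nat.exists_eq_add_of_le' hd
  obtain ⟨lam, hlam, hdist⟩ := exists_forall_exists_dist_eq n
  refine ⟨massDefect (n + 2), massDefect_pos _, min 1 (Real.logb 2 lam),
    lt_min one_pos (Real.logb_pos one_lt_two hlam), ?_⟩
  rintro E hE s hs Q l ⟨k, m, rfl, rfl⟩ hcontent t ht
  change _ < dyadicContent s (E ∩ dyadicCube k m) at hcontent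
  have hs₀ : 0 < s := by
    push_cast at hs
    linarith [min_le_left 1 (Real.logb 2 lam), (Nat.cast_nonneg n : (0 : ℝ) ≤ n)]
  have hq := two_rpow_neg_le_div_two_pow (N := n + 2) (zero_lt_one.trans hlam)
    (s := s) (by linarith [min_le_right 1 (Real.logb 2 lam)])
  have hl : (0 : ℝ) < 2 ^ (-k) := by positivity
  have hnet : ENNReal.ofReal (1 - massDefect (n + 2)) <
      dyadicNetContent (lam / 2 ^ (n + 2)) (unitCube (n + 2) ∩ cubeMap k m ⁻¹' E) := by
    rw [mul_comm, ENNReal.ofReal_mul (by positivity)] at hcontent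
    exact lt_of_mul_lt_mul_left' (hcontent.trans_le (dyadicContent_inter_dyadicCube_le hs₀ hq))
  obtain ⟨x, ⟨hxQ, hxE⟩, y, ⟨hyQ, hyE⟩, hxy⟩ := hdist (t / 2 ^ (-k))
    ⟨(le_div_iff₀ hl).2 ht.1, (div_le_iff₀ hl).2 ht.2⟩ _
    (analyticSet_unitCube_inter_preimage_cubeMap hE) inter_subset_left hnet
  have hmem : ∀ z ∈ unitCube (n + 2), cubeMap k m z ∈ dyadicCube k m := fun z hz =>
    image_cubeMap_unitCube ▸ mem_image_of_mem _ hz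
  exact ⟨_, ⟨hxE, hmem x hxQ⟩, _, ⟨hyE, hmem y hyQ⟩,
    by rw [dist_cubeMap, hxy, div_mul_cancel₀ _ hl.ne']⟩

/-- Theorem 1.4 (quantitative Mattila–Sjölin): for `d ≥ 2` and all sufficiently small
`ρ ∈ (0,1)` there are `0 < a_ρ < b_ρ < 1` and `ε_ρ > 0` such that for every Borel
`E ⊆ [0,1]^d` with `H^s(E) > 0` for some `s > d - ε_ρ`, the distance set `Δ(E)`
contains `ℓ(Q)·[a_ρ, b_ρ]` for every dyadic cube `Q ∈ D_ρ(E;s)`. -/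
theorem statement3 (d : ℕ) (hd : 2 ≤ d) :
    ∃ ρ₀ : ℝ, 0 < ρ₀ ∧ ∀ ρ : ℝ, 0 < ρ → ρ < ρ₀ →
      ∃ a b ε : ℝ, 0 < a ∧ a < b ∧ b < 1 ∧ 0 < ε ∧
        ∀ E : Set (Euc d), MeasurableSet E → E ⊆ unitCube d →
          ∀ s : ℝ, (d : ℝ) - ε < s → 0 < μH[s] E →
          ∀ (Q : Set (Euc d)) (l : ℝ), IsDyadicCube Q l → Q ⊆ unitCube d →
            ENNReal.ofReal ((1 - ρ) * l ^ s) < dyadicContent s (E ∩ Q) →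
            Icc (a * l) (b * l) ⊆ distSet E E := by
  obtain ⟨ρ₀, hρ₀, ε, hε, hdist⟩ := statement3_general d hd
  refine ⟨ρ₀, hρ₀, fun ρ _ hρ => ⟨1 / 4, 1 / 2, ε, by norm_num, by norm_num, by norm_num, hε, ?_⟩⟩
  intro E hE _ s hs _ Q l hQ _ hcontent t ht
  have hl : 0 ≤ l := by
    obtain ⟨k, _, rfl, _⟩ := hQ
    positivity
  have hle : (1 - ρ₀) * l ^ s ≤ (1 - ρ) * l ^ s := by gcongr
  obtain ⟨x, hx, y, hy, hxy⟩ := hdist E hE.analyticSet s hs Q l hQ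
    ((ENNReal.ofReal_le_ofReal hle).trans_lt hcontent) ht
  exact ⟨x, hx.1, y, hy.1, hxy⟩
end
end

section
/- For every d ≥ 2 there exists ε_d > 0 such that for every s ∈ (d − ε_d, d) there exists a totally disconnected set E ⊆ ℝ^d of Hausdorff dimension exactly s such that Δ(E) contains an interval of the form [0, a) for some a > 0. -/
open MeasureTheory Set Metric Filter
open scoped ENNReal NNReal Topology

noncomputable section

/-!
A set of dimension zero can already realize every distance: in a separable Banach space, balls of
radius `2⁻ⁿ` around the terms of a dense sequence give a dense `Gδ` set `L` with `dimH L = 0`, and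
by Baire's theorem `L` meets each of its translates `L - v`, so `‖v‖` is a distance in `L`. Adding
to `L` a product `K` of Cantor sets with `dimH K = s` brings the dimension up to `s`. Each
coordinate projection of `K ∪ L` has dimension less than one, hence contains no interval, so
`K ∪ L` is totally disconnected.
-/

lemma hausdorffMeasure_limsup_atTop_eq_zero {X : Type*} [EMetricSpace X] [MeasurableSpace X]
    [BorelSpace X] {A : ℕ → Set X} {s : ℝ} (hs : 0 < s) (hA : ∑' n, ediam (A n) ^ s ≠ ∞) :
    Measure.hausdorffMeasure s (limsup A atTop) = 0 := by
  have tail_tendsto : Tendsto (fun n => ∑' k, ediam (A (k + n)) ^ s) atTop (𝓝 0) :=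
    ENNReal.tendsto_sum_nat_add _ hA
  have radius_tendsto :
      Tendsto (fun n => (∑' k, ediam (A (k + n)) ^ s) ^ s⁻¹) atTop (𝓝 0) := by
    simpa [hs] using tail_tendsto.ennrpow_const s⁻¹
  have ediam_le (n k : ℕ) : ediam (A (k + n)) ≤ (∑' k, ediam (A (k + n)) ^ s) ^ s⁻¹ := by
    rw [ENNReal.le_rpow_inv_iff hs]
    exact ENNReal.le_tsum k
  have limsup_subset (n : ℕ) : limsup A atTop ⊆ ⋃ k, A (k + n) := by
    rw [limsup_eq_iInf_iSup_of_nat']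
    exact iInter_subset_of_subset n subset_rfl
  refine le_antisymm ?_ zero_le
  calc Measure.hausdorffMeasure s (limsup A atTop)
      ≤ liminf (fun n => ∑' k, ediam (A (k + n)) ^ s) atTop :=
        Measure.hausdorffMeasure_le_liminf_tsum s _ _ radius_tendsto (fun n k => A (k + n))
          (.of_forall ediam_le) (.of_forall limsup_subset)
    _ = 0 := tail_tendsto.liminf_eq

lemma dimH_limsup_eball_eq_zero {X : Type*} [EMetricSpace X] (x : ℕ → X) :
    dimH (limsup (fun n => eball (x n) (2⁻¹ ^ n)) atTop) = 0 := by
  borelize X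
  have ediam_rpow_le (s : ℝ≥0) (n : ℕ) :
      ediam (eball (x n) (2⁻¹ ^ n)) ^ (s : ℝ) ≤ 2 ^ (s : ℝ) * (2⁻¹ ^ (s : ℝ)) ^ n := by
    calc ediam (eball (x n) (2⁻¹ ^ n)) ^ (s : ℝ) ≤ (2 * 2⁻¹ ^ n) ^ (s : ℝ) := by
          gcongr
          exact ediam_eball_le
      _ = 2 ^ (s : ℝ) * (2⁻¹ ^ (s : ℝ)) ^ n := by
          rw [ENNReal.mul_rpow_of_nonneg _ _ s.coe_nonneg, ← ENNReal.rpow_natCast_mul,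
            mul_comm (n : ℝ), ENNReal.rpow_mul_natCast]
  have tsum_ne_top (s : ℝ≥0) (hs : 0 < s) :
      ∑' n, ediam (eball (x n) (2⁻¹ ^ n)) ^ (s : ℝ) ≠ ∞ := by
    refine ne_top_of_le_ne_top ?_ (ENNReal.tsum_le_tsum (ediam_rpow_le s))
    have ratio_lt_one : (2⁻¹ : ℝ≥0∞) ^ (s : ℝ) < 1 :=
      ENNReal.rpow_lt_one (by norm_num) (by exact_mod_cast hs)
    rw [ENNReal.tsum_mul_left, ENNReal.tsum_geometric]
    exact ENNReal.mul_ne_top (by simp) (ENNReal.inv_ne_top.2 (tsub_pos_of_lt ratio_lt_one).ne')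
  refine le_antisymm (ENNReal.le_of_forall_pos_le_add fun s hs _ => ?_) zero_le
  rw [zero_add]
  refine dimH_le_of_hausdorffMeasure_ne_top ?_
  rw [hausdorffMeasure_limsup_atTop_eq_zero (by exact_mod_cast hs) (tsum_ne_top s hs)]
  exact ENNReal.zero_ne_top

lemma exists_isGδ_dense_dimH_eq_zero (X : Type*) [EMetricSpace X]
    [TopologicalSpace.SeparableSpace X] [Nonempty X] :
    ∃ G : Set X, IsGδ G ∧ Dense G ∧ dimH G = 0 := by
  -- Enumerating the centers with infinite repetition keeps every one of them in the limsup.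
  let center (n : ℕ) : X := TopologicalSpace.denseSeq X n.unpair.1
  refine ⟨limsup (fun n => eball (center n) (2⁻¹ ^ n)) atTop, ?_, ?_,
    dimH_limsup_eball_eq_zero center⟩
  · rw [limsup_eq_iInf_iSup_of_nat']
    exact .iInter fun n => (isOpen_iUnion fun k => isOpen_eball).isGδ
  · refine (TopologicalSpace.denseRange_denseSeq X).mono ?_
    rintro _ ⟨m, rfl⟩
    rw [mem_limsup_iff_frequently_mem, frequently_atTop]
    intro n
    refine ⟨Nat.pair m n, Nat.right_le_pair m n, ?_⟩
    simp [center, ENNReal.pow_pos]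

lemma exists_mem_add_mem_of_mem_residual {V : Type*} [TopologicalSpace V] [AddGroup V]
    [ContinuousAdd V] [BaireSpace V] {G : Set V} (hG : G ∈ residual V) (v : V) :
    ∃ x ∈ G, x + v ∈ G := by
  have translate_mem : (· + v) ⁻¹' G ∈ residual V :=
    tendsto_residual_of_isOpenMap (continuous_add_const v) (isOpenMap_add_right v) hG
  exact (dense_of_mem_residual (inter_mem hG translate_mem)).nonempty

lemma exists_isGδ_dimH_eq_zero_forall_dist_eq (V : Type*) [NormedAddCommGroup V] [NormedSpace ℝ V]
    [CompleteSpace V] [TopologicalSpace.SeparableSpace V] [Nontrivial V] :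
    ∃ L : Set V, IsGδ L ∧ dimH L = 0 ∧ ∀ t : ℝ, 0 ≤ t → ∃ x ∈ L, ∃ y ∈ L, dist x y = t := by
  obtain ⟨L, isGδ_L, dense_L, dimH_L⟩ := exists_isGδ_dense_dimH_eq_zero V
  refine ⟨L, isGδ_L, dimH_L, fun t ht => ?_⟩
  obtain ⟨v, hv⟩ := exists_norm_eq V ht
  obtain ⟨x, hx, hxv⟩ :=
    exists_mem_add_mem_of_mem_residual (residual_of_dense_Gδ isGδ_L dense_L) v
  exact ⟨x, hx, x + v, hxv, by rw [dist_self_add_right, hv]⟩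

lemma subsingleton_of_isPreconnected_of_dimH_lt_one {S : Set ℝ} (hS : IsPreconnected S)
    (hdim : dimH S < 1) : S.Subsingleton := by
  by_contra hne
  obtain ⟨a, ha, b, hb, hab⟩ := (not_subsingleton_iff.1 hne).exists_lt
  have interior_nonempty : (interior S).Nonempty :=
    (nonempty_Ioo.2 hab).mono
      (interior_maximal (Ioo_subset_Icc_self.trans (hS.Icc_subset ha hb)) isOpen_Ioo)
  simp [Real.dimH_of_nonempty_interior interior_nonempty] at hdim

lemma isTotallyDisconnected_of_forall_dimH_image_lt_one {X ι : Type*} [TopologicalSpace X]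
    {E : Set X} {f : ι → X → ℝ} (hf : ∀ i, ContinuousOn (f i) E) (hinj : InjOn (fun x i => f i x) E)
    (hdim : ∀ i, dimH (f i '' E) < 1) : IsTotallyDisconnected E := by
  intro T hTE hT x hx y hy
  refine hinj (hTE hx) (hTE hy) (funext fun i => ?_)
  have image_subsingleton : (f i '' T).Subsingleton :=
    subsingleton_of_isPreconnected_of_dimH_lt_one (hT.image _ ((hf i).mono hTE))
      ((dimH_mono (image_mono hTE)).trans_lt (hdim i))
  exact image_subsingleton (mem_image_of_mem _ hx) (mem_image_of_mem _ hy)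

lemma dimH_range_le_of_dist_le {J X Y : Type*} [MetricSpace X] [MetricSpace Y] {f : J → Y}
    {g : J → X} {C α : ℝ≥0} (hα : 0 < α)
    (hfg : ∀ a b, dist (f a) (f b) ≤ C * dist (g a) (g b) ^ (α : ℝ)) :
    dimH (range f) ≤ dimH (range g) / α := by
  cases isEmpty_or_nonempty J
  · simp [range_eq_empty]
  have : Nonempty Y := .map f inferInstance
  have factorsThrough : f.FactorsThrough g := fun a b hab => by
    simpa [hab, hα.ne'] using hfg a b
  obtain ⟨h, rfl⟩ := (Function.factorsThrough_iff f).1 factorsThrough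
  have holder : HolderOnWith C α h (range g) := by
    rintro _ ⟨a, rfl⟩ _ ⟨b, rfl⟩
    rw [edist_nndist, edist_nndist, ← ENNReal.coe_rpow_of_nonneg _ α.coe_nonneg]
    exact_mod_cast hfg a b
  rw [range_comp]
  exact holder.dimH_image_le hα

lemma dimH_le_of_forall_cover {X : Type*} [EMetricSpace X] {K : Set X} {κ : ℕ → Type*}
    [∀ n, Fintype (κ n)] {t : ∀ n, κ n → Set X} {C r N s : ℝ≥0} (hr : r < 1)
    (hN : N * r ^ (s : ℝ) ≤ 1) (hcard : ∀ n, (Fintype.card (κ n) : ℝ≥0) ≤ N ^ n)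
    (hdiam : ∀ n i, ediam (t n i) ≤ C * (r : ℝ≥0∞) ^ n) (hcover : ∀ n, K ⊆ ⋃ i, t n i) :
    dimH K ≤ s := by
  borelize X
  suffices Measure.hausdorffMeasure s K ≤ (C ^ (s : ℝ) : ℝ≥0) from
    dimH_le_of_hausdorffMeasure_ne_top (ne_top_of_le_ne_top ENNReal.coe_ne_top this)
  have radius_tendsto : Tendsto (fun n => C * (r : ℝ≥0∞) ^ n) atTop (𝓝 0) := by
    simpa using ENNReal.Tendsto.const_mul
      (ENNReal.tendsto_pow_atTop_nhds_zero_of_lt_one (by exact_mod_cast hr))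
      (.inr ENNReal.coe_ne_top)
  have sum_le (n : ℕ) : ∑ i, ediam (t n i) ^ (s : ℝ) ≤ (C ^ (s : ℝ) : ℝ≥0) := by
    calc ∑ i, ediam (t n i) ^ (s : ℝ)
        ≤ ∑ _i : κ n, (C * (r : ℝ≥0∞) ^ n) ^ (s : ℝ) := by gcongr; exact hdiam n _
      _ = ((Fintype.card (κ n) * (C * r ^ n) ^ (s : ℝ) : ℝ≥0) : ℝ≥0∞) := by
          rw [Finset.sum_const, Finset.card_univ, nsmul_eq_mul]
          push_cast [ENNReal.coe_rpow_of_nonneg _ s.coe_nonneg]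
          rfl
      _ ≤ _ := by
          gcongr
          calc (Fintype.card (κ n) : ℝ≥0) * (C * r ^ n) ^ (s : ℝ)
              ≤ N ^ n * (C * r ^ n) ^ (s : ℝ) := by gcongr; exact hcard n
            _ = C ^ (s : ℝ) * (N * r ^ (s : ℝ)) ^ n := by
                rw [NNReal.mul_rpow, ← NNReal.rpow_natCast_mul, mul_comm (n : ℝ),
                  NNReal.rpow_mul_natCast, mul_pow]
                ring
            _ ≤ C ^ (s : ℝ) := mul_le_of_le_one_right zero_le (pow_le_one₀ zero_le hN)
  calc Measure.hausdorffMeasure (s : ℝ) K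
      ≤ liminf (fun n => ∑ i, ediam (t n i) ^ (s : ℝ)) atTop :=
        Measure.hausdorffMeasure_le_liminf_sum _ K _ radius_tendsto t (.of_forall hdiam)
          (.of_forall hcover)
    _ ≤ liminf (fun _ : ℕ => ((C ^ (s : ℝ) : ℝ≥0) : ℝ≥0∞)) atTop :=
        liminf_le_liminf (.of_forall sum_le)
    _ = (C ^ (s : ℝ) : ℝ≥0) := by simp

open Cardinal (cantorFunction)

section CantorFunction

variable {r : ℝ} {f g : ℕ → Bool} {n : ℕ}

lemma cantorFunction_nonneg (hr₀ : 0 ≤ r) : 0 ≤ cantorFunction r f :=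
  tsum_nonneg fun _ => Cardinal.cantorFunctionAux_nonneg hr₀

lemma cantorFunction_le_inv_one_sub (hr₀ : 0 ≤ r) (hr₁ : r < 1) :
    cantorFunction r f ≤ (1 - r)⁻¹ := by
  calc cantorFunction r f ≤ cantorFunction r fun _ => true :=
        Cardinal.cantorFunction_le hr₀ hr₁ fun _ _ => rfl
    _ = (1 - r)⁻¹ := tsum_geometric_of_lt_one hr₀ hr₁

lemma continuous_cantorFunction (hr₀ : 0 ≤ r) (hr₁ : r < 1) : Continuous (cantorFunction r) := by
  refine continuous_tsum (fun n => ?_) (summable_geometric_of_lt_one hr₀ hr₁) fun n f => ?_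
  · exact (continuous_of_discreteTopology (f := fun b : Bool => cond b (r ^ n) 0)).comp
      (continuous_apply n)
  · cases h : f n <;> simp [h, abs_of_nonneg hr₀, hr₀]

lemma cantorFunction_sub_cantorFunction (hr₀ : 0 ≤ r) (hr₁ : r < 1) (hfg : ∀ k < n, f k = g k) :
    cantorFunction r f - cantorFunction r g =
      r ^ n * (cantorFunction r (fun k => f (k + n)) - cantorFunction r (fun k => g (k + n))) := by
  induction n generalizing f g with
  | zero => simp
  | succ n ih =>
    rw [Cardinal.cantorFunction_succ f hr₀ hr₁, Cardinal.cantorFunction_succ g hr₀ hr₁,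
      hfg 0 n.succ_pos, add_sub_add_left_eq_sub, ← mul_sub,
      ih fun k hk => hfg (k + 1) (Nat.succ_lt_succ hk), pow_succ', mul_assoc]
    rfl

lemma dist_cantorFunction_le (hr₀ : 0 ≤ r) (hr₁ : r < 1) (hfg : ∀ k < n, f k = g k) :
    dist (cantorFunction r f) (cantorFunction r g) ≤ (1 - r)⁻¹ * r ^ n := by
  rw [Real.dist_eq, cantorFunction_sub_cantorFunction hr₀ hr₁ hfg, abs_mul,
    abs_of_nonneg (pow_nonneg hr₀ n), mul_comm]
  gcongr
  exact abs_sub_le_of_nonneg_of_le (cantorFunction_nonneg hr₀)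
    (cantorFunction_le_inv_one_sub hr₀ hr₁) (cantorFunction_nonneg hr₀)
    (cantorFunction_le_inv_one_sub hr₀ hr₁)

lemma le_cantorFunction_sub_cantorFunction_of_head (hr₀ : 0 ≤ r) (hr₁ : r < 1)
    (hf : f 0 = true) (hg : g 0 = false) :
    (1 - 2 * r) / (1 - r) ≤ cantorFunction r f - cantorFunction r g := by
  have f_tail : 0 ≤ r * cantorFunction r fun k => f (k + 1) :=
    mul_nonneg hr₀ (cantorFunction_nonneg hr₀)
  have g_tail : (r * cantorFunction r fun k => g (k + 1)) ≤ r * (1 - r)⁻¹ :=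
    mul_le_mul_of_nonneg_left (cantorFunction_le_inv_one_sub hr₀ hr₁) hr₀
  have gap : (1 - 2 * r) / (1 - r) = 1 - r * (1 - r)⁻¹ := by
    have : 1 - r ≠ 0 := (sub_pos.2 hr₁).ne'
    field_simp
    ring
  rw [Cardinal.cantorFunction_succ f hr₀ hr₁, Cardinal.cantorFunction_succ g hr₀ hr₁, hf, hg, gap,
    cond_true, cond_false]
  linarith

lemma le_dist_cantorFunction (hr₀ : 0 ≤ r) (hr₁ : r < 1) (hfg : ∀ k < n, f k = g k)
    (hn : f n ≠ g n) :
    (1 - 2 * r) / (1 - r) * r ^ n ≤ dist (cantorFunction r f) (cantorFunction r g) := by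
  rw [Real.dist_eq, cantorFunction_sub_cantorFunction hr₀ hr₁ hfg, abs_mul,
    abs_of_nonneg (pow_nonneg hr₀ n), mul_comm]
  gcongr
  cases hf : f n <;> cases hg : g n
  · simp [hf, hg] at hn
  · rw [abs_sub_comm]
    exact (le_cantorFunction_sub_cantorFunction_of_head hr₀ hr₁ (by simpa using hg)
      (by simpa using hf)).trans (le_abs_self _)
  · exact (le_cantorFunction_sub_cantorFunction_of_head hr₀ hr₁ (by simpa using hf)
      (by simpa using hg)).trans (le_abs_self _)
  · simp [hf, hg] at hn

lemma dist_ofDigits_le_dist_cantorFunction_rpow {α : ℝ} (hr₀ : 0 ≤ r) (hr : r < 1 / 2)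
    (hα : 0 ≤ α) (hrα : r ^ α = 1 / 2) (f g : ℕ → Bool) :
    dist (Real.ofDigits (finTwoEquiv.symm ∘ f)) (Real.ofDigits (finTwoEquiv.symm ∘ g)) ≤
      ((1 - r) / (1 - 2 * r)) ^ α * dist (cantorFunction r f) (cantorFunction r g) ^ α := by
  have hr₁ : r < 1 := hr.trans one_half_lt_one
  have : 0 < 1 - r := by linarith
  have : 0 < 1 - 2 * r := by linarith
  rcases eq_or_ne f g with rfl | hne
  · rw [dist_self]
    positivity
  obtain ⟨n, hn, hlt⟩ : ∃ n, f n ≠ g n ∧ ∀ k < n, f k = g k := by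
    classical
    have hex := Function.ne_iff.1 hne
    exact ⟨Nat.find hex, Nat.find_spec hex, fun k hk => not_not.1 (Nat.find_min hex hk)⟩
  calc dist (Real.ofDigits (finTwoEquiv.symm ∘ f)) (Real.ofDigits (finTwoEquiv.symm ∘ g))
      ≤ (2 ^ n)⁻¹ := Real.abs_ofDigits_sub_ofDigits_le fun k hk => by simp [hlt k hk]
    _ = (r ^ n) ^ α := by
        rw [← Real.rpow_natCast_mul hr₀, mul_comm, Real.rpow_mul_natCast hr₀, hrα, one_div, inv_pow]
    _ ≤ ((1 - r) / (1 - 2 * r) * dist (cantorFunction r f) (cantorFunction r g)) ^ α := by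
        gcongr
        rw [← inv_div, ← div_eq_inv_mul, le_div_iff₀' (by positivity)]
        exact le_dist_cantorFunction hr₀ hr₁ hlt hn
    _ = _ := Real.mul_rpow (by positivity) dist_nonneg

end CantorFunction

section CantorDust

/-- The product of copies, indexed by `ι`, of the self-similar Cantor set `{∑ bₙ rⁿ : bₙ ∈ {0, 1}}`
of contraction ratio `r`. For `r = 2 ^ (-1 / α)` with `α < 1` it has dimension `#ι * α`, so that
every dimension below `#ι` is attained. -/
def cantorDust (ι : Type*) (r : ℝ) : Set (ι → ℝ) := univ.pi fun _ => range (cantorFunction r)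

variable {ι : Type*} {r α : ℝ≥0}

lemma cantorDust_eq_range (r : ℝ) :
    cantorDust ι r = range fun (b : ι → ℕ → Bool) i => cantorFunction r (b i) :=
  (range_piMap _).symm

lemma isCompact_cantorDust (hr : r < 1) : IsCompact (cantorDust ι r) :=
  isCompact_univ_pi fun _ => isCompact_range (continuous_cantorFunction r.coe_nonneg hr)

variable [Fintype ι]

lemma dimH_cantorDust_le (hr : r < 1) (hrα : r ^ (α : ℝ) = 1 / 2) :
    dimH (cantorDust ι r) ≤ Fintype.card ι * α := by
  let cylinder (n : ℕ) (w : ι → Fin n → Bool) : Set (ι → ℝ) :=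
    univ.pi fun i => cantorFunction r '' {b | ∀ k : Fin n, b k = w i k}
  have ediam_cylinder_le (n w) : ediam (cylinder n w) ≤ ((1 - r)⁻¹ : ℝ≥0) * (r : ℝ≥0∞) ^ n := by
    refine ediam_pi_le_of_le fun i => ediam_le ?_
    rintro _ ⟨b, hb, rfl⟩ _ ⟨c, hc, rfl⟩
    rw [edist_nndist]
    norm_cast
    rw [← NNReal.coe_le_coe]
    push_cast [NNReal.coe_sub hr.le]
    exact dist_cantorFunction_le r.coe_nonneg hr fun k hk => (hb ⟨k, hk⟩).trans (hc ⟨k, hk⟩).symm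
  have subset_iUnion_cylinder (n : ℕ) : cantorDust ι r ⊆ ⋃ w, cylinder n w := by
    intro x hx
    choose b hb using fun i => hx i (mem_univ i)
    exact mem_iUnion.2 ⟨fun i k => b i k, fun i _ => ⟨b i, fun _ => rfl, hb i⟩⟩
  have card_mul_ratio : (2 : ℝ≥0) ^ Fintype.card ι * r ^ ((Fintype.card ι * α : ℝ≥0) : ℝ) ≤ 1 := by
    rw [mul_comm (Fintype.card ι : ℝ≥0), NNReal.coe_mul, NNReal.coe_natCast,
      NNReal.rpow_mul_natCast, hrα, ← mul_pow]
    simp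
  classical
  exact_mod_cast dimH_le_of_forall_cover hr card_mul_ratio (fun n => by simp [← pow_mul, mul_comm])
    ediam_cylinder_le subset_iUnion_cylinder

lemma card_le_dimH_range_ofDigits :
    (Fintype.card ι : ℝ≥0∞) ≤
      dimH (range fun (b : ι → ℕ → Bool) i => Real.ofDigits (finTwoEquiv.symm ∘ b i)) := by
  have ball_subset_range : ball (fun _ => 1 / 2 : ι → ℝ) (1 / 2) ⊆
      range fun (b : ι → ℕ → Bool) i => Real.ofDigits (finTwoEquiv.symm ∘ b i) := by
    intro x hx
    refine ⟨fun i => finTwoEquiv ∘ Real.digits (x i) 2, funext fun i => ?_⟩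
    have hxi := (dist_le_pi_dist x _ i).trans_lt hx
    rw [Real.dist_eq, abs_lt] at hxi
    simp only [← Function.comp_assoc, Equiv.symm_comp_self, Function.id_comp]
    exact Real.ofDigits_digits one_lt_two ⟨by linarith, by linarith⟩
  rw [← Real.dimH_ball_pi (fun _ => 1 / 2 : ι → ℝ) one_half_pos]
  exact dimH_mono ball_subset_range

lemma le_dimH_cantorDust (hr : r < 1 / 2) (hrα : r ^ (α : ℝ) = 1 / 2) :
    Fintype.card ι * α ≤ dimH (cantorDust ι r) := by
  have hα : 0 < α := pos_iff_ne_zero.2 fun h => by norm_num [h] at hrα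
  rw [← ENNReal.le_div_iff_mul_le (by simp [hα.ne']) (by simp), cantorDust_eq_range]
  let C : ℝ≥0 := Real.toNNReal (((1 - r) / (1 - 2 * r)) ^ (α : ℝ))
  refine card_le_dimH_range_ofDigits.trans (dimH_range_le_of_dist_le (C := C) hα fun b c => ?_)
  refine (dist_pi_le_iff (by positivity)).2 fun i => ?_
  calc dist (Real.ofDigits (finTwoEquiv.symm ∘ b i)) (Real.ofDigits (finTwoEquiv.symm ∘ c i))
      ≤ ((1 - r) / (1 - 2 * r)) ^ (α : ℝ) *
          dist (cantorFunction r (b i)) (cantorFunction r (c i)) ^ (α : ℝ) :=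
        dist_ofDigits_le_dist_cantorFunction_rpow r.coe_nonneg (by exact_mod_cast hr) α.coe_nonneg
          (by rw [← NNReal.coe_rpow, hrα]; simp) _ _
    _ ≤ C * dist (fun i => cantorFunction r (b i)) (fun i => cantorFunction r (c i)) ^ (α : ℝ) := by
        gcongr
        · exact Real.le_coe_toNNReal _
        · exact dist_le_pi_dist (fun i => cantorFunction r (b i))
            (fun i => cantorFunction r (c i)) i

lemma dimH_cantorDust (hr : r < 1 / 2) (hrα : r ^ (α : ℝ) = 1 / 2) :
    dimH (cantorDust ι r) = Fintype.card ι * α :=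
  (dimH_cantorDust_le (hr.trans one_half_lt_one) hrα).antisymm (le_dimH_cantorDust hr hrα)

lemma dimH_range_cantorFunction_le (hr : r < 1) (hrα : r ^ (α : ℝ) = 1 / 2) :
    dimH (range (cantorFunction r)) ≤ α := by
  have range_eq : range (cantorFunction r) = Function.eval () '' cantorDust Unit r :=
    (eval_image_pi (i := ()) (t := fun _ => range (cantorFunction r)) (mem_univ _)
      (univ_pi_nonempty_iff.2 fun _ => range_nonempty _)).symm
  calc dimH (range (cantorFunction r))
      ≤ dimH (cantorDust Unit r) := range_eq ▸ (LipschitzWith.eval ()).dimH_image_le _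
    _ ≤ α := by simpa using dimH_cantorDust_le (ι := Unit) hr hrα

lemma exists_isClosed_dimH_eq_forall_dimH_eval_image_lt_one (ι : Type*) [Fintype ι] {s : ℝ≥0}
    (hs : s < Fintype.card ι) :
    ∃ K : Set (ι → ℝ), IsClosed K ∧ dimH K = s ∧ ∀ i, dimH (Function.eval i '' K) < 1 := by
  rcases eq_or_ne s 0 with rfl | hs₀
  · exact ⟨∅, isClosed_empty, by simp, by simp⟩
  have hcard : (Fintype.card ι : ℝ≥0) ≠ 0 := (zero_le.trans_lt hs).ne'
  let α : ℝ≥0 := s / Fintype.card ι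
  let r : ℝ≥0 := (1 / 2) ^ (α⁻¹ : ℝ)
  have hα₀ : α ≠ 0 := div_ne_zero hs₀ hcard
  have hα₁ : α < 1 := (div_lt_one (pos_iff_ne_zero.2 hcard)).2 hs
  have hr : r < 1 / 2 := by
    have one_lt_inv : (1 : ℝ) < α⁻¹ := (one_lt_inv₀ (by positivity)).2 (by exact_mod_cast hα₁)
    calc r < (1 / 2) ^ (1 : ℝ) :=
          NNReal.rpow_lt_rpow_of_exponent_gt one_half_pos one_half_lt_one one_lt_inv
      _ = 1 / 2 := NNReal.rpow_one _
  have hrα : r ^ (α : ℝ) = 1 / 2 := NNReal.rpow_inv_rpow (by exact_mod_cast hα₀) _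
  have hr₁ : r < 1 := hr.trans one_half_lt_one
  refine ⟨cantorDust ι r, (isCompact_cantorDust hr₁).isClosed, ?_, fun i => ?_⟩
  · rw [dimH_cantorDust hr hrα]
    exact_mod_cast mul_div_cancel₀ s hcard
  · calc dimH (Function.eval i '' cantorDust ι r)
        ≤ dimH (range (cantorFunction r)) := dimH_mono (eval_image_univ_pi_subset)
      _ ≤ α := dimH_range_cantorFunction_le hr₁ hrα
      _ < 1 := by exact_mod_cast hα₁

end CantorDust

theorem statement4_general (d : ℕ) (s : ℝ≥0) (hs : s < d) :
    ∃ E : Set (Euc d), MeasurableSet E ∧ IsTotallyDisconnected E ∧ dimH E = s ∧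
      distSet E E = Ici 0 := by
  have : Nonempty (Fin d) := Fin.pos_iff_nonempty.1 (by exact_mod_cast zero_le.trans_lt hs)
  let e : Euc d ≃L[ℝ] (Fin d → ℝ) := EuclideanSpace.equiv (Fin d) ℝ
  obtain ⟨K, isClosed_K, dimH_K, dimH_eval_K⟩ :=
    exists_isClosed_dimH_eq_forall_dimH_eval_image_lt_one (Fin d) (by simpa using hs)
  obtain ⟨L, isGδ_L, dimH_L, dist_L⟩ := exists_isGδ_dimH_eq_zero_forall_dist_eq (Euc d)
  refine ⟨e ⁻¹' K ∪ L, ?_, ?_, ?_, Subset.antisymm ?_ fun t ht => ?_⟩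
  · exact (isClosed_K.preimage e.continuous).measurableSet.union isGδ_L.measurableSet
  · refine isTotallyDisconnected_of_forall_dimH_image_lt_one (f := fun i x => x i)
      (fun i => by fun_prop) e.injective.injOn fun i => ?_
    have dimH_eval_L : dimH ((fun x : Euc d => x i) '' L) = 0 :=
      le_antisymm (dimH_L ▸ (EuclideanSpace.proj (𝕜 := ℝ) i).lipschitz.dimH_image_le L) zero_le
    have eval_K : (fun x : Euc d => x i) '' (e ⁻¹' K) = Function.eval i '' K := by
      calc (fun x : Euc d => x i) '' (e ⁻¹' K)
          = Function.eval i '' (e '' (e ⁻¹' K)) := (image_image (Function.eval i) e _).symm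
        _ = Function.eval i '' K := by rw [image_preimage_eq K e.surjective]
    rw [image_union, dimH_union, dimH_eval_L, eval_K, max_eq_left zero_le]
    exact dimH_eval_K i
  · rw [dimH_union, e.dimH_preimage, dimH_K, dimH_L, max_eq_left zero_le]
  · rintro _ ⟨x, -, y, -, rfl⟩
    exact dist_nonneg
  · obtain ⟨x, hx, y, hy, hxy⟩ := dist_L t ht
    exact ⟨x, .inr hx, y, .inr hy, hxy⟩

/-- Corollary 1.5: for `d ≥ 2` and `s` sufficiently close to `d`, there exists a
totally disconnected set `E ⊆ ℝ^d` of Hausdorff dimension exactly `s` whose distance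
set contains an interval `[0, a)` for some `a > 0`. -/
theorem statement4 (d : ℕ) (hd : 2 ≤ d) :
    ∃ ε : ℝ, 0 < ε ∧ ∀ s : ℝ, (d : ℝ) - ε < s → s < d →
      ∃ E : Set (Euc d), IsTotallyDisconnected E ∧ dimH E = ENNReal.ofReal s ∧
        ∃ a : ℝ, 0 < a ∧ Ico (0:ℝ) a ⊆ distSet E E := by
  refine ⟨1, one_pos, fun s _ hsd => ?_⟩
  obtain ⟨E, -, hE, dimH_E, distSet_E⟩ :=
    statement4_general d s.toNNReal (Real.toNNReal_lt_natCast'.2 ⟨hsd, by lia⟩)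
  exact ⟨E, hE, dimH_E, 1, one_pos, distSet_E ▸ Ico_subset_Ici_self⟩
end
end
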